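/- Let Δ = [a,b] ⊂ ℝ be a segment and let f : Δ → ℝ be continuous. If f belongs to the Gonchar class R(Δ), i.e. liminf_{n→∞} ρ_n(f)^{1/n} < 1, then the graph Γ_f = {(x, f(x)) ∈ ℂ² : x ∈ Δ} (where Δ is regarded as a subset of ℂ) is a pluripolar subset of ℂ². -/

import Mathlib

open Filter Metric

noncomputable section

/-- A subharmonic function on `ℂ` with values in `[-∞, ∞)`: upper semicontinuous,
never `+∞`, and dominated on every closed disk by every continuous function which is
harmonic inside the disk (i.e. locally the real part of a holomorphic function) and
dominates it on the boundary circle. The constant `-∞` function is allowed here;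
non-triviality is required separately in the definition of (pluri)polar sets. -/
def SubharmonicFn (u : ℂ → EReal) : Prop :=
  UpperSemicontinuous u ∧ (∀ z, u z ≠ ⊤) ∧
  ∀ (c : ℂ) (r : ℝ), 0 < r →
    ∀ h : ℂ → ℝ, ContinuousOn h (closedBall c r) →
      (∃ F : ℂ → ℂ, DifferentiableOn ℂ F (ball c r) ∧ ∀ z ∈ ball c r, h z = (F z).re) →
      (∀ z ∈ sphere c r, u z ≤ ((h z : ℝ) : EReal)) →
      ∀ z ∈ closedBall c r, u z ≤ ((h z : ℝ) : EReal)

/-- A plurisubharmonic function on a complex normed space: upper semicontinuous,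
never `+∞`, and subharmonic along every complex line. -/
def PshFn {E : Type*} [NormedAddCommGroup E] [NormedSpace ℂ E] (u : E → EReal) : Prop :=
  UpperSemicontinuous u ∧ (∀ z, u z ≠ ⊤) ∧
  ∀ a v : E, SubharmonicFn (fun w : ℂ => u (a + w • v))

/-- A set is pluripolar if it is contained in the `-∞` set of a plurisubharmonic
function which is not identically `-∞`. -/
def Pluripolar {E : Type*} [NormedAddCommGroup E] [NormedSpace ℂ E] (S : Set E) : Prop :=
  ∃ u : E → EReal, PshFn u ∧ (∃ z, u z ≠ ⊥) ∧ ∀ p ∈ S, u p = ⊥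

/-- `rhoReal f a b n` : the deviation of the best uniform approximation of `f` on
`[a,b]` by real rational functions of degree at most `n`. -/
def rhoReal (f : ℝ → ℝ) (a b : ℝ) (n : ℕ) : ℝ :=
  sInf {t : ℝ | ∃ p q : Polynomial ℝ, p.natDegree ≤ n ∧ q.natDegree ≤ n ∧
    (∀ x ∈ Set.Icc a b, q.eval x ≠ 0) ∧
    ∀ x ∈ Set.Icc a b, |f x - p.eval x / q.eval x| ≤ t}

/-!
On the graph, rational approximants `p_n / q_n` of degree `n` make `q_n(x) w - p_n(x)` at most
`e^{-an} |q_n(x)|`. Normalise the `q_n`, let `v` be the potential of a weak limit of their zero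
distributions, and cut the graph into countably many pieces on which `v` varies by less than
`a / 10`, and the part over `{v = -∞}`.

On each piece there are arbitrarily small normalised polynomials. Otherwise, take nearly extremal
polynomials `F(x, w)` on the piece whose degree in `x` is much larger than that in `w`. A
Vandermonde determinant bounds the resultant of `F` and `P = q_n w - p_n`, so that, for a large
constant `ω`, the mean of `log |P(·, ω)|` over the zeros of `F(·, ω)` is at most about `n (v - a)`.
But the limit distribution of these zeros is carried by the projection of the piece, a compact
subset of the real line, where `log |P(·, ω)| ≥ log |q_n|` is about `n v`.

For such polynomials `G_k` of degrees `D_k`, small on pieces each of which occurs infinitely often,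
`∑ 2⁻ᵏ⁻¹ (1 / D_k) log |G_k| + v` is plurisubharmonic and equal to `-∞` on the graph.
-/

open Polynomial Topology MeasureTheory

section Determinants

theorem exists_det_snoc_eq {R α : Type*} [CommRing R] (e : ℕ → α → R) {N : ℕ} (ζ : Fin N → α) :
    ∃ m : ℕ → R, ∀ z : α,
      (Matrix.of fun i j : Fin (N + 1) => e i (Fin.snoc (α := fun _ => α) ζ z j)).det =
        ∑ i ∈ Finset.range N, m i * e i z +
          (Matrix.of fun i j : Fin N => e i (ζ j)).det * e N z := by
  let minor (i : Fin (N + 1)) : Matrix (Fin N) (Fin N) R :=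
    Matrix.of fun p q => e (i.succAbove p) (ζ q)
  refine ⟨fun i => if hi : i < N + 1 then (-1) ^ (i + N) * (minor ⟨i, hi⟩).det else 0, fun z => ?_⟩
  have hminor (i : Fin (N + 1)) :
      (Matrix.of fun i j : Fin (N + 1) => e i (Fin.snoc (α := fun _ => α) ζ z j)).submatrix
        i.succAbove (Fin.last N).succAbove = minor i := by
    ext p q
    simp [minor, Fin.succAbove_last]
  rw [Matrix.det_succ_column _ (Fin.last N), Fin.sum_univ_castSucc, Finset.sum_range]
  congr 1
  · refine Finset.sum_congr rfl fun i _ => ?_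
    have hi : (i : ℕ) < N + 1 := i.2.trans N.lt_succ_self
    simp only [hminor, dif_pos hi, Matrix.of_apply, Fin.snoc_last, Fin.val_last,
      Fin.val_castSucc]
    exact mul_right_comm _ _ _
  · rw [hminor]
    simp [minor, Fin.succAbove_last, Even.neg_one_pow ⟨N, rfl⟩, mul_comm]

/-- Greedy choice of the points: each new one makes the determinant grow by the factor `c i`. -/
theorem exists_prod_le_norm_det {𝕜 α : Type*} [NormedField 𝕜] (E : Set α) (e : ℕ → α → 𝕜)
    (c : ℕ → ℝ) (hc : ∀ i, 0 ≤ c i) (N : ℕ)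
    (h : ∀ i < N, ∀ a : ℕ → 𝕜, ∃ ζ ∈ E, c i ≤ ‖e i ζ + ∑ j ∈ Finset.range i, a j * e j ζ‖) :
    ∃ ζ : Fin N → α, (∀ i, ζ i ∈ E) ∧
      ∏ i ∈ Finset.range N, c i ≤ ‖(Matrix.of fun i j : Fin N => e i (ζ j)).det‖ := by
  induction N with
  | zero => exact ⟨Fin.elim0, fun i => i.elim0, by simp⟩
  | succ N ih =>
    obtain ⟨ζ, hζ, hprod⟩ := ih fun i hi => h i (by lia)
    obtain ⟨m, hm⟩ := exists_det_snoc_eq e ζ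
    set D := (Matrix.of fun i j : Fin N => e i (ζ j)).det
    obtain ⟨z, hz, hcz⟩ := h N N.lt_succ_self fun i => m i / D
    refine ⟨Fin.snoc (α := fun _ => α) ζ z, Fin.lastCases (by simpa) (by simpa), ?_⟩
    rw [Finset.prod_range_succ]
    by_cases hD : D = 0
    · have hprod0 : ∏ i ∈ Finset.range N, c i = 0 :=
        le_antisymm (by simpa [hD] using hprod) (Finset.prod_nonneg fun i _ => hc i)
      rw [hprod0, zero_mul]
      exact norm_nonneg _
    · have hfactor : ∑ i ∈ Finset.range N, m i * e i z + D * e N z =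
          D * (e N z + ∑ j ∈ Finset.range N, m j / D * e j z) := by
        rw [mul_add, Finset.mul_sum, add_comm]
        congr 1
        exact Finset.sum_congr rfl fun j _ => by field_simp
      rw [hm z, hfactor, norm_mul]
      exact mul_le_mul hprod hcz (hc N) (norm_nonneg _)

theorem norm_det_le_factorial_mul_prod {𝕜 ι : Type*} [NormedField 𝕜] [Fintype ι] [DecidableEq ι]
    (A : Matrix ι ι 𝕜) (B : ι → ℝ) (h : ∀ i j, ‖A i j‖ ≤ B i) :
    ‖A.det‖ ≤ (Fintype.card ι).factorial * ∏ i, B i := by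
  have hterm (σ : Equiv.Perm ι) :
      ‖Equiv.Perm.sign σ • ∏ i, A.transpose (σ i) i‖ ≤ ∏ i, B i := by
    have hsign : ‖Equiv.Perm.sign σ • ∏ i, A.transpose (σ i) i‖ =
        ‖∏ i, A.transpose (σ i) i‖ := by
      rcases Int.units_eq_one_or (Equiv.Perm.sign σ) with hσ | hσ <;> simp [hσ]
    rw [hsign, norm_prod]
    exact Finset.prod_le_prod (fun i _ => norm_nonneg _) fun i _ => h _ _
  rw [← Matrix.det_transpose, Matrix.det_apply]
  calc _ ≤ ∑ _σ : Equiv.Perm ι, ∏ i, B i := norm_sum_le_of_le _ fun σ _ => hterm σ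
    _ = _ := by simp [Fintype.card_perm]

end Determinants

section MixedPower

variable {R : Type*} [CommRing R]

theorem resultant_mul_right_of_le {f g₁ g₂ : R[X]} {m n₁ n₂ : ℕ} (hf : f.natDegree ≤ m)
    (h₁ : g₁.natDegree ≤ n₁) (h₂ : g₂.natDegree ≤ n₂) :
    resultant f (g₁ * g₂) m (n₁ + n₂) = resultant f g₁ m n₁ * resultant f g₂ m n₂ := by
  obtain ⟨k₁, rfl⟩ := Nat.exists_eq_add_of_le h₁
  obtain ⟨k₂, rfl⟩ := Nat.exists_eq_add_of_le h₂
  rw [add_add_add_comm, resultant_add_right_deg _ _ _ _ _ natDegree_mul_le,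
    resultant_add_right_deg _ _ _ _ _ le_rfl, resultant_add_right_deg _ _ _ _ _ le_rfl,
    resultant_mul_right _ _ _ _ hf, pow_add]
  ring

theorem resultant_pow_right_of_le {f g : R[X]} {m n : ℕ} (hf : f.natDegree ≤ m)
    (hg : g.natDegree ≤ n) (ν : ℕ) :
    resultant f (g ^ ν) m (ν * n) = resultant f g m n ^ ν := by
  induction ν with
  | zero => simp
  | succ ν ih =>
    rw [pow_succ, Nat.succ_mul,
      resultant_mul_right_of_le hf (natDegree_pow_le_of_le ν hg) hg, ih, pow_succ]

theorem sylvester_castAdd {f g : R[X]} {m n : ℕ} (hg : g.natDegree ≤ n) (i : Fin (m + n))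
    (j : Fin m) : sylvester f g m n i (Fin.castAdd n j) = (g * X ^ (j : ℕ)).coeff i := by
  simp only [sylvester, Matrix.of_apply, Fin.addCases_left, coeff_mul_X_pow', Set.mem_Icc]
  by_cases hji : (j : ℕ) ≤ i
  · by_cases hij : (i : ℕ) ≤ j + n
    · simp [hji, hij]
    · rw [if_neg (by tauto), if_pos hji, coeff_eq_zero_of_natDegree_lt (by lia)]
  · simp [hji]

theorem sylvester_natAdd {f g : R[X]} {m n : ℕ} (hf : f.natDegree ≤ m) (i : Fin (m + n))
    (j : Fin n) : sylvester f g m n i (Fin.natAdd m j) = (f * X ^ (j : ℕ)).coeff i := by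
  simp only [sylvester, Matrix.of_apply, Fin.addCases_right, coeff_mul_X_pow', Set.mem_Icc]
  by_cases hji : (j : ℕ) ≤ i
  · by_cases hij : (i : ℕ) ≤ j + m
    · simp [hji, hij]
    · rw [if_neg (by tauto), if_pos hji, coeff_eq_zero_of_natDegree_lt (by lia)]
  · simp [hji]

/-- The product `f ^ i * g ^ (ν - 1 - i) * X ^ j`, where `K = i d + j` with `j < d`. For `f` and `g`
of degree at most `d` and `K < ν d` its degree is less than `ν d`. -/
def mixedPower (f g : R[X]) (d ν K : ℕ) : R[X] :=
  f ^ (K / d) * g ^ (ν - 1 - K / d) * X ^ (K % d)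

variable {f g : R[X]} {d : ℕ}

theorem mixedPower_succ_of_lt {k : ℕ} (ν : ℕ) (hk : k < d) :
    mixedPower f g d (ν + 1) k = g ^ ν * X ^ k := by
  simp [mixedPower, Nat.div_eq_of_lt hk, Nat.mod_eq_of_lt hk]

theorem mixedPower_succ_add (hd : 0 < d) {ν k : ℕ} :
    mixedPower f g d (ν + 1) (d + k) = f * mixedPower f g d ν k := by
  simp only [mixedPower, Nat.add_div_left _ hd, Nat.add_mod_left]
  rw [show ν + 1 - 1 - (k / d + 1) = ν - 1 - k / d by lia, pow_succ]
  ring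

theorem map_mixedPower {S : Type*} [CommRing S] (φ : R →+* S) (ν K : ℕ) :
    (mixedPower f g d ν K).map φ = mixedPower (f.map φ) (g.map φ) d ν K := by
  simp [mixedPower]

theorem natDegree_mixedPower_lt (hf : f.natDegree ≤ d) (hg : g.natDegree ≤ d)
    {ν K : ℕ} (hK : K < ν * d) : (mixedPower f g d ν K).natDegree < ν * d := by
  have hd : 0 < d := Nat.pos_of_ne_zero fun h => by simp [h] at hK
  have hdiv : K / d < ν := Nat.div_lt_of_lt_mul (hK.trans_eq (mul_comm _ _))
  have hmod : K % d < d := Nat.mod_lt K hd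
  have hsum : K / d * d + (ν - 1 - K / d) * d + d = ν * d := by
    rw [← add_mul, ← Nat.succ_mul]
    congr 1
    lia
  calc _ ≤ K / d * d + (ν - 1 - K / d) * d + K % d :=
        natDegree_mul_le_of_le (natDegree_mul_le_of_le (natDegree_pow_le_of_le _ hf)
          (natDegree_pow_le_of_le _ hg)) (natDegree_X_pow_le _)
    _ < ν * d := by lia

theorem coeff_mul_eq_sum_fin {p q : R[X]} {n : ℕ} (hq : q.natDegree < n) (i : ℕ) :
    (p * q).coeff i = ∑ j : Fin n, q.coeff j * (p * X ^ (j : ℕ)).coeff i := by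
  conv_lhs => rw [q.as_sum_range' n hq, Finset.mul_sum, finsetSum_coeff, Finset.sum_range]
  refine Finset.sum_congr rfl fun j _ => ?_
  rw [← C_mul_X_pow_eq_monomial, mul_left_comm, coeff_C_mul]

/-- The coefficient matrix of the polynomials `mixedPower f g d ν K`, `K < ν d`. -/
def mixedPowerMatrix (f g : R[X]) (d ν : ℕ) : Matrix (Fin (ν * d)) (Fin (ν * d)) R :=
  Matrix.of fun K k => (mixedPower f g d ν K).coeff k

theorem mixedPowerMatrix_succ_submatrix (hf : f.natDegree ≤ d) (hg : g.natDegree ≤ d)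
    {ν : ℕ} (h : d + ν * d = (ν + 1) * d) :
    (mixedPowerMatrix f g d (ν + 1)).submatrix (finCongr h) (finCongr h) =
      (Matrix.fromBlocks 1 0 0 (mixedPowerMatrix f g d ν)).reindex finSumFinEquiv finSumFinEquiv *
        (sylvester f (g ^ ν) d (ν * d)).transpose := by
  have hgν : (g ^ ν).natDegree ≤ ν * d := natDegree_pow_le_of_le ν hg
  ext K k
  rw [Matrix.mul_apply, ← finSumFinEquiv.sum_comp, Fintype.sum_sum_type]
  simp only [Matrix.reindex_apply, Matrix.submatrix_apply,
    finSumFinEquiv_apply_left, finSumFinEquiv_apply_right, Matrix.transpose_apply,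
    sylvester_castAdd hgν, sylvester_natAdd hf, mixedPowerMatrix, Matrix.of_apply,
    finCongr_apply_coe]
  refine Fin.addCases (fun i => ?_) (fun i => ?_) K
  · simp [Matrix.one_apply, mixedPower_succ_of_lt ν i.2]
  · have hd : 0 < d := Nat.pos_of_mul_pos_left (Nat.zero_lt_of_lt i.2)
    simp [mixedPower_succ_add hd, coeff_mul_eq_sum_fin (natDegree_mixedPower_lt hf hg i.2)]

/-- Multiplication by the Sylvester matrix of `f` and `g ^ ν` passes from `ν` to `ν + 1`. -/
theorem det_mixedPowerMatrix (hf : f.natDegree ≤ d) (hg : g.natDegree ≤ d) (ν : ℕ) :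
    (mixedPowerMatrix f g d ν).det = resultant f g d d ^ ∑ i ∈ Finset.range ν, i := by
  induction ν with
  | zero => simpa using Matrix.det_eq_one_of_card_eq_zero (by simp)
  | succ ν ih =>
    have h : d + ν * d = (ν + 1) * d := by ring
    rw [← Matrix.det_submatrix_equiv_self (finCongr h), mixedPowerMatrix_succ_submatrix hf hg h,
      Matrix.det_mul, Matrix.det_transpose, Matrix.det_reindex_self,
      Matrix.det_fromBlocks_zero₂₁, Matrix.det_one, one_mul, ih, ← resultant,
      resultant_pow_right_of_le hf hg, Finset.sum_range_succ, pow_add]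

end MixedPower

section InnerDegree

variable {R : Type*}

/-- The degree of `F`, a polynomial in `x` whose coefficients are polynomials in `w`, with respect
to the inner variable `w` is at most `j`. -/
def InnerDegreeLE [Semiring R] (F : R[X][X]) (j : ℕ) : Prop :=
  ∀ k, (F.coeff k).natDegree ≤ j

namespace InnerDegreeLE

section Semiring

variable [Semiring R] {F G : R[X][X]} {j k : ℕ}

theorem mono (hF : InnerDegreeLE F j) (h : j ≤ k) : InnerDegreeLE F k :=
  fun i => (hF i).trans h

theorem add (hF : InnerDegreeLE F j) (hG : InnerDegreeLE G j) : InnerDegreeLE (F + G) j := by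
  intro i
  rw [coeff_add]
  exact natDegree_add_le_of_degree_le (hF i) (hG i)

theorem mul (hF : InnerDegreeLE F j) (hG : InnerDegreeLE G k) : InnerDegreeLE (F * G) (j + k) := by
  intro i
  rw [coeff_mul]
  exact natDegree_sum_le_of_forall_le _ _ fun p _ => natDegree_mul_le_of_le (hF _) (hG _)

theorem const {p : R[X]} (h : p.natDegree ≤ j) : InnerDegreeLE (C p) j := by
  intro i
  rw [coeff_C]
  split_ifs <;> simp [h]

theorem X : InnerDegreeLE (X : R[X][X]) 0 := by
  intro i
  rw [coeff_X]
  split_ifs <;> simp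

theorem pow (hF : InnerDegreeLE F j) (n : ℕ) : InnerDegreeLE (F ^ n) (n * j) := by
  induction n with
  | zero => simpa using const (R := R) (p := 1) (j := 0) (by simp)
  | succ n ih => simpa [pow_succ, Nat.succ_mul] using ih.mul hF

end Semiring

variable [CommRing R] {F G : R[X][X]} {d ν j : ℕ}

theorem mixedPower (hF : InnerDegreeLE F j) (hG : InnerDegreeLE G j) {K : ℕ} (hK : K < ν * d) :
    InnerDegreeLE (mixedPower F G d ν K) ((ν - 1) * j) := by
  have hdiv : K / d < ν := Nat.div_lt_of_lt_mul (hK.trans_eq (mul_comm _ _))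
  refine (((hF.pow _).mul (hG.pow _)).mul (X.pow _)).mono ?_
  rw [mul_zero, add_zero, ← add_mul]
  exact Nat.mul_le_mul_right _ (by lia)

end InnerDegreeLE

theorem evalEval_eq_sum_fin [CommSemiring R] {F : R[X][X]} {n L : ℕ} (hn : F.natDegree < n)
    (hL : ∀ k, (F.coeff k).natDegree < L) (w x : R) :
    F.evalEval w x =
      ∑ i : Fin n × Fin L, (F.coeff i.1).coeff i.2 * (x ^ (i.1 : ℕ) * w ^ (i.2 : ℕ)) := by
  rw [Fintype.sum_prod_type, evalEval, eval_eq_sum_range' hn, eval_finsetSum, Finset.sum_range]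
  refine Finset.sum_congr rfl fun k _ => ?_
  rw [eval_mul, eval_pow, eval_C, eval_eq_sum_range' (hL k), Finset.sum_range, Finset.sum_mul]
  exact Finset.sum_congr rfl fun l _ => by ring

variable [CommRing R]

/-- The rows of the matrix in the resultant estimate, for `K < ν d` and `l < H + ν j`: multiples
by `w ^ l` of the mixed powers of `F` and `G`, and of plain monomials `x ^ K` once `l ≥ H`, where
multiples of the mixed powers would have too large a degree in `w`. -/
def mixedRow (F G : R[X][X]) (d ν H K l : ℕ) : R[X][X] :=
  (if l < H then mixedPower F G d ν K else X ^ K) * C (X ^ l)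

theorem coeff_coeff_mixedRow (F G : R[X][X]) (d ν H K l k m : ℕ) :
    ((mixedRow F G d ν H K l).coeff k).coeff m = if l ≤ m then
      ((if l < H then mixedPower F G d ν K else X ^ K).coeff k).coeff (m - l) else 0 := by
  simp only [mixedRow, coeff_mul_C, coeff_mul_X_pow']

variable {F G : R[X][X]} {d : ℕ}

theorem natDegree_mixedRow_lt (hF : F.natDegree ≤ d) (hG : G.natDegree ≤ d)
    {ν K : ℕ} (hK : K < ν * d) (H l : ℕ) : (mixedRow F G d ν H K l).natDegree < ν * d := by
  refine natDegree_mul_le.trans_lt ?_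
  rw [natDegree_C, add_zero]
  split_ifs
  · exact natDegree_mixedPower_lt hF hG hK
  · exact (natDegree_X_pow_le K).trans_lt hK

theorem natDegree_coeff_mixedRow_lt {j : ℕ} (hF : InnerDegreeLE F j) (hG : InnerDegreeLE G j)
    {ν H K l : ℕ} (hK : K < ν * d) (hl : l < H + ν * j) (k : ℕ) :
    ((mixedRow F G d ν H K l).coeff k).natDegree < H + ν * j := by
  unfold mixedRow
  split_ifs with hlH
  · have hle := (hF.mixedPower hG hK).mul (.const (natDegree_X_pow_le l)) k
    have hν : (ν - 1) * j ≤ ν * j := Nat.mul_le_mul_right _ ν.pred_le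
    lia
  · have hle := (InnerDegreeLE.X.pow K).mul (.const (natDegree_X_pow_le (R := R) l)) k
    lia

/-- The matrix of coefficients of the polynomials `mixedRow F G d ν H K l`. -/
def mixedRowMatrix (F G : R[X][X]) (d ν H L : ℕ) :
    Matrix (Fin (ν * d) × Fin L) (Fin (ν * d) × Fin L) R :=
  Matrix.of fun p q => ((mixedRow F G d ν H p.1 p.2).coeff q.1).coeff q.2

theorem mixedRowMatrix_blockTriangular (F G : R[X][X]) (d ν H L : ℕ) :
    (mixedRowMatrix F G d ν H L).BlockTriangular Prod.snd := by
  intro p q hpq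
  rw [mixedRowMatrix, Matrix.of_apply, coeff_coeff_mixedRow,
    if_neg (not_le.mpr (Fin.lt_def.mp hpq))]

theorem det_toSquareBlock_mixedRowMatrix (hF : F.natDegree ≤ d) (hG : G.natDegree ≤ d)
    (ν H : ℕ) {L : ℕ} (l : Fin L) :
    ((mixedRowMatrix F G d ν H L).toSquareBlock Prod.snd l).det = if (l : ℕ) < H then
      resultant (F.map (evalRingHom 0)) (G.map (evalRingHom 0)) d d ^ ∑ i ∈ Finset.range ν, i
      else 1 := by
  let e : Fin (ν * d) ≃ {p : Fin (ν * d) × Fin L // p.2 = l} :=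
    { toFun := fun K => ⟨(K, l), rfl⟩
      invFun := fun p => p.1.1
      left_inv := fun K => rfl
      right_inv := by rintro ⟨⟨K, l'⟩, rfl⟩; rfl }
  have hentry (K k : Fin (ν * d)) :
      ((mixedRowMatrix F G d ν H L).toSquareBlock Prod.snd l).submatrix e e K k =
        ((if (l : ℕ) < H then mixedPower F G d ν K else X ^ (K : ℕ)).coeff k).coeff 0 := by
    simp [Matrix.toSquareBlock_def, e, mixedRowMatrix, coeff_coeff_mixedRow]
  rw [← Matrix.det_submatrix_equiv_self e]
  split_ifs with h
  · rw [← det_mixedPowerMatrix (natDegree_map_le.trans hF) (natDegree_map_le.trans hG)]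
    congr 1
    ext K k
    rw [hentry, if_pos h, mixedPowerMatrix, Matrix.of_apply, ← map_mixedPower, coeff_map,
      coe_evalRingHom, coeff_zero_eq_eval_zero]
  · have hone : ((mixedRowMatrix F G d ν H L).toSquareBlock Prod.snd l).submatrix e e = 1 := by
      ext K k
      rw [hentry, if_neg h, coeff_X_pow, Matrix.one_apply]
      simp only [Fin.ext_iff, eq_comm (a := (k : ℕ))]
      split_ifs <;> simp
    rw [hone, Matrix.det_one]

theorem det_mixedRowMatrix (hF : F.natDegree ≤ d) (hG : G.natDegree ≤ d) (ν H k : ℕ) :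
    (mixedRowMatrix F G d ν H (H + k)).det =
      (resultant (F.map (evalRingHom 0)) (G.map (evalRingHom 0)) d d ^
        ∑ i ∈ Finset.range ν, i) ^ H := by
  rw [(mixedRowMatrix_blockTriangular F G d ν H (H + k)).det_fintype]
  simp only [det_toSquareBlock_mixedRowMatrix hF hG, Fin.prod_univ_add, Fin.val_castAdd,
    Fin.is_lt, Fin.val_natAdd, if_true, not_lt.mpr (Nat.le_add_right _ _), if_false,
    Finset.prod_const, Finset.card_univ, Fintype.card_fin, one_pow, mul_one]

end InnerDegree

section ResultantEstimate

/-- The `n`-th monomial `x ^ k * w ^ l`, where `n = k L + l` with `l < L`. -/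
def lexMonomial {R : Type*} [Monoid R] (L n : ℕ) (ζ : R × R) : R :=
  ζ.1 ^ (n / L) * ζ.2 ^ (n % L)

theorem sum_range_mul_div (d ν : ℕ) :
    ∑ K ∈ Finset.range (ν * d), K / d = d * ∑ i ∈ Finset.range ν, i := by
  obtain rfl | hd := d.eq_zero_or_pos
  · simp
  induction ν with
  | zero => simp
  | succ ν ih =>
    have hblock : ∀ x ∈ Finset.range d, (ν * d + x) / d = ν := fun x hx => by
      rw [mul_comm, Nat.mul_add_div hd, Nat.div_eq_of_lt (Finset.mem_range.mp hx), add_zero]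
    rw [Nat.succ_mul, Finset.sum_range_add, ih, Finset.sum_range_succ, mul_add,
      Finset.sum_congr rfl hblock, Finset.sum_const, Finset.card_range, smul_eq_mul]

theorem sum_range_mul_sub_div (d ν : ℕ) :
    ∑ K ∈ Finset.range (ν * d), (ν - 1 - K / d) = d * ∑ i ∈ Finset.range ν, i := by
  have hadd : ∑ K ∈ Finset.range (ν * d), (ν - 1 - K / d) +
      ∑ K ∈ Finset.range (ν * d), K / d = ν * d * (ν - 1) := by
    have hterm : ∀ K ∈ Finset.range (ν * d), ν - 1 - K / d + K / d = ν - 1 := fun K hK =>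
      Nat.sub_add_cancel <| Nat.le_sub_one_of_lt <|
        Nat.div_lt_of_lt_mul ((Finset.mem_range.mp hK).trans_eq (mul_comm _ _))
    rw [← Finset.sum_add_distrib, Finset.sum_congr rfl hterm, Finset.sum_const,
      Finset.card_range, smul_eq_mul]
  have htwo : ν * d * (ν - 1) = d * (∑ i ∈ Finset.range ν, i) + d * (∑ i ∈ Finset.range ν, i) := by
    rw [mul_comm ν d, mul_assoc, ← Finset.sum_range_id_mul_two ν]
    ring
  rw [sum_range_mul_div] at hadd
  lia

theorem prod_range_mul_div {M : Type*} [CommMonoid M] (c : ℕ → M) (n L : ℕ) :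
    ∏ i ∈ Finset.range (n * L), c (i / L) = (∏ k ∈ Finset.range n, c k) ^ L := by
  rw [Finset.prod_range, ← finProdFinEquiv.prod_comp, Fintype.prod_prod_type, Finset.prod_range,
    ← Finset.prod_pow]
  refine Finset.prod_congr rfl fun k _ => ?_
  have hblock (l : Fin L) : (finProdFinEquiv (k, l) : ℕ) / L = k := by
    rw [finProdFinEquiv_apply_val, Nat.add_mul_div_left _ _ (Nat.zero_lt_of_lt l.2),
      Nat.div_eq_of_lt l.2, zero_add]
  simp only [hblock, Finset.prod_const, Finset.card_univ, Fintype.card_fin]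

variable {𝕜 : Type*} [NormedField 𝕜]

/-- A bound for `‖mixedRow F G d ν H K l‖` where `‖x‖ ≤ R`, `‖w‖ ≤ S`, `‖F‖ ≤ BF`, `‖G‖ ≤ BG`. -/
def mixedRowBound (R S BF BG : ℝ) (d ν H L K l : ℕ) : ℝ :=
  if l < H then BF ^ (K / d) * BG ^ (ν - 1 - K / d) * (R ^ d * S ^ H) else R ^ (ν * d) * S ^ L

theorem norm_evalEval_mixedRow_le {F G : 𝕜[X][X]} {d ν H L K l : ℕ} {R S BF BG : ℝ}
    (hR : 1 ≤ R) (hS : 1 ≤ S) {x w : 𝕜} (hx : ‖x‖ ≤ R) (hw : ‖w‖ ≤ S)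
    (hF : ‖F.evalEval w x‖ ≤ BF) (hG : ‖G.evalEval w x‖ ≤ BG) (hK : K < ν * d) (hl : l < L) :
    ‖(mixedRow F G d ν H K l).evalEval w x‖ ≤ mixedRowBound R S BF BG d ν H L K l := by
  have pow_le {t B : ℝ} {m n : ℕ} (ht : 0 ≤ t) (htB : t ≤ B) (hB : 1 ≤ B) (hmn : m ≤ n) :
      t ^ m ≤ B ^ n := (pow_le_pow_left₀ ht htB m).trans (pow_le_pow_right₀ hB hmn)
  unfold mixedRow mixedRowBound
  split_ifs with h
  · have hd : 0 < d := Nat.pos_of_ne_zero fun h => by simp [h] at hK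
    have hxpow := pow_le (norm_nonneg _) hx hR (Nat.mod_lt K hd).le
    have hwpow := pow_le (norm_nonneg _) hw hS h.le
    simp only [mixedPower, evalEval_mul, evalEval_pow, evalEval_X, evalEval_C, eval_pow, eval_X,
      norm_mul, norm_pow, mul_assoc (_ * _)]
    have hBF : 0 ≤ BF := (norm_nonneg _).trans hF
    have hBG : 0 ≤ BG := (norm_nonneg _).trans hG
    gcongr
  · have hxpow := pow_le (norm_nonneg _) hx hR hK.le
    have hwpow := pow_le (norm_nonneg _) hw hS hl.le
    simp only [evalEval_mul, evalEval_pow, evalEval_X, evalEval_C, eval_pow, eval_X, norm_mul,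
      norm_pow]
    gcongr

theorem prod_mixedRowBound (R S BF BG : ℝ) (d ν H k : ℕ) :
    ∏ p : Fin (ν * d) × Fin (H + k), mixedRowBound R S BF BG d ν H (H + k) p.1 p.2 =
      ((BF * BG) ^ (d * ∑ i ∈ Finset.range ν, i) * (R ^ d * S ^ H) ^ (ν * d)) ^ H *
        ((R ^ (ν * d) * S ^ (H + k)) ^ (ν * d)) ^ k := by
  have hlow : ∏ K : Fin (ν * d), BF ^ ((K : ℕ) / d) * BG ^ (ν - 1 - (K : ℕ) / d) * (R ^ d * S ^ H) =
      (BF * BG) ^ (d * ∑ i ∈ Finset.range ν, i) * (R ^ d * S ^ H) ^ (ν * d) := by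
    rw [Finset.prod_mul_distrib, Finset.prod_mul_distrib, Finset.prod_const, Finset.card_univ,
      Fintype.card_fin, Finset.prod_pow_eq_pow_sum, Finset.prod_pow_eq_pow_sum,
      ← Finset.sum_range (fun K => K / d), ← Finset.sum_range (fun K => ν - 1 - K / d),
      sum_range_mul_div, sum_range_mul_sub_div, mul_pow BF BG]
  rw [Fintype.prod_prod_type, Finset.prod_comm]
  simp only [mixedRowBound, Fin.prod_univ_add, Fin.val_castAdd, Fin.is_lt, Fin.val_natAdd, if_true,
    not_lt.mpr (Nat.le_add_right _ _), if_false, hlow, Finset.prod_const, Finset.card_univ,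
    Fintype.card_fin]

theorem det_monomial_prod_eq {N L : ℕ} (ζ : Fin (N * L) → 𝕜 × 𝕜) :
    (Matrix.of fun p q : Fin N × Fin L => (ζ (finProdFinEquiv q)).1 ^ (p.1 : ℕ) *
      (ζ (finProdFinEquiv q)).2 ^ (p.2 : ℕ)).det =
    (Matrix.of fun i j : Fin (N * L) => lexMonomial L i (ζ j)).det := by
  rw [← Matrix.det_submatrix_equiv_self finProdFinEquiv]
  congr 1
  ext p q
  have hL : 0 < L := Nat.zero_lt_of_lt p.2.2
  simp only [lexMonomial, Matrix.submatrix_apply, Matrix.of_apply, finProdFinEquiv_apply_val,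
    Nat.add_mul_div_left _ _ hL, Nat.div_eq_of_lt p.2.2, zero_add, Nat.add_mul_mod_self_left,
    Nat.mod_eq_of_lt p.2.2]

/-- Points of `E` at which the monomials have a large determinant: multiplying their matrix by the
coefficient matrix of the rows `mixedRow` gives the values of the latter on `E`, which are small
when `F` and `G` are. -/
theorem norm_resultant_pow_mul_le {E : Set (𝕜 × 𝕜)} {F G : 𝕜[X][X]} {d ν H j : ℕ}
    (hF : F.natDegree ≤ d) (hG : G.natDegree ≤ d)
    (hFj : InnerDegreeLE F j) (hGj : InnerDegreeLE G j)
    {R S BF BG : ℝ} (hR : 1 ≤ R) (hS : 1 ≤ S) (hEx : ∀ ζ ∈ E, ‖ζ.1‖ ≤ R) (hEw : ∀ ζ ∈ E, ‖ζ.2‖ ≤ S)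
    (hBF : ∀ ζ ∈ E, ‖F.evalEval ζ.2 ζ.1‖ ≤ BF) (hBG : ∀ ζ ∈ E, ‖G.evalEval ζ.2 ζ.1‖ ≤ BG)
    {c : ℕ → ℝ} (hc₀ : ∀ k, 0 ≤ c k)
    (hc : ∀ n < ν * d * (H + ν * j), ∀ a : ℕ → 𝕜, ∃ ζ ∈ E, c (n / (H + ν * j)) ≤
      ‖lexMonomial (H + ν * j) n ζ + ∑ i ∈ Finset.range n, a i * lexMonomial (H + ν * j) i ζ‖) :
    ‖(resultant (F.map (evalRingHom 0)) (G.map (evalRingHom 0)) d d ^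
        ∑ i ∈ Finset.range ν, i) ^ H‖ * (∏ k ∈ Finset.range (ν * d), c k) ^ (H + ν * j) ≤
      (ν * d * (H + ν * j)).factorial *
        (((BF * BG) ^ (d * ∑ i ∈ Finset.range ν, i) * (R ^ d * S ^ H) ^ (ν * d)) ^ H *
          ((R ^ (ν * d) * S ^ (H + ν * j)) ^ (ν * d)) ^ (ν * j)) := by
  set L := H + ν * j
  obtain ⟨ζ, hζE, hζ⟩ := exists_prod_le_norm_det E (lexMonomial L) (fun n => c (n / L))
    (fun n => hc₀ _) (ν * d * L) hc
  let A : Matrix (Fin (ν * d) × Fin L) (Fin (ν * d) × Fin L) 𝕜 :=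
    Matrix.of fun p q => (ζ (finProdFinEquiv q)).1 ^ (p.1 : ℕ) *
      (ζ (finProdFinEquiv q)).2 ^ (p.2 : ℕ)
  have hentry (p q) : (mixedRowMatrix F G d ν H L * A) p q =
      (mixedRow F G d ν H p.1 p.2).evalEval (ζ (finProdFinEquiv q)).2
        (ζ (finProdFinEquiv q)).1 := by
    rw [evalEval_eq_sum_fin (natDegree_mixedRow_lt hF hG p.1.2 H p.2)
      (natDegree_coeff_mixedRow_lt hFj hGj p.1.2 p.2.2), Matrix.mul_apply]
    rfl
  have hdet := norm_det_le_factorial_mul_prod (mixedRowMatrix F G d ν H L * A)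
    (fun p => mixedRowBound R S BF BG d ν H L p.1 p.2) fun p q => by
      have hq := hζE (finProdFinEquiv q)
      rw [hentry]
      exact norm_evalEval_mixedRow_le hR hS (hEx _ hq) (hEw _ hq) (hBF _ hq) (hBG _ hq)
        p.1.2 p.2.2
  rw [Matrix.det_mul, norm_mul, det_monomial_prod_eq, det_mixedRowMatrix hF hG,
    prod_mixedRowBound, Fintype.card_prod, Fintype.card_fin, Fintype.card_fin] at hdet
  rw [← prod_range_mul_div]
  exact (mul_le_mul_of_nonneg_left hζ (norm_nonneg _)).trans hdet

end ResultantEstimate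

section ChebyshevBounds

theorem sum_range_cast_id (n : ℕ) : ∑ k ∈ Finset.range n, (k : ℝ) = n * (n - 1) / 2 := by
  induction n with
  | zero => simp
  | succ n ih =>
    rw [Finset.sum_range_succ, ih]
    push_cast
    ring

theorem exists_monic_leadingCoeff_evalEval_eq {R : Type*} [CommRing R] [Nontrivial R] {L : ℕ}
    (hL : 0 < L) (n : ℕ) (a : ℕ → R) :
    ∃ F : R[X][X], F.leadingCoeff.Monic ∧ F.natDegree = n / L ∧ InnerDegreeLE F (L - 1) ∧
      ∀ x w, F.evalEval w x =
        lexMonomial L n (x, w) + ∑ i ∈ Finset.range n, a i * lexMonomial L i (x, w) := by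
  set F : R[X][X] := X ^ (n / L) * C (X ^ (n % L)) +
    ∑ i ∈ Finset.range n, C (C (a i)) * (X ^ (i / L) * C (X ^ (i % L))) with hF
  have hcoeff (k : ℕ) : F.coeff k = (if k = n / L then X ^ (n % L) else 0) +
      ∑ i ∈ Finset.range n, (if k = i / L then C (a i) * X ^ (i % L) else 0) := by
    simp only [hF, coeff_add, finsetSum_coeff, coeff_C_mul, coeff_mul_C, coeff_X_pow]
    simp only [ite_mul, one_mul, zero_mul, mul_ite, mul_zero]
  have hmonic : (F.coeff (n / L)).Monic := by
    rw [hcoeff, if_pos rfl]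
    refine monic_X_pow_add ((degree_lt_iff_coeff_zero _ _).mpr fun m hm => ?_)
    rw [finsetSum_coeff]
    refine Finset.sum_eq_zero fun i hi => ?_
    split_ifs with hdiv
    · have hi_decomp := Nat.div_add_mod i L
      have hn_decomp := Nat.div_add_mod n L
      rw [← hdiv] at hi_decomp
      have hin := Finset.mem_range.mp hi
      rw [coeff_C_mul, coeff_X_pow, if_neg (by lia), mul_zero]
    · simp
  have hdegree : F.natDegree = n / L := by
    refine le_antisymm (natDegree_le_iff_coeff_eq_zero.mpr fun k hk => ?_)
      (le_natDegree_of_ne_zero hmonic.ne_zero)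
    rw [hcoeff, if_neg (by lia), zero_add]
    refine Finset.sum_eq_zero fun i hi => if_neg ?_
    have hdiv := Nat.div_le_div_right (c := L) (Finset.mem_range.mp hi).le
    lia
  refine ⟨F, by rwa [leadingCoeff, hdegree], hdegree, ?_, fun x w => ?_⟩
  · refine InnerDegreeLE.add ?_ fun k => ?_
    · have hmod := Nat.mod_lt n hL
      exact ((InnerDegreeLE.X.pow _).mul (.const (natDegree_X_pow_le _))).mono (by lia)
    · rw [finsetSum_coeff]
      refine natDegree_sum_le_of_forall_le _ _ fun i _ => ?_
      have hmod := Nat.mod_lt i hL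
      have hterm := (InnerDegreeLE.const (R := R) (p := C (a i)) (j := 0) (by simp)).mul
        ((InnerDegreeLE.X.pow (i / L)).mul (.const (natDegree_X_pow_le (i % L))))
      exact hterm.mono (by lia) k
  · simp only [hF, lexMonomial, evalEval_add, evalEval_mul, evalEval_pow, evalEval_X, evalEval_C,
      eval_pow, eval_X, evalEval_finsetSum, eval_C]

variable {𝕜 : Type*} [NormedField 𝕜]

/-- Every polynomial of bidegree at most `(D, D)`, `D ≥ 1`, normalised by the requirement that its
leading coefficient as a polynomial in `x` is monic in `w`, has norm more than `exp (-τ D)` at some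
point `(x, w)` of `E`. -/
def ChebyshevBound (E : Set (𝕜 × 𝕜)) (τ : ℝ) : Prop :=
  ∀ (D : ℕ) (F : 𝕜[X][X]), 1 ≤ D → F.leadingCoeff.Monic → F.natDegree ≤ D → InnerDegreeLE F D →
    ∃ ζ ∈ E, Real.exp (-τ * D) < ‖F.evalEval ζ.2 ζ.1‖

/-- `F` is at most `exp (-γ d)` in norm on `E`, where `d ≥ Θ` bounds its degree in `x` and bounds
`Θ` times its degree in `w`: for large `Θ` the direction of the bidegree is close to that of `x`. -/
structure IsDirectionallySmall (E : Set (𝕜 × 𝕜)) (Θ d : ℕ) (γ : ℝ) (F : 𝕜[X][X]) : Prop where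
  le_degree : Θ ≤ d
  natDegree_le : F.natDegree ≤ d
  exists_innerDegreeLE : ∃ j, InnerDegreeLE F j ∧ Θ * j ≤ d
  norm_le : ∀ ζ ∈ E, ‖F.evalEval ζ.2 ζ.1‖ ≤ Real.exp (-γ * d)

/-- The analogue of `ChebyshevBound` in the direction of the variable `x`. -/
def DirectionalChebyshevBound (E : Set (𝕜 × 𝕜)) (γ : ℝ) (Θ : ℕ) : Prop :=
  ∀ F : 𝕜[X][X], F.leadingCoeff.Monic → ¬ IsDirectionallySmall E Θ F.natDegree γ F

/-- The lower bound for the `L` monomials `x ^ k * w ^ l`, `l < L`, modulo the preceding ones that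
`ChebyshevBound E τ` (for small `k`) and `DirectionalChebyshevBound E γ Θ` provide. -/
def chebyshevFactor (τ γ : ℝ) (Θ L k : ℕ) : ℝ :=
  if k < Θ * L then Real.exp (-τ * (Θ * L : ℕ)) else Real.exp (-γ * k)

theorem chebyshevFactor_pos (τ γ : ℝ) (Θ L k : ℕ) : 0 < chebyshevFactor τ γ Θ L k := by
  unfold chebyshevFactor
  split_ifs <;> positivity

variable {E : Set (𝕜 × 𝕜)} {τ γ : ℝ} {Θ : ℕ}

theorem exists_chebyshevFactor_le (hτ : ChebyshevBound E τ) (hγ : DirectionalChebyshevBound E γ Θ)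
    {L : ℕ} (hL : 0 < L) (n : ℕ) (a : ℕ → 𝕜) :
    ∃ ζ ∈ E, chebyshevFactor τ γ Θ L (n / L) ≤
      ‖lexMonomial L n ζ + ∑ i ∈ Finset.range n, a i * lexMonomial L i ζ‖ := by
  obtain ⟨F, hmonic, hdegree, hinner, heval⟩ := exists_monic_leadingCoeff_evalEval_eq hL n a
  simp only [chebyshevFactor, ← heval]
  split_ifs with h
  · have hΘ : 1 ≤ Θ := Nat.pos_of_ne_zero fun hΘ => by simp [hΘ] at h
    have hle : L - 1 ≤ Θ * L := (Nat.sub_le L 1).trans (Nat.le_mul_of_pos_left L hΘ)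
    obtain ⟨ζ, hζE, hζ⟩ := hτ (Θ * L) F (Nat.mul_pos hΘ hL) hmonic (by lia) (hinner.mono hle)
    exact ⟨ζ, hζE, hζ.le⟩
  · rw [not_lt, ← hdegree] at h
    by_contra! hsmall
    exact hγ F hmonic ⟨(Nat.le_mul_of_pos_right Θ hL).trans h, le_rfl,
      ⟨L - 1, hinner, (Nat.mul_le_mul_left Θ (Nat.sub_le L 1)).trans h⟩,
      fun ζ hζ => by rw [hdegree]; exact (hsmall ζ hζ).le⟩

theorem le_sum_log_chebyshevFactor (hτ₀ : 0 ≤ τ) (γ : ℝ) (Θ L N : ℕ) :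
    -(γ * (N * (N - 1) / 2) + (τ + |γ|) * (Θ * L) ^ 2) ≤
      ∑ k ∈ Finset.range N, Real.log (chebyshevFactor τ γ Θ L k) := by
  have hterm : ∀ k ∈ Finset.range N,
      -(γ * k) - (if k < Θ * L then (τ + |γ|) * (Θ * L) else 0) ≤
        Real.log (chebyshevFactor τ γ Θ L k) := fun k _ => by
    unfold chebyshevFactor
    split_ifs with h <;> rw [Real.log_exp]
    · have hγk : -γ * k ≤ |γ| * (Θ * L) := by
        have hk : (k : ℝ) ≤ Θ * L := by exact_mod_cast h.le
        calc -γ * k ≤ |γ| * k := by gcongr; exact neg_le_abs γ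
          _ ≤ _ := by gcongr
      push_cast
      linarith
    · linarith
  have hcorrection : ∑ k ∈ Finset.range N, (if k < Θ * L then (τ + |γ|) * (Θ * L) else 0 : ℝ) ≤
      (τ + |γ|) * (Θ * L) ^ 2 := by
    have hcard : (((Finset.range N).filter (· < Θ * L)).card : ℝ) ≤ Θ * L := by
      have hsub : (Finset.range N).filter (· < Θ * L) ⊆ Finset.range (Θ * L) := fun k hk =>
        Finset.mem_range.mpr (Finset.mem_filter.mp hk).2
      exact_mod_cast (Finset.card_le_card hsub).trans_eq (Finset.card_range _)
    rw [← Finset.sum_filter, Finset.sum_const, nsmul_eq_mul]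
    calc _ ≤ (Θ * L : ℝ) * ((τ + |γ|) * (Θ * L)) := by gcongr
      _ = _ := by ring
  refine le_trans ?_ (Finset.sum_le_sum hterm)
  rw [Finset.sum_sub_distrib, Finset.sum_neg_distrib, ← Finset.mul_sum, sum_range_cast_id]
  linarith

end ChebyshevBounds

section ResultantLogEstimate

theorem log_factorial_le (n : ℕ) : Real.log n.factorial ≤ n * Real.log n := by
  rw [← Real.log_pow]
  exact Real.log_le_log (mod_cast n.factorial_pos) (mod_cast Nat.factorial_le_pow n)

theorem le_of_forall_mul_pow_three_le {a b c e : ℝ}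
    (h : ∀ ν : ℕ, 0 < ν → a * ν ^ 3 ≤ b * ν ^ 3 + c * ν ^ 2 + e * ν ^ 2 * Real.log ν) : a ≤ b := by
  have hinv : Tendsto (fun ν : ℕ => 1 / (ν : ℝ)) atTop (𝓝 0) := tendsto_one_div_atTop_nhds_zero_nat
  have hlog : Tendsto (fun ν : ℕ => Real.log (ν : ℝ) / ν) atTop (𝓝 0) := by
    have hreal : Tendsto (fun x : ℝ => Real.log x / x) atTop (𝓝 0) := by
      simpa using Real.tendsto_pow_log_div_mul_add_atTop 1 0 1 one_ne_zero
    exact hreal.comp tendsto_natCast_atTop_atTop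
  have hlim : Tendsto (fun ν : ℕ => b + c * (1 / (ν : ℝ)) + e * (Real.log ν / ν)) atTop (𝓝 b) := by
    simpa using ((hinv.const_mul c).const_add b).add (hlog.const_mul e)
  refine ge_of_tendsto hlim ?_
  filter_upwards [eventually_gt_atTop 0] with ν hν
  have hν' : (0 : ℝ) < ν := Nat.cast_pos.mpr hν
  rw [← mul_le_mul_iff_left₀ (pow_pos hν' 3)]
  exact (h ν hν).trans_eq (by field_simp)

variable {𝕜 : Type*} [NormedField 𝕜] {E : Set (𝕜 × 𝕜)} {τ γ R S : ℝ} {Θ : ℕ}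
  {F G : 𝕜[X][X]} {d j : ℕ} {γF γG : ℝ}

theorem log_norm_resultant_le_of_exponents (hR : 1 ≤ R) (hS : 1 ≤ S)
    (hE : E ⊆ closedBall 0 R ×ˢ closedBall 0 S)
    (hτ : ChebyshevBound E τ) (hγ : DirectionalChebyshevBound E γ Θ)
    (hF : F.natDegree ≤ d) (hG : G.natDegree ≤ d)
    (hFj : InnerDegreeLE F j) (hGj : InnerDegreeLE G j)
    (hFE : ∀ ζ ∈ E, ‖F.evalEval ζ.2 ζ.1‖ ≤ Real.exp (-γF * d))
    (hGE : ∀ ζ ∈ E, ‖G.evalEval ζ.2 ζ.1‖ ≤ Real.exp (-γG * d))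
    (hres : resultant (F.map (evalRingHom 0)) (G.map (evalRingHom 0)) d d ≠ 0)
    (ν : ℕ) {H : ℕ} (hH : 0 < H) :
    H * (ν * (ν - 1) / 2 *
        Real.log ‖resultant (F.map (evalRingHom 0)) (G.map (evalRingHom 0)) d d‖) +
      (H + ν * j) * ∑ k ∈ Finset.range (ν * d), Real.log (chebyshevFactor τ γ Θ (H + ν * j) k) ≤
    (ν * d * (H + ν * j)) * Real.log (ν * d * (H + ν * j)) +
      (H * (d * (ν * (ν - 1) / 2) * (-γF * d + -γG * d) +
          ν * d * (d * Real.log R + H * Real.log S)) +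
        ν * j * (ν * d * (ν * d * Real.log R + (H + ν * j) * Real.log S))) := by
  have hL : 0 < H + ν * j := by lia
  have : 0 < R := by linarith
  have : 0 < S := by linarith
  have hc := chebyshevFactor_pos τ γ Θ (H + ν * j)
  have hmain := norm_resultant_pow_mul_le (ν := ν) hF hG hFj hGj hR hS
    (fun ζ hζ => by simpa using (hE hζ).1) (fun ζ hζ => by simpa using (hE hζ).2) hFE hGE
    (fun k => (hc k).le) fun n _ => exists_chebyshevFactor_le hτ hγ hL n
  have := norm_pos_iff.mpr hres
  have hprod := Finset.prod_pos fun k (_ : k ∈ Finset.range (ν * d)) => hc k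
  have hlog := Real.log_le_log (mul_pos (by rw [norm_pow, norm_pow]; positivity)
    (pow_pos hprod _)) hmain
  rw [norm_pow, norm_pow, Real.log_mul (by positivity) (by positivity),
    Real.log_mul (by positivity) (by positivity), Real.log_mul (by positivity) (by positivity),
    Real.log_pow, Real.log_pow, Real.log_pow, Real.log_pow, Real.log_pow,
    Real.log_mul (by positivity) (by positivity), Real.log_pow, Real.log_pow, Real.log_pow,
    Real.log_mul (by positivity) (by positivity), Real.log_mul (by positivity) (by positivity),
    Real.log_mul (by positivity) (by positivity), Real.log_pow, Real.log_pow, Real.log_pow,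
    Real.log_pow, Real.log_exp, Real.log_exp, Real.log_prod fun k _ => (hc k).ne'] at hlog
  have hfactorial := log_factorial_le (ν * d * (H + ν * j))
  push_cast at hlog hfactorial
  rw [sum_range_cast_id] at hlog
  linarith

/-- The limit `ν → ∞` with `H = ν h` in `log_norm_resultant_le_of_exponents`. -/
theorem mul_resultant_exponent_le (hR : 1 ≤ R) (hS : 1 ≤ S)
    (hE : E ⊆ closedBall 0 R ×ˢ closedBall 0 S) (hτ₀ : 0 ≤ τ)
    (hτ : ChebyshevBound E τ) (hγ : DirectionalChebyshevBound E γ Θ)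
    (hF : F.natDegree ≤ d) (hG : G.natDegree ≤ d)
    (hFj : InnerDegreeLE F j) (hGj : InnerDegreeLE G j)
    (hFE : ∀ ζ ∈ E, ‖F.evalEval ζ.2 ζ.1‖ ≤ Real.exp (-γF * d))
    (hGE : ∀ ζ ∈ E, ‖G.evalEval ζ.2 ζ.1‖ ≤ Real.exp (-γG * d))
    (hres : resultant (F.map (evalRingHom 0)) (G.map (evalRingHom 0)) d d ≠ 0)
    (hd : 0 < d) {h : ℕ} (hh : 0 < h) :
    h * (Real.log ‖resultant (F.map (evalRingHom 0)) (G.map (evalRingHom 0)) d d‖ +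
        (γF + γG) * d ^ 2) / 2 ≤
      (h + j) * (γ * d ^ 2 / 2 + (τ + |γ|) * Θ ^ 2 * (h + j) ^ 2) + h ^ 2 * d * Real.log S +
        j * d * (d * Real.log R + (h + j) * Real.log S) := by
  set Λ := Real.log ‖resultant (F.map (evalRingHom 0)) (G.map (evalRingHom 0)) d d‖
  refine le_of_forall_mul_pow_three_le
    (c := h * (Λ + (γF + γG) * d ^ 2) / 2 - (h + j) * γ * d / 2 + h * d ^ 2 * Real.log R +
      d * (h + j) * Real.log (d * (h + j)))
    (e := 2 * d * (h + j)) fun ν hν => ?_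
  have : (0 : ℝ) < ν := Nat.cast_pos.mpr hν
  have : (0 : ℝ) < d := Nat.cast_pos.mpr hd
  have : (0 : ℝ) < h := Nat.cast_pos.mpr hh
  have hmain := log_norm_resultant_le_of_exponents hR hS hE hτ hγ hF hG hFj hGj hFE hGE hres ν
    (Nat.mul_pos hν hh)
  have hsum := mul_le_mul_of_nonneg_left
    (le_sum_log_chebyshevFactor hτ₀ γ Θ (ν * h + ν * j) (ν * d))
    (by positivity : (0 : ℝ) ≤ ν * h + ν * j)
  have hlog : Real.log (ν * d * (ν * h + ν * j)) = 2 * Real.log ν + Real.log (d * (h + j)) := by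
    rw [show (ν * d * (ν * h + ν * j) : ℝ) = ν ^ 2 * (d * (h + j)) by ring,
      Real.log_mul (by positivity) (by positivity), Real.log_pow, Nat.cast_ofNat]
  push_cast at hmain hsum
  rw [hlog] at hmain
  linarith

theorem le_add_of_mul_exponent_le {A h j d Q LR LS δ ε : ℝ} (hh : 0 < h) (hj : 0 ≤ j) (hd : 0 < d)
    (hjh : j ≤ δ * h) (hhd : h ≤ δ * d) (hδ₁ : δ ≤ 1) (hQ : 0 ≤ Q) (hLR : 0 ≤ LR) (hLS : 0 ≤ LS)
    (hδ : δ * (|γ| + 2 * LR + 16 * Q + 6 * LS) ≤ ε)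
    (hA : h * (A * d ^ 2) / 2 ≤ (h + j) * (γ * d ^ 2 / 2 + Q * (h + j) ^ 2) + h ^ 2 * d * LS +
      j * d * (d * LR + (h + j) * LS)) : A ≤ γ + ε := by
  obtain ⟨s, rfl⟩ : ∃ s, j = s * h := ⟨j / h, (div_mul_cancel₀ j hh.ne').symm⟩
  obtain ⟨t, rfl⟩ : ∃ t, h = t * d := ⟨h / d, (div_mul_cancel₀ h hd.ne').symm⟩
  have hs : s ≤ δ := le_of_mul_le_mul_right hjh hh
  have ht : t ≤ δ := le_of_mul_le_mul_right hhd hd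
  have hs₀ : 0 ≤ s := nonneg_of_mul_nonneg_left hj hh
  have ht₀ : 0 < t := pos_of_mul_pos_left hh hd.le
  have hscaled : A ≤ (1 + s) * (γ + 2 * Q * (1 + s) ^ 2 * t ^ 2) + 2 * t * LS + 2 * s * LR +
      2 * s * (1 + s) * t * LS := by
    rw [← mul_le_mul_iff_right₀ (by positivity : 0 < t * d ^ 3 / 2)]
    linarith
  have hγ : s * γ ≤ δ * |γ| := by
    calc s * γ ≤ s * |γ| := by gcongr; exact le_abs_self γ
      _ ≤ δ * |γ| := by gcongr
  have hQt : (1 + s) * (2 * Q * (1 + s) ^ 2 * t ^ 2) ≤ δ * (16 * Q) := by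
    calc _ = 2 * Q * (1 + s) ^ 3 * (t * t) := by ring
      _ ≤ 2 * Q * (1 + 1) ^ 3 * (1 * δ) := by gcongr <;> linarith
      _ = δ * (16 * Q) := by ring
  have hSt : 2 * s * (1 + s) * t * LS ≤ δ * (4 * LS) := by
    calc _ ≤ 2 * 1 * (1 + 1) * δ * LS := by gcongr <;> linarith
      _ = δ * (4 * LS) := by ring
  have hLRs : s * LR ≤ δ * LR := by gcongr
  have hLSt : t * LS ≤ δ * LS := by gcongr
  linarith

variable (R S τ γ Θ) in
theorem exists_resultant_exponent_le_at_zero (hR : 1 ≤ R) (hS : 1 ≤ S) (hτ₀ : 0 ≤ τ)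
    {ε : ℝ} (hε : 0 < ε) :
    ∃ Θ' : ℕ, 1 ≤ Θ' ∧ ∀ E : Set (𝕜 × 𝕜), E ⊆ closedBall 0 R ×ˢ closedBall 0 S →
      ChebyshevBound E τ → DirectionalChebyshevBound E γ Θ →
      ∀ (F G : 𝕜[X][X]) (d : ℕ) (γF γG : ℝ),
      IsDirectionallySmall E Θ' d γF F → IsDirectionallySmall E Θ' d γG G →
      resultant (F.map (evalRingHom 0)) (G.map (evalRingHom 0)) d d ≠ 0 →
      Real.log ‖resultant (F.map (evalRingHom 0)) (G.map (evalRingHom 0)) d d‖ / d ^ 2 +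
        γF + γG ≤ γ + ε := by
  have hLR : 0 ≤ Real.log R := Real.log_nonneg hR
  have hLS : 0 ≤ Real.log S := Real.log_nonneg hS
  set Q := (τ + |γ|) * Θ ^ 2
  have hQ : 0 ≤ Q := by positivity
  set M := |γ| + 2 * Real.log R + 16 * Q + 6 * Real.log S
  have : 0 ≤ M := by positivity
  obtain ⟨K, hK⟩ := exists_nat_gt (max 1 (M / ε))
  have hK₁ : (1 : ℝ) < K := (le_max_left _ _).trans_lt hK
  have hK₀ : (0 : ℝ) < K := by linarith
  have hMK : (K : ℝ)⁻¹ * M ≤ ε := by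
    rw [inv_mul_le_iff₀ hK₀, ← div_le_iff₀ hε]
    exact (le_max_right _ _).trans hK.le
  have hKnat : 0 < K := by exact_mod_cast hK₀
  refine ⟨K * K, Nat.mul_pos hKnat hKnat, ?_⟩
  intro E hE hτ hγ F G d γF γG hF hG hres
  obtain ⟨jF, hFj, hΘjF⟩ := hF.exists_innerDegreeLE
  obtain ⟨jG, hGj, hΘjG⟩ := hG.exists_innerDegreeLE
  obtain ⟨j, hj⟩ : ∃ j, j = max jF jG := ⟨_, rfl⟩
  have hΘjd : K * K * j ≤ d := by
    rw [hj]
    rcases max_choice jF jG with h | h <;> rwa [h]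
  have hd : 0 < d := (Nat.mul_pos hKnat hKnat).trans_le hF.le_degree
  have hd' : (0 : ℝ) < d := Nat.cast_pos.mpr hd
  have hh : 0 < K * max j 1 := Nat.mul_pos hKnat (by lia)
  have hmain := mul_resultant_exponent_le hR hS hE hτ₀ hτ hγ hF.natDegree_le hG.natDegree_le
    (hFj.mono (by lia : jF ≤ j)) (hGj.mono (by lia)) hF.norm_le hG.norm_le hres hd hh
  refine le_add_of_mul_exponent_le (h := (K * max j 1 : ℕ)) (j := j) (d := d) (mod_cast hh)
    (Nat.cast_nonneg j) hd' ?_ ?_ (inv_le_one_of_one_le₀ hK₁.le) hQ hLR hLS hMK ?_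
  · push_cast
    rw [inv_mul_cancel_left₀ hK₀.ne']
    exact le_max_left _ _
  · rw [le_inv_mul_iff₀ hK₀]
    have hle : K * K * max j 1 ≤ d := by
      rcases max_choice j 1 with h | h <;> rw [h]
      · exact hΘjd
      · simpa using hF.le_degree
    exact_mod_cast (mul_assoc K K _).symm.trans_le hle
  · refine Eq.trans_le ?_ hmain
    field_simp
    ring

end ResultantLogEstimate

section InnerTaylor

/-- The polynomial `F(x, w + c)`, for `F` a polynomial in `x` with coefficients in `R[w]`. -/
def innerTaylor {R : Type*} [CommRing R] (c : R) (F : R[X][X]) : R[X][X] :=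
  F.map (taylorAlgHom c : R[X] →ₐ[R] R[X]).toRingHom

section CommRing

variable {R : Type*} [CommRing R] (c : R) {F : R[X][X]}

theorem natDegree_innerTaylor : (innerTaylor c F).natDegree = F.natDegree :=
  natDegree_map_eq_of_injective (taylor_injective c) F

theorem InnerDegreeLE.innerTaylor {j : ℕ} (hF : InnerDegreeLE F j) :
    InnerDegreeLE (innerTaylor c F) j := fun k => by
  rw [_root_.innerTaylor, coeff_map]
  exact (natDegree_taylor _ c).trans_le (hF k)

theorem monic_leadingCoeff_innerTaylor (hF : F.leadingCoeff.Monic) :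
    (innerTaylor c F).leadingCoeff.Monic := by
  rw [innerTaylor, leadingCoeff_map_of_injective (taylor_injective c)]
  exact (leadingCoeff_taylor c _).trans hF

theorem map_evalRingHom_innerTaylor (w : R) (F : R[X][X]) :
    (innerTaylor c F).map (evalRingHom w) = F.map (evalRingHom (w + c)) := by
  rw [innerTaylor, Polynomial.map_map]
  congr 1
  ext x <;> simp [taylor_apply]

theorem evalEval_innerTaylor (w x : R) (F : R[X][X]) :
    (innerTaylor c F).evalEval w x = F.evalEval (w + c) x := by
  rw [← map_evalRingHom_eval, map_evalRingHom_innerTaylor, map_evalRingHom_eval]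

end CommRing

variable {𝕜 : Type*} [NormedField 𝕜] {E : Set (𝕜 × 𝕜)}

theorem ChebyshevBound.image_sub {τ : ℝ} (hE : ChebyshevBound E τ) (ω : 𝕜) :
    ChebyshevBound ((fun ζ : 𝕜 × 𝕜 => (ζ.1, ζ.2 - ω)) '' E) τ := by
  intro D F hD hmonic hdeg hinner
  obtain ⟨ζ, hζE, hζ⟩ := hE D (innerTaylor (-ω) F) hD (monic_leadingCoeff_innerTaylor _ hmonic)
    (by rwa [natDegree_innerTaylor]) (hinner.innerTaylor _)
  exact ⟨_, ⟨ζ, hζE, rfl⟩, by rwa [evalEval_innerTaylor, ← sub_eq_add_neg] at hζ⟩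

theorem IsDirectionallySmall.innerTaylor {Θ d : ℕ} {γ : ℝ} {F : 𝕜[X][X]}
    (hF : IsDirectionallySmall E Θ d γ F) (ω : 𝕜) :
    IsDirectionallySmall ((fun ζ : 𝕜 × 𝕜 => (ζ.1, ζ.2 - ω)) '' E) Θ d γ (innerTaylor ω F) := by
  obtain ⟨j, hj, hjd⟩ := hF.exists_innerDegreeLE
  refine ⟨hF.le_degree, (natDegree_innerTaylor ω).trans_le hF.natDegree_le,
    ⟨j, hj.innerTaylor ω, hjd⟩, ?_⟩
  rintro _ ⟨ζ, hζ, rfl⟩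
  simpa [evalEval_innerTaylor] using hF.norm_le ζ hζ

theorem DirectionalChebyshevBound.image_sub {γ : ℝ} {Θ : ℕ}
    (hE : DirectionalChebyshevBound E γ Θ) (ω : 𝕜) :
    DirectionalChebyshevBound ((fun ζ : 𝕜 × 𝕜 => (ζ.1, ζ.2 - ω)) '' E) γ Θ := by
  intro F hmonic hF
  refine hE (innerTaylor (-ω) F) (monic_leadingCoeff_innerTaylor _ hmonic) ?_
  rw [natDegree_innerTaylor]
  simpa [Set.image_image] using hF.innerTaylor (-ω)

theorem exists_resultant_exponent_le (R S τ γ ρ : ℝ) (Θ : ℕ) (hR : 1 ≤ R) (hS : 1 ≤ S)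
    (hτ₀ : 0 ≤ τ) (hρ : 0 ≤ ρ) {ε : ℝ} (hε : 0 < ε) :
    ∃ Θ' : ℕ, 1 ≤ Θ' ∧ ∀ E : Set (𝕜 × 𝕜), E ⊆ closedBall 0 R ×ˢ closedBall 0 S →
      ChebyshevBound E τ → DirectionalChebyshevBound E γ Θ →
      ∀ (F G : 𝕜[X][X]) (d : ℕ) (γF γG : ℝ) (ω : 𝕜), ‖ω‖ ≤ ρ →
      IsDirectionallySmall E Θ' d γF F → IsDirectionallySmall E Θ' d γG G →
      resultant (F.map (evalRingHom ω)) (G.map (evalRingHom ω)) d d ≠ 0 →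
      Real.log ‖resultant (F.map (evalRingHom ω)) (G.map (evalRingHom ω)) d d‖ / d ^ 2 +
        γF + γG ≤ γ + ε := by
  obtain ⟨Θ', hΘ', h⟩ := exists_resultant_exponent_le_at_zero (𝕜 := 𝕜) τ γ R (S + ρ) Θ hR
    (by linarith) hτ₀ hε
  refine ⟨Θ', hΘ', ?_⟩
  intro E hE hτ hγ F G d γF γG ω hω hF hG hres
  have hbound := h _ ?_ (hτ.image_sub ω) (hγ.image_sub ω) _ _ d γF γG (hF.innerTaylor ω)
    (hG.innerTaylor ω)
  · rw [map_evalRingHom_innerTaylor, map_evalRingHom_innerTaylor, zero_add] at hbound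
    exact hbound hres
  · rintro _ ⟨ζ, hζ, rfl⟩
    simp only [Set.mem_prod, mem_closedBall_zero_iff]
    exact ⟨by simpa using (hE hζ).1,
      (norm_sub_le _ _).trans (add_le_add (by simpa using (hE hζ).2) hω)⟩

end InnerTaylor

section RootSums

theorem resultant_pow_left_of_le {R : Type*} [CommRing R] {f g : R[X]} {m n : ℕ}
    (hf : f.natDegree ≤ m) (hg : g.natDegree ≤ n) (ν : ℕ) :
    resultant (f ^ ν) g (ν * m) n = resultant f g m n ^ ν := by
  rw [resultant_comm, resultant_pow_right_of_le hg hf, resultant_comm f g, mul_pow, ← pow_mul]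
  ring_nf

theorem IsDirectionallySmall.pow {𝕜 : Type*} [NormedField 𝕜] {E : Set (𝕜 × 𝕜)} {Θ d : ℕ} {γ : ℝ}
    {F : 𝕜[X][X]} (hF : IsDirectionallySmall E Θ d γ F) {m : ℕ} (hm : 0 < m) :
    IsDirectionallySmall E Θ (m * d) γ (F ^ m) := by
  obtain ⟨j, hj, hjd⟩ := hF.exists_innerDegreeLE
  refine ⟨hF.le_degree.trans (Nat.le_mul_of_pos_left d hm),
    natDegree_pow_le_of_le m hF.natDegree_le, ⟨m * j, hj.pow m, ?_⟩, fun ζ hζ => ?_⟩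
  · rw [mul_left_comm]
    exact Nat.mul_le_mul_left m hjd
  · rw [evalEval_pow, norm_pow]
    calc _ ≤ Real.exp (-γ * d) ^ m := by gcongr; exact hF.norm_le ζ hζ
      _ = _ := by rw [← Real.exp_nat_mul]; push_cast; ring_nf

theorem exists_log_norm_resultant_le {𝕜 : Type*} [NormedField 𝕜] (R S τ γ ρ : ℝ) (Θ : ℕ)
    (hR : 1 ≤ R) (hS : 1 ≤ S) (hτ₀ : 0 ≤ τ) (hρ : 0 ≤ ρ) {ε : ℝ} (hε : 0 < ε) :
    ∃ Θ' : ℕ, 1 ≤ Θ' ∧ ∀ E : Set (𝕜 × 𝕜), E ⊆ closedBall 0 R ×ˢ closedBall 0 S →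
      ChebyshevBound E τ → DirectionalChebyshevBound E γ Θ →
      ∀ (F G : 𝕜[X][X]) (n m : ℕ) (γF γG : ℝ) (ω : 𝕜), ‖ω‖ ≤ ρ →
      IsDirectionallySmall E Θ' n γF F → IsDirectionallySmall E Θ' m γG G →
      resultant (F.map (evalRingHom ω)) (G.map (evalRingHom ω)) n m ≠ 0 →
      Real.log ‖resultant (F.map (evalRingHom ω)) (G.map (evalRingHom ω)) n m‖ ≤
        n * m * (γ + ε - γF - γG) := by
  obtain ⟨Θ', hΘ', h⟩ := exists_resultant_exponent_le (𝕜 := 𝕜) R S τ γ ρ Θ hR hS hτ₀ hρ hε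
  refine ⟨Θ', hΘ', ?_⟩
  intro E hE hτ hγ F G n m γF γG ω hω hF hG hres
  have hn₀ : 0 < n := Nat.lt_of_lt_of_le hΘ' hF.le_degree
  have hm₀ : 0 < m := Nat.lt_of_lt_of_le hΘ' hG.le_degree
  have hpow : resultant ((F ^ m).map (evalRingHom ω)) ((G ^ n).map (evalRingHom ω)) (m * n)
      (m * n) = resultant (F.map (evalRingHom ω)) (G.map (evalRingHom ω)) n m ^ (n * m) := by
    have hFω := (natDegree_map_le (f := evalRingHom ω)).trans hF.natDegree_le
    have hGω := (natDegree_map_le (f := evalRingHom ω)).trans hG.natDegree_le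
    rw [Polynomial.map_pow, Polynomial.map_pow, resultant_pow_left_of_le hFω
      ((natDegree_pow_le_of_le n hGω).trans_eq (mul_comm n m)),
      mul_comm m n, resultant_pow_right_of_le hFω hGω, ← pow_mul]
  have hlog := h E hE hτ hγ (F ^ m) (G ^ n) (m * n) γF γG ω hω (hF.pow hm₀)
    (mul_comm n m ▸ hG.pow hn₀) (by rw [hpow]; exact pow_ne_zero _ hres)
  rw [hpow, norm_pow, Real.log_pow] at hlog
  push_cast at hlog
  have : (0 : ℝ) < n := Nat.cast_pos.mpr hn₀
  have : (0 : ℝ) < m := Nat.cast_pos.mpr hm₀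
  rw [show ∀ x : ℝ, n * m * x / (m * n) ^ 2 = x / (n * m) by intro x; field_simp] at hlog
  rw [← div_le_iff₀' (by positivity)]
  linarith

theorem norm_multiset_prod_map {𝕜 α : Type*} [NormedField 𝕜] (s : Multiset α) (g : α → 𝕜) :
    ‖(s.map g).prod‖ = (s.map fun a => ‖g a‖).prod := by
  simpa using map_multiset_prod (normHom : 𝕜 →*₀ ℝ) (s.map g)

theorem norm_add_mul_eq_norm_add_conj_mul {u : ℂ} (hu : ‖u‖ = 1) (a : ℂ) (c : ℝ) :
    ‖a + u * c‖ = ‖c + starRingEnd ℂ a * u‖ := by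
  have hconj : (c : ℂ) + starRingEnd ℂ a * u = u * starRingEnd ℂ (a + u * c) := by
    have huu : u * starRingEnd ℂ u = 1 := by simp [Complex.mul_conj, Complex.normSq_eq_norm_sq, hu]
    simp only [map_add, map_mul, Complex.conj_ofReal]
    linear_combination -(c : ℂ) * huu
  rw [hconj, norm_mul, hu, one_mul, RCLike.norm_conj]

/-- Where `‖a‖ < c` the factor `a + u c` is replaced by `c + conj a * u`, of the same norm for
`‖u‖ = 1`; the resulting polynomial in `u` obeys the maximum principle, and the norm of its value at
`0` is the left-hand side. -/
theorem exists_norm_eq_one_prod_max_norm_le (s : Multiset ℂ) {c : ℝ} (hc : 0 ≤ c) :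
    ∃ u : ℂ, ‖u‖ = 1 ∧
      (s.map fun a => max ‖a‖ c).prod ≤ ‖(s.map fun a => a + u * c).prod‖ := by
  set Q : ℂ → ℂ := fun u =>
    (s.map fun a => if c ≤ ‖a‖ then a + u * c else c + starRingEnd ℂ a * u).prod with hQ
  have hdiff : Differentiable ℂ Q := by
    rw [hQ]
    induction s using Multiset.induction with
    | empty => simp
    | cons a s ih =>
      simp only [Multiset.map_cons, Multiset.prod_cons]
      refine Differentiable.mul ?_ (ih rfl)
      split_ifs <;> fun_prop
  have hcenter : ‖Q 0‖ = (s.map fun a => max ‖a‖ c).prod := by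
    rw [hQ, norm_multiset_prod_map]
    congr 1
    refine Multiset.map_congr rfl fun a _ => ?_
    split_ifs with h
    · simp [h]
    · simp [(not_le.mp h).le, abs_of_nonneg hc]
  have hcircle (u : ℂ) (hu : ‖u‖ = 1) : ‖Q u‖ = ‖(s.map fun a => a + u * c).prod‖ := by
    rw [hQ, norm_multiset_prod_map, norm_multiset_prod_map]
    congr 1
    refine Multiset.map_congr rfl fun a _ => ?_
    split_ifs
    · rfl
    · exact (norm_add_mul_eq_norm_add_conj_mul hu a c).symm
  obtain ⟨u, hu, hmax⟩ := Complex.exists_mem_frontier_isMaxOn_norm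
    (isBounded_ball (x := (0 : ℂ)) (r := 1)) ⟨0, by simp⟩ hdiff.diffContOnCl
  rw [frontier_ball _ one_ne_zero, mem_sphere_zero_iff_norm] at hu
  refine ⟨u, hu, ?_⟩
  rw [← hcenter, ← hcircle u hu]
  exact hmax (subset_closure (by simp))

theorem sum_log_max_norm_le_log_norm_prod (s : Multiset ℂ) {c : ℝ} (hc : 0 < c) :
    ∃ u : ℂ, ‖u‖ = 1 ∧ (s.map fun a => a + u * c).prod ≠ 0 ∧
      (s.map fun a => Real.log (max ‖a‖ c)).sum ≤ Real.log ‖(s.map fun a => a + u * c).prod‖ := by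
  obtain ⟨u, hu, hle⟩ := exists_norm_eq_one_prod_max_norm_le s hc.le
  have hmax (x) (hx : x ∈ s.map fun a => max ‖a‖ c) : 0 < x := by
    obtain ⟨a, -, rfl⟩ := Multiset.mem_map.mp hx
    exact lt_max_of_lt_right hc
  have hprod : 0 < (s.map fun a => max ‖a‖ c).prod := Multiset.prod_pos hmax
  refine ⟨u, hu, norm_pos_iff.mp (hprod.trans_le hle), ?_⟩
  have hlog := Real.log_multiset_prod fun x hx => (hmax x hx).ne'
  rw [Multiset.map_map] at hlog
  exact hlog.symm.trans_le (Real.log_le_log hprod hle)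

theorem IsDirectionallySmall.add_C {𝕜 : Type*} [NormedField 𝕜] {E : Set (𝕜 × 𝕜)} {Θ d : ℕ}
    {γ : ℝ} {F : 𝕜[X][X]} (hF : IsDirectionallySmall E Θ d γ F) (hd : d ≠ 0) {a : 𝕜}
    (ha : ‖a‖ ≤ Real.exp (-γ * d)) :
    IsDirectionallySmall E Θ d (γ - Real.log 2 / d) (F + C (C a)) := by
  obtain ⟨j, hj, hjd⟩ := hF.exists_innerDegreeLE
  refine ⟨hF.le_degree, natDegree_add_le_of_degree_le hF.natDegree_le (by simp),
    ⟨j, hj.add (.const (by simp)), hjd⟩, fun ζ hζ => ?_⟩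
  have : (d : ℝ) ≠ 0 := Nat.cast_ne_zero.mpr hd
  rw [evalEval_add, evalEval_C, eval_C]
  calc _ ≤ Real.exp (-γ * d) + Real.exp (-γ * d) := norm_add_le_of_le (hF.norm_le ζ hζ) ha
    _ = Real.exp (Real.log 2) * Real.exp (-γ * d) := by rw [Real.exp_log two_pos, two_mul]
    _ = _ := by rw [← Real.exp_add]; congr 1; field_simp; ring

theorem exists_sum_roots_log_max_le (R S τ γ ρ : ℝ) (Θ : ℕ)
    (hR : 1 ≤ R) (hS : 1 ≤ S) (hτ₀ : 0 ≤ τ) (hρ : 0 ≤ ρ) {ε : ℝ} (hε : 0 < ε) :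
    ∃ Θ' : ℕ, 1 ≤ Θ' ∧ ∀ E : Set (ℂ × ℂ), E ⊆ closedBall 0 R ×ˢ closedBall 0 S →
      ChebyshevBound E τ → DirectionalChebyshevBound E γ Θ →
      ∀ (F P : ℂ[X][X]) (m : ℕ) (γF γP : ℝ) (ω : ℂ), ‖ω‖ ≤ ρ → F.leadingCoeff.eval ω ≠ 0 →
      IsDirectionallySmall E Θ' F.natDegree γF F → IsDirectionallySmall E Θ' m γP P →
      m * Real.log ‖F.leadingCoeff.eval ω‖ + ((F.map (evalRingHom ω)).roots.map fun z =>
          Real.log (max ‖P.evalEval ω z‖ (Real.exp (-γP * m)))).sum ≤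
        F.natDegree * m * (γ + ε - γF - γP) + F.natDegree * Real.log 2 := by
  obtain ⟨Θ', hΘ', h⟩ := exists_log_norm_resultant_le (𝕜 := ℂ) R S τ γ ρ Θ hR hS hτ₀ hρ hε
  refine ⟨Θ', hΘ', ?_⟩
  intro E hE hτ hγ F P m γF γP ω hω hlc hF hP
  set f := F.map (evalRingHom ω)
  have hf_degree : f.natDegree = F.natDegree := natDegree_map_of_leadingCoeff_ne_zero _ hlc
  have hf_lc : f.leadingCoeff = F.leadingCoeff.eval ω :=
    leadingCoeff_map_of_leadingCoeff_ne_zero _ hlc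
  obtain ⟨u, hu, hne, hsum⟩ := sum_log_max_norm_le_log_norm_prod
    (f.roots.map fun z => P.evalEval ω z) (Real.exp_pos (-γP * m))
  simp only [Multiset.map_map, Function.comp_def] at hsum hne
  obtain ⟨a, ha⟩ : ∃ a : ℂ, a = u * (Real.exp (-γP * m) : ℝ) := ⟨_, rfl⟩
  have ha_norm : ‖a‖ ≤ Real.exp (-γP * m) := by
    rw [ha, norm_mul, hu, one_mul, Complex.norm_real, Real.norm_of_nonneg (Real.exp_pos _).le]
  rw [← ha] at hsum hne
  have hm₀ : m ≠ 0 := (Nat.lt_of_lt_of_le hΘ' hP.le_degree).ne'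
  have hG := hP.add_C hm₀ ha_norm
  have hres : resultant f ((P + C (C a)).map (evalRingHom ω)) F.natDegree m =
      F.leadingCoeff.eval ω ^ m * (f.roots.map fun z => P.evalEval ω z + a).prod := by
    rw [← hf_degree, resultant_eq_prod_eval _ _ _ (natDegree_map_le.trans hG.natDegree_le)
      (IsAlgClosed.splits f), hf_lc]
    simp only [map_evalRingHom_eval, evalEval_add, evalEval_C, eval_C]
  have hlog := h E hE hτ hγ F _ F.natDegree m γF _ ω hω hF hG
    (by rw [hres]; exact mul_ne_zero (pow_ne_zero _ hlc) hne)
  rw [hres, norm_mul, norm_pow, Real.log_mul (pow_ne_zero _ (norm_ne_zero_iff.mpr hlc))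
    (norm_ne_zero_iff.mpr hne), Real.log_pow] at hlog
  have : (m : ℝ) ≠ 0 := Nat.cast_ne_zero.mpr hm₀
  refine (add_le_add_right hsum _).trans (hlog.trans_eq ?_)
  field_simp
  ring

end RootSums

section DirectionalConstant

theorem exp_neg_neg_log_div_mul {c : ℝ} (hc : 0 < c) {d : ℕ} (hd : 0 < d) (N : ℕ) :
    Real.exp (-(-Real.log c / d) * (N * d : ℕ)) = c ^ N := by
  rw [← Real.exp_log (pow_pos hc N), Real.log_pow]
  push_cast
  congr 1
  field_simp

variable {𝕜 : Type*} [NormedField 𝕜] {E : Set (𝕜 × 𝕜)} {γ γ' : ℝ} {Θ Θ' d : ℕ} {F : 𝕜[X][X]}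

theorem IsDirectionallySmall.anti_left (hF : IsDirectionallySmall E Θ d γ F) (hΘ : Θ' ≤ Θ) :
    IsDirectionallySmall E Θ' d γ F := by
  obtain ⟨j, hj, hjd⟩ := hF.exists_innerDegreeLE
  exact ⟨hΘ.trans hF.le_degree, hF.natDegree_le, ⟨j, hj, (Nat.mul_le_mul_right j hΘ).trans hjd⟩,
    hF.norm_le⟩

theorem IsDirectionallySmall.anti_exponent (hF : IsDirectionallySmall E Θ d γ F) (hγ : γ' ≤ γ) :
    IsDirectionallySmall E Θ d γ' F :=
  { hF with norm_le := fun ζ hζ => (hF.norm_le ζ hζ).trans (by gcongr) }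

theorem IsDirectionallySmall.one (E : Set (𝕜 × 𝕜)) (Θ : ℕ) : IsDirectionallySmall E Θ Θ 0 1 :=
  ⟨le_rfl, by simp, ⟨0, .const (p := 1) (by simp), by simp⟩, by simp⟩

theorem IsDirectionallySmall.map_C_pow {p : 𝕜[X]} (hd : 0 < d) (hp : p.natDegree ≤ d) {c : ℝ}
    (hc : 0 < c) (hE : ∀ ζ ∈ E, ‖p.eval ζ.1‖ ≤ c) (N : ℕ) :
    IsDirectionallySmall E N (N * d) (-Real.log c / d) (p.map C ^ N) := by
  have hinner : InnerDegreeLE (p.map C) 0 := fun k => by rw [coeff_map, natDegree_C]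
  refine ⟨Nat.le_mul_of_pos_right N hd, natDegree_pow_le_of_le N (natDegree_map_le.trans hp),
    ⟨0, by simpa using hinner.pow N, by simp⟩, fun ζ hζ => ?_⟩
  rw [evalEval_pow, evalEval_map_C, norm_pow, exp_neg_neg_log_div_mul hc hd]
  have hζE := hE ζ hζ
  gcongr

theorem ChebyshevBound.le_of_not_directional {τ : ℝ} (hτ : ChebyshevBound E τ)
    (hγ : ¬ DirectionalChebyshevBound E γ 1) : γ ≤ τ := by
  simp only [DirectionalChebyshevBound, not_forall, not_not] at hγ
  obtain ⟨F, hmonic, hF⟩ := hγ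
  obtain ⟨j, hj, hjd⟩ := hF.exists_innerDegreeLE
  obtain ⟨ζ, hζE, hζ⟩ := hτ F.natDegree F hF.le_degree hmonic le_rfl (hj.mono (by lia))
  have hlt := Real.exp_lt_exp.mp (hζ.trans_le (hF.norm_le ζ hζE))
  rw [neg_mul, neg_mul, neg_lt_neg_iff] at hlt
  exact (lt_of_mul_lt_mul_right hlt (Nat.cast_nonneg _)).le

/-- The number `κ` is the Chebyshev exponent of `E` in the direction of `x`. -/
theorem exists_directional_exponent {R τ : ℝ} (hR : 0 < R) (hE : ∀ ζ ∈ E, ‖ζ.1‖ ≤ R)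
    (hτ : ChebyshevBound E τ) :
    ∃ κ ≤ τ, ∀ ε > 0, (∀ Θ, ¬ DirectionalChebyshevBound E (κ - ε) Θ) ∧
      ∃ Θ, DirectionalChebyshevBound E (κ + ε) Θ := by
  set A := {γ | ∀ Θ, ¬ DirectionalChebyshevBound E γ Θ}
  have hbdd : ∀ γ ∈ A, γ ≤ τ := fun γ hγ => hτ.le_of_not_directional (hγ 1)
  have hne : A.Nonempty := by
    refine ⟨-Real.log R, fun Θ h => h (X ^ Θ) (by simp) ?_⟩
    simpa using IsDirectionallySmall.map_C_pow one_pos natDegree_X_le hR (by simpa using hE) Θ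
  refine ⟨sSup A, csSup_le hne hbdd, fun ε hε => ⟨fun Θ h => ?_, ?_⟩⟩
  · obtain ⟨γ, hγ, hlt⟩ := exists_lt_of_lt_csSup hne (sub_lt_self (sSup A) hε)
    exact hγ Θ fun F hmonic hF => h F hmonic (hF.anti_exponent hlt.le)
  · by_contra! h
    have hle := le_csSup ⟨τ, hbdd⟩ h
    linarith

end DirectionalConstant

section ExtremalRoots

theorem exists_norm_eq_one_le_norm_eval {p : ℂ[X]} (hp : p.Monic) {ρ : ℝ} (hρ : 1 ≤ ρ) :
    ∃ ω : ℂ, ‖ω‖ = ρ ∧ 1 ≤ ‖p.eval ω‖ := by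
  have hρ₀ : 0 ≤ ρ := by linarith
  obtain ⟨u, hu, hle⟩ := exists_norm_eq_one_prod_max_norm_le (p.roots.map fun z => -z) hρ₀
  refine ⟨u * ρ, by simp [hu, abs_of_nonneg hρ₀], ?_⟩
  rw [(IsAlgClosed.splits p).eval_eq_prod_roots_of_monic hp]
  simp only [Multiset.map_map, Function.comp_def, neg_add_eq_sub] at hle
  refine le_trans (Multiset.prod_induction (1 ≤ ·) _ (fun _ _ => one_le_mul_of_one_le_of_one_le)
    le_rfl fun x hx => ?_) hle
  obtain ⟨z, -, rfl⟩ := Multiset.mem_map.mp hx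
  exact le_max_of_le_right hρ

theorem le_mul_two_pow_of_prod_le_prod {α : Type*} {S : Finset α} {a b : α → ℝ}
    (ha : ∀ x ∈ S, 0 < a x) (hb : ∀ x ∈ S, 0 ≤ b x) (hba : ∀ x ∈ S, b x ≤ 2 * a x)
    (h : ∏ x ∈ S, a x ≤ ∏ x ∈ S, b x) {x : α} (hx : x ∈ S) : a x ≤ b x * 2 ^ S.card := by
  classical
  rw [← Finset.mul_prod_erase S a hx, ← Finset.mul_prod_erase S b hx] at h
  have ha_erase : ∀ y ∈ S.erase x, 0 < a y := fun y hy => ha y (Finset.mem_of_mem_erase hy)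
  have herase : ∏ y ∈ S.erase x, b y ≤ 2 ^ S.card * ∏ y ∈ S.erase x, a y := by
    calc ∏ y ∈ S.erase x, b y ≤ ∏ y ∈ S.erase x, 2 * a y :=
          Finset.prod_le_prod (fun y hy => hb y (Finset.mem_of_mem_erase hy))
            fun y hy => hba y (Finset.mem_of_mem_erase hy)
      _ = 2 ^ (S.erase x).card * ∏ y ∈ S.erase x, a y := by
          rw [Finset.prod_mul_distrib, Finset.prod_const]
      _ ≤ _ := by
          have := (Finset.prod_pos ha_erase).le
          gcongr
          · norm_num
          · exact Finset.erase_subset _ _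
  refine le_of_mul_le_mul_right (h.trans ?_) (Finset.prod_pos ha_erase)
  calc b x * ∏ y ∈ S.erase x, b y ≤ b x * (2 ^ S.card * ∏ y ∈ S.erase x, a y) :=
        mul_le_mul_of_nonneg_left herase (hb x hx)
    _ = _ := by ring

theorem exists_norm_eq_one_forall_le_norm_add {α : Type*} (S : Finset α) (g : α → ℂ) {c : ℝ}
    (hc : 0 < c) : ∃ u : ℂ, ‖u‖ = 1 ∧ ∀ x ∈ S, c ≤ ‖g x + u * c‖ * 2 ^ S.card := by
  obtain ⟨u, hu, hle⟩ := exists_norm_eq_one_prod_max_norm_le (S.val.map g) hc.le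
  refine ⟨u, hu, fun x hx => (le_max_right ‖g x‖ c).trans ?_⟩
  rw [norm_multiset_prod_map, Multiset.map_map, Multiset.map_map] at hle
  refine le_mul_two_pow_of_prod_le_prod (a := fun x => max ‖g x‖ c) (b := fun x => ‖g x + u * c‖)
    (fun x _ => lt_max_of_lt_right hc) (fun x _ => norm_nonneg _) (fun x _ => ?_) hle hx
  rw [two_mul]
  exact norm_add_le_of_le (le_max_left _ _) (by simp [hu, abs_of_pos hc])

variable {E : Set (ℂ × ℂ)} {γ : ℝ} {Θ : ℕ}

theorem exists_isDirectionallySmall_of_not_bound (h : ¬ DirectionalChebyshevBound E γ Θ)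
    (hΘ : 1 ≤ Θ) {ρ : ℝ} (hρ : 1 ≤ ρ) (S : Finset ℂ) :
    ∃ (F : ℂ[X][X]) (ω : ℂ), ‖ω‖ = ρ ∧ 1 ≤ ‖F.leadingCoeff.eval ω‖ ∧
      IsDirectionallySmall E Θ F.natDegree (γ - Real.log 2 / F.natDegree) F ∧
      ∀ x ∈ S, Real.exp (-γ * F.natDegree) ≤ ‖F.evalEval ω x‖ * 2 ^ S.card := by
  simp only [DirectionalChebyshevBound, not_forall, not_not] at h
  obtain ⟨F, hmonic, hF⟩ := h
  obtain ⟨ω, hω, hlc⟩ := exists_norm_eq_one_le_norm_eval hmonic hρ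
  set c := Real.exp (-γ * F.natDegree)
  obtain ⟨u, hu, hS⟩ :=
    exists_norm_eq_one_forall_le_norm_add S (fun x => F.evalEval ω x) (Real.exp_pos _ : 0 < c)
  have hdegree : 0 < F.natDegree := Nat.lt_of_lt_of_le hΘ hF.le_degree
  have hlt (a : ℂ) : (C (C a)).degree < F.degree :=
    degree_C_le.trans_lt (natDegree_pos_iff_degree_pos.mp hdegree)
  have hnorm : ‖u * (c : ℂ)‖ ≤ c := by
    rw [norm_mul, hu, one_mul, Complex.norm_real, Real.norm_of_nonneg (Real.exp_pos _).le]
  refine ⟨F + C (C (u * c)), ω, hω, ?_, ?_, fun x hx => ?_⟩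
  · rwa [leadingCoeff_add_of_degree_lt' (hlt _)]
  · rw [natDegree_add_eq_left_of_degree_lt (hlt _)]
    exact hF.add_C hdegree.ne' hnorm
  · rw [natDegree_add_eq_left_of_degree_lt (hlt _), evalEval_add, evalEval_C, eval_C]
    exact hS x hx

theorem exists_sum_roots_log_max_le_of_exponent {R S τ κ ρ ε : ℝ} (hR : 1 ≤ R) (hS : 1 ≤ S)
    (hE : E ⊆ closedBall 0 R ×ˢ closedBall 0 S) (hτ₀ : 0 ≤ τ) (hρ : 0 ≤ ρ) (hε : 0 < ε)
    (hτ : ChebyshevBound E τ) (hκ : DirectionalChebyshevBound E (κ + ε / 4) Θ) :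
    ∃ Θ' : ℕ, 1 ≤ Θ' ∧ ∀ (F P : ℂ[X][X]) (m : ℕ) (γF γP : ℝ) (ω : ℂ), ‖ω‖ ≤ ρ →
      F.leadingCoeff.eval ω ≠ 0 → κ - ε / 2 ≤ γF →
      IsDirectionallySmall E Θ' F.natDegree γF F → IsDirectionallySmall E Θ' m γP P →
      m * Real.log ‖F.leadingCoeff.eval ω‖ + ((F.map (evalRingHom ω)).roots.map fun z =>
          Real.log (max ‖P.evalEval ω z‖ (Real.exp (-γP * m)))).sum ≤
        F.natDegree * (m * (ε - γP) + Real.log 2) := by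
  obtain ⟨Θ', hΘ', h⟩ := exists_sum_roots_log_max_le R S τ (κ + ε / 4) ρ Θ hR hS hτ₀ hρ
    (by positivity : 0 < ε / 4)
  refine ⟨Θ', hΘ', fun F P m γF γP ω hω hlc hγF hF hP =>
    (h E hE hτ hκ F P m γF γP ω hω hlc hF hP).trans ?_⟩
  calc _ ≤ (F.natDegree * m * (ε - γP) + F.natDegree * Real.log 2 : ℝ) := by gcongr; linarith
    _ = _ := by ring

theorem exp_le_prod_norm_sub_roots {F : ℂ[X][X]} {ω x : ℂ} {k : ℕ}
    (hlc₀ : F.leadingCoeff.eval ω ≠ 0)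
    (hlc : Real.log ‖F.leadingCoeff.eval ω‖ ≤ 2 * F.natDegree) (hk : k ≤ F.natDegree)
    (hx : Real.exp (-γ * F.natDegree) ≤ ‖F.evalEval ω x‖ * 2 ^ k) :
    Real.exp (-(γ + 3) * F.natDegree) ≤
      ((F.map (evalRingHom ω)).roots.map fun z => ‖x - z‖).prod := by
  set n := F.natDegree
  set p := ((F.map (evalRingHom ω)).roots.map fun z => ‖x - z‖).prod with hp
  have heval : ‖F.evalEval ω x‖ = ‖F.leadingCoeff.eval ω‖ * p := by
    rw [hp, ← norm_multiset_prod_map, ← norm_mul, ← map_evalRingHom_eval,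
      (IsAlgClosed.splits _).eval_eq_prod_roots,
      leadingCoeff_map_of_leadingCoeff_ne_zero _ hlc₀, coe_evalRingHom]
  have hp₀ : 0 ≤ p := by
    rw [hp, ← norm_multiset_prod_map]
    exact norm_nonneg _
  have hlc_exp : ‖F.leadingCoeff.eval ω‖ ≤ Real.exp (2 * n) :=
    (Real.log_le_iff_le_exp (norm_pos_iff.mpr hlc₀)).mp hlc
  have htwo : (2 : ℝ) ^ k ≤ Real.exp n := by
    calc (2 : ℝ) ^ k ≤ 2 ^ n := by gcongr; norm_num
      _ ≤ Real.exp 1 ^ n := by gcongr; linarith [Real.add_one_le_exp 1]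
      _ = Real.exp n := by rw [← Real.exp_nat_mul, mul_one]
  refine le_of_mul_le_mul_right ?_ (Real.exp_pos (2 * n + n))
  calc Real.exp (-(γ + 3) * n) * Real.exp (2 * n + n) = Real.exp (-γ * n) := by
        rw [← Real.exp_add]; ring_nf
    _ ≤ ‖F.leadingCoeff.eval ω‖ * p * 2 ^ k := heval ▸ hx
    _ ≤ Real.exp (2 * n) * p * Real.exp n := by gcongr
    _ = p * Real.exp (2 * n + n) := by rw [Real.exp_add]; ring

theorem log_norm_leadingCoeff_le {F : ℂ[X][X]} {ω : ℂ} {ε : ℝ} (hΘ : 1 ≤ Θ)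
    (h : ∀ (P : ℂ[X][X]) (m : ℕ) (γ : ℝ), IsDirectionallySmall E Θ m γ P →
      m * Real.log ‖F.leadingCoeff.eval ω‖ + ((F.map (evalRingHom ω)).roots.map fun z =>
          Real.log (max ‖P.evalEval ω z‖ (Real.exp (-γ * m)))).sum ≤
        F.natDegree * (m * (ε - γ) + Real.log 2)) :
    Real.log ‖F.leadingCoeff.eval ω‖ ≤ F.natDegree * (ε + 1) := by
  have hone := h 1 Θ 0 (.one E Θ)
  have : (1 : ℝ) ≤ Θ := mod_cast hΘ
  rw [← mul_le_mul_iff_right₀ (by linarith : (0 : ℝ) < Θ)]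
  simp only [evalEval_one, neg_zero, zero_mul, Real.exp_zero, norm_one, max_self, Real.log_one,
    Multiset.map_const', Multiset.sum_replicate, smul_zero, add_zero, sub_zero] at hone
  calc _ ≤ F.natDegree * (Θ * ε + Real.log 2) := hone
    _ ≤ F.natDegree * (Θ * ε + Θ) := by gcongr; linarith [Real.log_two_lt_d9]
    _ = _ := by ring

/-- The multiset `s` consists of the roots in `x` of a near-extremal polynomial at `w = ω`. -/
theorem exists_roots_sum_log_max_le {R S τ ρ : ℝ} (hR : 1 ≤ R) (hS : 1 ≤ S)
    (hE : E ⊆ closedBall 0 R ×ˢ closedBall 0 S) (hτ₀ : 0 ≤ τ) (hρ : 1 ≤ ρ)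
    (hτ : ChebyshevBound E τ) :
    ∃ Θ : ℕ → ℕ, ∀ (i : ℕ) (A : Finset ℂ), ∃ (ω : ℂ) (s : Multiset ℂ), ‖ω‖ = ρ ∧ s ≠ 0 ∧
      (∀ x ∈ A, Real.exp (-(τ + 3) * s.card) ≤ (s.map fun z => ‖x - z‖).prod) ∧
      ∀ k ≤ i, ∀ (P : ℂ[X][X]) (m : ℕ) (γ : ℝ), IsDirectionallySmall E (Θ k) m γ P →
        (s.map fun z => Real.log (max ‖P.evalEval ω z‖ (Real.exp (-γ * m)))).sum ≤
          s.card * (m * (1 / (k + 1) - γ) + Real.log 2) := by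
  obtain ⟨κ, hκτ, hκ⟩ :=
    exists_directional_exponent (R := R) (by linarith) (fun ζ hζ => by simpa using (hE hζ).1) hτ
  have hδ (k : ℕ) : (0 : ℝ) < 1 / (k + 1) := by positivity
  choose Θ₁ hΘ₁ using fun k : ℕ => (hκ (1 / (k + 1) / 4) (by linarith [hδ k])).2
  choose Θ hΘ hbound using fun k : ℕ => exists_sum_roots_log_max_le_of_exponent hR hS hE hτ₀
    (by linarith : 0 ≤ ρ) (hδ k) hτ (hΘ₁ k)
  refine ⟨Θ, fun i A => ?_⟩
  obtain ⟨F, ω, hω, hlc, hF, hA⟩ := exists_isDirectionallySmall_of_not_bound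
    ((hκ (1 / (i + 1) / 4) (by linarith [hδ i])).1
      ((Finset.range (i + 1)).sup Θ + A.card + 4 * (i + 1))) (by lia) hρ A
  have hlc₀ : F.leadingCoeff.eval ω ≠ 0 := norm_pos_iff.mp (by linarith)
  have hn : 4 * (i + 1) ≤ F.natDegree := by have := hF.le_degree; lia
  have hcard : (F.map (evalRingHom ω)).roots.card = F.natDegree := by
    rw [← (IsAlgClosed.splits _).natDegree_eq_card_roots,
      natDegree_map_of_leadingCoeff_ne_zero _ hlc₀]
  have hsum (k) (hk : k ≤ i) (P : ℂ[X][X]) (m : ℕ) (γ : ℝ)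
      (hP : IsDirectionallySmall E (Θ k) m γ P) := by
    have hΘk : Θ k ≤ (Finset.range (i + 1)).sup Θ := Finset.le_sup (Finset.mem_range.mpr (by lia))
    refine hbound k F P m _ γ ω hω.le hlc₀ ?_ (hF.anti_left (by lia)) hP
    have hlog : Real.log 2 / F.natDegree ≤ 1 / (i + 1) / 4 := by
      rw [div_div, mul_comm]
      gcongr
      · linarith [Real.log_two_lt_d9]
      · exact_mod_cast hn
    have hki : (1 : ℝ) / (i + 1) ≤ 1 / (k + 1) := by gcongr
    linarith
  refine ⟨ω, (F.map (evalRingHom ω)).roots, hω, ?_, fun x hx => ?_, fun k hk P m γ hP => ?_⟩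
  · rw [← Multiset.card_pos, hcard]
    lia
  · have hlog_lc := log_norm_leadingCoeff_le (hΘ 0) (hsum 0 i.zero_le)
    rw [Nat.cast_zero, zero_add, div_one, one_add_one_eq_two, mul_comm] at hlog_lc
    rw [hcard]
    refine le_trans ?_ (exp_le_prod_norm_sub_roots hlc₀ hlog_lc
      (by have := hF.le_degree; lia : A.card ≤ _) (hA x hx))
    have := hδ i
    gcongr
    linarith
  · rw [hcard]
    refine le_trans (le_add_of_nonneg_left ?_) (hsum k hk P m γ hP)
    exact mul_nonneg (Nat.cast_nonneg _) (Real.log_nonneg hlc)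

end ExtremalRoots

section EmpiricalMeasure

variable {α : Type*} [MeasurableSpace α]

/-- The uniform probability measure on the points of a nonempty multiset, counted with
multiplicity. -/
def empiricalMeasure (s : Multiset α) : Measure α :=
  (s.card : ENNReal)⁻¹ • (s.map Measure.dirac).sum

theorem isProbabilityMeasure_empiricalMeasure {s : Multiset α} (hs : s ≠ 0) :
    IsProbabilityMeasure (empiricalMeasure s) := by
  have hmass (s : Multiset α) : (s.map Measure.dirac).sum Set.univ = s.card := by
    induction s using Multiset.induction with
    | empty => simp
    | cons a s ih => simp [ih, add_comm]
  refine ⟨?_⟩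
  rw [empiricalMeasure, Measure.smul_apply, hmass, smul_eq_mul]
  exact ENNReal.inv_mul_cancel (by simpa using hs) (ENNReal.natCast_ne_top _)

variable [MeasurableSingletonClass α]

theorem integrable_and_integral_sum_dirac (s : Multiset α) (g : α → ℝ) :
    Integrable g (s.map Measure.dirac).sum ∧
      ∫ x, g x ∂(s.map Measure.dirac).sum = (s.map g).sum := by
  induction s using Multiset.induction with
  | empty => simp
  | cons a s ih =>
    have ha : Integrable g (Measure.dirac a) := integrable_dirac (by simp)
    simp only [Multiset.map_cons, Multiset.sum_cons]
    exact ⟨ha.add_measure ih.1, by rw [integral_add_measure ha ih.1, ih.2, integral_dirac]⟩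

theorem integrable_empiricalMeasure {s : Multiset α} (hs : s ≠ 0) (g : α → ℝ) :
    Integrable g (empiricalMeasure s) :=
  (integrable_and_integral_sum_dirac s g).1.smul_measure (by simpa using hs)

theorem integral_empiricalMeasure (s : Multiset α) (g : α → ℝ) :
    ∫ x, g x ∂empiricalMeasure s = (s.map g).sum / s.card := by
  rw [empiricalMeasure, integral_smul_measure, (integrable_and_integral_sum_dirac s g).2]
  simp [div_eq_inv_mul]

theorem ae_empiricalMeasure_of_forall_mem {s : Multiset α} {p : α → Prop} (hp : ∀ x ∈ s, p x) :
    ∀ᵐ x ∂empiricalMeasure s, p x := by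
  refine Measure.ae_smul_measure ?_ _
  induction s using Multiset.induction with
  | empty => simp
  | cons a s ih =>
    simp only [Multiset.map_cons, Multiset.sum_cons, ae_add_measure_iff]
    exact ⟨by simpa [ae_dirac_eq] using hp a (Multiset.mem_cons_self a s),
      ih fun x hx => hp x (Multiset.mem_cons_of_mem hx)⟩

end EmpiricalMeasure

section LogIntegralBound

variable {E : Set (ℂ × ℂ)} {Θ : ℕ} {ε ρ τ : ℝ} {ω : ℂ} {β : Measure ℂ}

/-- For every polynomial `P` which is at most `exp (-γ m)` on `E` in the direction of `x`, the
`β`-mean of `log |P(·, ω)|`, truncated from below at `-γ m`, is at most `m (ε - γ) + log 2`. -/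
def LogIntegralBound (E : Set (ℂ × ℂ)) (Θ : ℕ) (ε : ℝ) (ω : ℂ) (β : Measure ℂ) : Prop :=
  ∀ (P : ℂ[X][X]) (m : ℕ) (γ : ℝ), IsDirectionallySmall E Θ m γ P →
    ∫ z, Real.log (max ‖P.evalEval ω z‖ (Real.exp (-γ * m))) ∂β ≤ m * (ε - γ) + Real.log 2

theorem exists_logIntegralBound {R S : ℝ} (hR : 1 ≤ R) (hS : 1 ≤ S)
    (hE : E ⊆ closedBall 0 R ×ˢ closedBall 0 S) (hτ₀ : 0 ≤ τ) (hρ : 1 ≤ ρ)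
    (hτ : ChebyshevBound E τ) :
    ∃ Θ : ℕ → ℕ, ∀ (i : ℕ) (A : Finset ℂ), ∃ (ω : ℂ) (μ : Measure ℂ), ‖ω‖ = ρ ∧
      IsProbabilityMeasure μ ∧ (∀ g : ℂ → ℝ, Integrable g μ) ∧
      (∀ x ∈ A, (∀ᵐ z ∂μ, x ≠ z) ∧ -(τ + 3) ≤ ∫ z, Real.log ‖x - z‖ ∂μ) ∧
      ∀ k ≤ i, LogIntegralBound E (Θ k) (1 / (k + 1)) ω μ := by
  obtain ⟨Θ, h⟩ := exists_roots_sum_log_max_le hR hS hE hτ₀ hρ hτ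
  refine ⟨Θ, fun i A => ?_⟩
  obtain ⟨ω, s, hω, hs, hA, hsum⟩ := h i A
  have hcard : (0 : ℝ) < s.card := mod_cast Multiset.card_pos.mpr hs
  refine ⟨ω, empiricalMeasure s, hω, isProbabilityMeasure_empiricalMeasure hs,
    integrable_empiricalMeasure hs, fun x hx => ?_, fun k hk P m γ hP => ?_⟩
  · have hpos : 0 < (s.map fun z => ‖x - z‖).prod := (Real.exp_pos _).trans_le (hA x hx)
    have hne (z) (hz : z ∈ s) : ‖x - z‖ ≠ 0 := fun h0 =>
      hpos.ne' (Multiset.prod_eq_zero (Multiset.mem_map.mpr ⟨z, hz, h0⟩))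
    refine ⟨ae_empiricalMeasure_of_forall_mem fun z hz => by simpa [sub_eq_zero] using hne z hz, ?_⟩
    have hlog : Real.log (s.map fun z => ‖x - z‖).prod = (s.map fun z => Real.log ‖x - z‖).sum := by
      rw [Real.log_multiset_prod (by simpa [Multiset.mem_map] using hne), Multiset.map_map]
      rfl
    rw [integral_empiricalMeasure, le_div_iff₀ hcard, ← hlog, Real.le_log_iff_exp_le hpos]
    exact hA x hx
  · rw [integral_empiricalMeasure, div_le_iff₀' hcard]
    exact hsum k hk P m γ hP

theorem LogIntegralBound.integral_log_max_sub_log_le [IsProbabilityMeasure β]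
    (h : LogIntegralBound E Θ ε ω β) {p : ℂ[X]} {d : ℕ} (hd : 0 < d) (hp : p.natDegree ≤ d) {c : ℝ}
    (hc : 0 < c) (hE : ∀ ζ ∈ E, ‖p.eval ζ.1‖ ≤ c)
    (hint : Integrable (fun z => Real.log (max ‖p.eval z‖ c)) β) :
    ∫ z, (Real.log (max ‖p.eval z‖ c) - Real.log c) ∂β ≤ d * ε := by
  rw [integral_sub hint (integrable_const _), integral_const, probReal_univ, one_smul]
  set I := ∫ z, Real.log (max ‖p.eval z‖ c) ∂β
  have hle (N : ℕ) (hN : Θ + 1 ≤ N) : I - Real.log c ≤ d * ε + Real.log 2 * (1 / N) := by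
    have hN₀ : (0 : ℝ) < N := mod_cast (by lia : 0 < N)
    have hpow := h _ _ _ ((IsDirectionallySmall.map_C_pow hd hp hc hE N).anti_left (by lia))
    have hmax (z : ℂ) : Real.log (max (‖p.eval z‖ ^ N) (c ^ N)) =
        N * Real.log (max ‖p.eval z‖ c) := by
      rw [← Real.log_pow, pow_left_monotoneOn.map_max (norm_nonneg _) hc.le]
    simp only [exp_neg_neg_log_div_mul hc hd, evalEval_pow, evalEval_map_C, norm_pow, hmax,
      integral_const_mul] at hpow
    rw [← mul_le_mul_iff_right₀ hN₀]
    calc N * (I - Real.log c) = N * I - N * Real.log c := mul_sub _ _ _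
      _ ≤ (N * d : ℕ) * (ε - -Real.log c / d) + Real.log 2 - N * Real.log c := by gcongr
      _ = N * (d * ε + Real.log 2 * (1 / N)) := by push_cast; field_simp; ring
  have hlim : Tendsto (fun N : ℕ => d * ε + Real.log 2 * (1 / (N : ℝ))) atTop (𝓝 (d * ε)) := by
    simpa using (tendsto_one_div_atTop_nhds_zero_nat (𝕜 := ℝ)).const_mul (Real.log 2)
      |>.const_add (d * ε)
  exact ge_of_tendsto hlim (eventually_atTop.mpr ⟨Θ + 1, hle⟩)

end LogIntegralBound

section TruncatedLog

theorem continuous_log_max {α : Type*} [TopologicalSpace α] {g : α → ℝ} (hg : Continuous g) {c : ℝ}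
    (hc : 0 < c) : Continuous fun x => Real.log (max (g x) c) :=
  (hg.max continuous_const).log fun _ => (lt_max_of_lt_right hc).ne'

theorem log_max_le_add_abs_sub_div (a b : ℝ) {r : ℝ} (hr : 0 < r) :
    Real.log (max a r) ≤ Real.log (max b r) + |a - b| / r := by
  have hb : 0 < max b r := lt_max_of_lt_right hr
  have hmax : max a r ≤ max b r * (1 + |a - b| / r) := by
    have habs : |a - b| ≤ max b r * (|a - b| / r) := by
      rw [mul_div_assoc', le_div_iff₀ hr, mul_comm]
      gcongr
      exact le_max_right _ _
    rw [mul_add, mul_one]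
    refine max_le ?_ ?_
    · linarith [le_max_left b r, le_abs_self (a - b)]
    · linarith [le_max_right b r, abs_nonneg (a - b)]
  calc Real.log (max a r) ≤ Real.log (max b r * (1 + |a - b| / r)) :=
        Real.log_le_log (lt_max_of_lt_right hr) hmax
    _ = Real.log (max b r) + Real.log (1 + |a - b| / r) := Real.log_mul hb.ne' (by positivity)
    _ ≤ _ := by
      gcongr
      linarith [Real.log_le_sub_one_of_pos (by positivity : 0 < 1 + |a - b| / r)]

theorem log_max_norm_sub_le {F : Type*} [SeminormedAddCommGroup F] (x y z : F) {r : ℝ}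
    (hr : 0 < r) :
    Real.log (max ‖x - z‖ r) ≤ Real.log (max ‖y - z‖ r) + ‖x - y‖ / r := by
  refine (log_max_le_add_abs_sub_div _ ‖y - z‖ hr).trans ?_
  gcongr
  simpa using abs_norm_sub_norm_le (x - z) (y - z)

theorem log_le_log_max_norm {F : Type*} [SeminormedAddCommGroup F] (z : F) {R : ℝ} (hR : 0 < R) :
    Real.log R ≤ Real.log (max ‖z‖ R) :=
  Real.log_le_log hR (le_max_right _ _)

theorem continuous_evalEval {R : Type*} [CommSemiring R] [TopologicalSpace R]
    [IsTopologicalSemiring R] (P : R[X][X]) : Continuous fun p : R × R => P.evalEval p.1 p.2 := by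
  induction P using Polynomial.induction_on' with
  | add P Q hP hQ => simp only [evalEval_add]; exact hP.add hQ
  | monomial n a =>
    simp only [← C_mul_X_pow_eq_monomial, evalEval_mul, evalEval_C, evalEval_pow, evalEval_X]
    exact (a.continuous.comp continuous_fst).mul (continuous_snd.pow n)

end TruncatedLog

section WeakLimits

theorem exists_finset_subset_dist_lt_of_isCompact {α : Type*} [PseudoMetricSpace α] {K : Set α}
    (hK : IsCompact K) {r : ℝ} (hr : 0 < r) :
    ∃ A : Finset α, ↑A ⊆ K ∧ ∀ x ∈ K, ∃ y ∈ A, dist x y < r := by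
  obtain ⟨t, ht, hfin, hcover⟩ := hK.finite_cover_balls hr
  refine ⟨hfin.toFinset, by simpa using ht, fun x hx => ?_⟩
  simpa using hcover hx

theorem exists_tendsto_integral_of_isCompact {ι α : Type*} [TopologicalSpace α] [T2Space α]
    [MeasurableSpace α] [BorelSpace α] (U : Ultrafilter ι) {K : Set α} (hK : IsCompact K)
    (μ : ι → ProbabilityMeasure α) (hμ : ∀ i, (μ i : Measure α) Kᶜ = 0) :
    ∃ β : ProbabilityMeasure α, (β : Measure α) Kᶜ = 0 ∧ ∀ g : α → ℝ, Continuous g →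
      Tendsto (fun i => ∫ x, g x ∂(μ i : Measure α)) U (𝓝 (∫ x, g x ∂(β : Measure α))) := by
  have hcompact := isCompact_setOfPred_probabilityMeasure_mass_eq_compl_isCompact_le (u := 0)
    tendsto_const_nhds (fun _ : ℕ => hK) (.inr monotone_const)
  obtain ⟨β, hβ, hlim⟩ := hcompact.ultrafilter_le_nhds' (U.map μ)
    (Ultrafilter.mem_map.mpr (univ_mem' fun i => by simpa using hμ i))
  have hβK : (β : Measure α) Kᶜ = 0 := by simpa using hβ 0
  refine ⟨β, hβK, fun g hg => ?_⟩
  obtain ⟨M, hM⟩ := hK.exists_bound_of_continuousOn hg.continuousOn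
  have hclip (x : α) (hx : x ∈ K) : max (-M) (min M (g x)) = g x := by
    obtain ⟨hlow, hup⟩ := abs_le.mp (hM x hx)
    rw [min_eq_right hup, max_eq_right hlow]
  have hae {ν : ProbabilityMeasure α} (hν : (ν : Measure α) Kᶜ = 0) :
      ∫ x, max (-M) (min M (g x)) ∂(ν : Measure α) = ∫ x, g x ∂(ν : Measure α) :=
    integral_congr_ae ((measure_eq_zero_iff_ae_notMem.mp hν).mono
      fun x hx => hclip x (Set.notMem_compl_iff.mp hx))
  have hlim_clip := (ProbabilityMeasure.tendsto_iff_forall_integral_tendsto.mp hlim)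
    (.ofNormedAddCommGroup (fun x => max (-M) (min M (g x)))
      (continuous_const.max (continuous_const.min hg)) |M| fun x =>
        abs_le.mpr ⟨(neg_le_neg (le_abs_self M)).trans (le_max_left _ _),
          max_le (neg_le_abs M) ((min_le_left _ _).trans (le_abs_self M))⟩)
  simp only [BoundedContinuousFunction.coe_ofNormedAddCommGroup, hae hβK, hae (hμ _)] at hlim_clip
  exact hlim_clip

/-- The points outside the disc of radius `2R` are moved to its boundary point `2R`. -/
def truncate (R : ℝ) (z : ℂ) : ℂ :=
  if ‖z‖ ≤ 2 * R then z else (2 * R : ℝ)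

theorem measurable_truncate (R : ℝ) : Measurable (truncate R) :=
  .ite (measurableSet_le measurable_norm measurable_const) measurable_id measurable_const

theorem norm_truncate_le {R : ℝ} (hR : 0 ≤ R) (z : ℂ) : ‖truncate R z‖ ≤ 2 * R := by
  unfold truncate
  split_ifs with h
  · exact h
  · rw [Complex.norm_real, Real.norm_of_nonneg (by linarith)]

theorem exists_tendsto_integral_truncate {ι : Type*} (U : Ultrafilter ι) {R : ℝ} (hR : 0 ≤ R)
    (μ : ι → Measure ℂ) [∀ i, IsProbabilityMeasure (μ i)] :
    ∃ β : Measure ℂ, IsProbabilityMeasure β ∧ β (closedBall 0 (2 * R))ᶜ = 0 ∧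
      ∀ g : ℂ → ℝ, Continuous g →
        Tendsto (fun i => ∫ z, g (truncate R z) ∂μ i) U (𝓝 (∫ z, g z ∂β)) := by
  have hmeas (i : ι) := (measurable_truncate R).aemeasurable (μ := μ i)
  obtain ⟨β, hβR, hβ⟩ := exists_tendsto_integral_of_isCompact U
    (isCompact_closedBall (0 : ℂ) (2 * R))
    (fun i => ⟨(μ i).map (truncate R), Measure.isProbabilityMeasure_map (hmeas i)⟩) fun i => by
      rw [ProbabilityMeasure.coe_mk, Measure.map_apply (measurable_truncate R)
        isClosed_closedBall.measurableSet.compl]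
      convert measure_empty (μ := μ i)
      ext z
      simpa using norm_truncate_le hR z
  exact ⟨β, inferInstance, hβR, fun g hg =>
    (hβ g hg).congr fun i => integral_map (hmeas i) hg.aestronglyMeasurable⟩

theorem log_norm_sub_le_log_max_truncate {R : ℝ} (hR : 1 ≤ R) (r : ℝ) {x z : ℂ}
    (hx : ‖x‖ ≤ R) (hxz : x ≠ z) :
    Real.log ‖x - z‖ ≤ Real.log (max ‖x - truncate R z‖ r) + (Real.log (max ‖z‖ R) - Real.log R) +
      Real.log (2 * R) := by
  have hpos : 0 < ‖x - z‖ := norm_pos_iff.mpr (sub_ne_zero.mpr hxz)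
  have hlog : 0 ≤ Real.log (2 * R) := Real.log_nonneg (by linarith)
  unfold truncate
  split_ifs with h
  · linarith [Real.log_le_log hpos (le_max_left ‖x - z‖ r),
      log_le_log_max_norm z (by linarith : 0 < R)]
  · push Not at h
    have hfar : 1 ≤ ‖x - ((2 * R : ℝ) : ℂ)‖ := by
      have htri := norm_sub_norm_le ((2 * R : ℝ) : ℂ) x
      rw [norm_sub_rev, Complex.norm_real, Real.norm_of_nonneg (by linarith)] at htri
      linarith
    have hnonneg := Real.log_nonneg (hfar.trans (le_max_left _ r))
    have hle : Real.log ‖x - z‖ ≤ Real.log (2 * ‖z‖) :=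
      Real.log_le_log hpos ((norm_sub_le _ _).trans (by linarith))
    rw [max_eq_left (by linarith : R ≤ ‖z‖)]
    rw [Real.log_mul (by norm_num) (by linarith)] at hle ⊢
    linarith

theorem apply_truncate_le {R K b : ℝ} (hR : 0 < R) {g : ℂ → ℝ} (hg : ∀ z, b ≤ g z)
    (hK : g (2 * R : ℝ) ≤ b + K) (z : ℂ) :
    g (truncate R z) ≤ g z + K / Real.log 2 * (Real.log (max ‖z‖ R) - Real.log R) := by
  have hK₀ : 0 ≤ K := by linarith [hg (2 * R : ℝ)]
  have hlog : 0 < Real.log 2 := Real.log_pos (by norm_num)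
  have hnonneg : 0 ≤ Real.log (max ‖z‖ R) - Real.log R := sub_nonneg.mpr (log_le_log_max_norm z hR)
  unfold truncate
  split_ifs with h
  · exact le_add_of_nonneg_right (by positivity)
  · push Not at h
    have htwo : Real.log 2 ≤ Real.log (max ‖z‖ R) - Real.log R := by
      rw [le_sub_iff_add_le, ← Real.log_mul (by norm_num) hR.ne']
      exact Real.log_le_log (by linarith) (le_max_of_le_left h.le)
    calc g (2 * R : ℝ) ≤ b + K / Real.log 2 * Real.log 2 := by rwa [div_mul_cancel₀ _ hlog.ne']
      _ ≤ _ := by gcongr; exact hg z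

end WeakLimits

section LimitMeasure

/-- The logarithmic potential of `β` with the kernel truncated from below at `log r`. -/
def truncatedPotential (β : Measure ℂ) (r : ℝ) (x : ℂ) : ℝ :=
  ∫ z, Real.log (max ‖x - z‖ r) ∂β

variable {E : Set (ℂ × ℂ)} {R r : ℝ}

theorem le_integral_log_max_truncate {μ : Measure ℂ} [IsProbabilityMeasure μ]
    (hint : ∀ g : ℂ → ℝ, Integrable g μ) (hR : 1 ≤ R) (hr : 0 < r) {x y : ℂ} {b : ℝ} (hy : ‖y‖ ≤ R)
    (hxy : ‖y - x‖ ≤ r) (hne : ∀ᵐ z ∂μ, y ≠ z) (hb : b ≤ ∫ z, Real.log ‖y - z‖ ∂μ)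
    (hexcess : ∫ z, (Real.log (max ‖z‖ R) - Real.log R) ∂μ ≤ 1) :
    b - (2 + Real.log (2 * R)) ≤ ∫ z, Real.log (max ‖x - truncate R z‖ r) ∂μ := by
  have hmono : ∫ z, Real.log ‖y - z‖ ∂μ ≤ ∫ z, (Real.log (max ‖x - truncate R z‖ r) +
      (Real.log (max ‖z‖ R) - Real.log R) + (1 + Real.log (2 * R))) ∂μ := by
    refine integral_mono_ae (hint _) (hint _) (hne.mono fun z hz => ?_)
    have hlog := log_norm_sub_le_log_max_truncate hR r hy hz
    have hlip := log_max_norm_sub_le y x (truncate R z) hr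
    have hone : ‖y - x‖ / r ≤ 1 := (div_le_one hr).mpr hxy
    simp only
    linarith
  rw [integral_add (hint _) (hint _), integral_add (hint _) (hint _), integral_const, probReal_univ,
    one_smul] at hmono
  linarith

theorem LogIntegralBound.of_tendsto {ι : Type*} {l : Filter ι} [l.NeBot] {Θ : ℕ} {ε : ℝ}
    {ω : ι → ℂ} {ω₀ : ℂ} {μ : ι → Measure ℂ} [∀ i, IsProbabilityMeasure (μ i)] {β : Measure ℂ}
    (hint : ∀ i, ∀ g : ℂ → ℝ, Integrable g (μ i)) (hR : 0 < R) (hω : Tendsto ω l (𝓝 ω₀))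
    (hβ : ∀ g : ℂ → ℝ, Continuous g →
      Tendsto (fun i => ∫ z, g (truncate R z) ∂μ i) l (𝓝 (∫ z, g z ∂β)))
    (hexcess : Tendsto (fun i => ∫ z, (Real.log (max ‖z‖ R) - Real.log R) ∂μ i) l (𝓝 0))
    (h : ∀ᶠ i in l, LogIntegralBound E Θ ε (ω i) (μ i)) : LogIntegralBound E Θ ε ω₀ β := by
  intro P m γ hP
  set c := Real.exp (-γ * m)
  have hc : 0 < c := Real.exp_pos _
  set G : ℂ → ℂ → ℝ := fun w z => Real.log (max ‖P.evalEval w z‖ c)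
  have hG : Continuous G.uncurry := continuous_log_max (continuous_evalEval P).norm hc
  set K := G ω₀ (2 * R : ℝ) + 1 - Real.log c
  refine le_of_forall_pos_le_add fun δ hδ => ?_
  have hnear : ∀ᶠ w in 𝓝 ω₀, ∀ z ∈ closedBall (0 : ℂ) (2 * R), |G w z - G ω₀ z| < min δ 1 := by
    obtain ⟨v, hv, hvG⟩ := (isCompact_closedBall (0 : ℂ) (2 * R)).mem_uniformity_of_prod
      (f := G) (s := Set.univ) hG.continuousOn (Set.mem_univ ω₀)
      (dist_mem_uniformity (lt_min hδ one_pos))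
    rw [nhdsWithin_univ] at hv
    exact mem_of_superset hv hvG
  have hlim : Tendsto (fun i => m * (ε - γ) + Real.log 2 + δ + K / Real.log 2 *
      ∫ z, (Real.log (max ‖z‖ R) - Real.log R) ∂μ i) l (𝓝 (m * (ε - γ) + Real.log 2 + δ)) := by
    simpa using (hexcess.const_mul (K / Real.log 2)).const_add (m * (ε - γ) + Real.log 2 + δ)
  refine le_of_tendsto_of_tendsto (hβ (G ω₀) (hG.uncurry_left ω₀)) hlim ?_
  filter_upwards [h, hω.eventually hnear] with i hi hiG
  have hpoint (z : ℂ) : G ω₀ (truncate R z) ≤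
      G (ω i) z + δ + K / Real.log 2 * (Real.log (max ‖z‖ R) - Real.log R) := by
    have htrunc (z : ℂ) : truncate R z ∈ closedBall (0 : ℂ) (2 * R) := by
      simpa using norm_truncate_le hR.le z
    have hpole : G (ω i) (2 * R : ℝ) ≤ Real.log c + K := by
      have := (abs_lt.mp (hiG (2 * R : ℝ) (by simp [abs_of_pos hR]))).2
      linarith [min_le_right δ 1]
    have hgrow := apply_truncate_le hR
      (fun z => Real.log_le_log hc (le_max_right ‖P.evalEval (ω i) z‖ c)) hpole z
    linarith [(abs_lt.mp (hiG _ (htrunc z))).1, min_le_left δ 1]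
  refine (integral_mono (hint i _) (hint i _) hpoint).trans ?_
  rw [integral_add (hint i _) (hint i _), integral_add (hint i _) (hint i _), integral_const_mul,
    integral_const, probReal_univ, one_smul]
  gcongr
  exact hi P m γ hP

theorem LogIntegralBound.mono {Θ : ℕ} {ε ε' : ℝ} {ω : ℂ} {β : Measure ℂ}
    (h : LogIntegralBound E Θ ε ω β) (hε : ε ≤ ε') : LogIntegralBound E Θ ε' ω β :=
  fun P m γ hP => (h P m γ hP).trans (by gcongr)

theorem exists_measure_logIntegralBound {S τ ρ : ℝ} (hR : 1 ≤ R) (hS : 1 ≤ S)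
    (hE : E ⊆ closedBall 0 R ×ˢ closedBall 0 S) (hτ₀ : 0 ≤ τ) (hρ : 1 ≤ ρ)
    (hτ : ChebyshevBound E τ) {Y : Set ℂ} (hY : IsCompact Y) (hYR : Y ⊆ closedBall 0 R) :
    ∃ (β : Measure ℂ) (ω : ℂ), IsProbabilityMeasure β ∧ β (closedBall 0 (2 * R))ᶜ = 0 ∧ ‖ω‖ = ρ ∧
      (∃ b : ℝ, ∀ x ∈ Y, ∀ r ∈ Set.Ioc (0 : ℝ) 1, b ≤ truncatedPotential β r x) ∧
      ∀ ε > 0, ∃ Θ, LogIntegralBound E Θ ε ω β := by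
  obtain ⟨Θ, hΘ⟩ := exists_logIntegralBound hR hS hE hτ₀ hρ hτ
  have hR₀ : 0 < R := by linarith
  choose A hAY hA using fun i : ℕ =>
    exists_finset_subset_dist_lt_of_isCompact hY (by positivity : (0 : ℝ) < 1 / ((i : ℝ) + 1))
  choose ω μ hω hμ hint hpot hbound using fun i => hΘ i (A i)
  have hexcess (i : ℕ) : ∫ z, (Real.log (max ‖z‖ R) - Real.log R) ∂μ i ≤ 1 / (i + 1) := by
    simpa using (hbound i i le_rfl).integral_log_max_sub_log_le (p := X) one_pos natDegree_X_le hR₀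
      (fun ζ hζ => by simpa using (hE hζ).1) (hint i _)
  have hU : ((hyperfilter ℕ : Ultrafilter ℕ) : Filter ℕ) ≤ atTop := Nat.hyperfilter_le_atTop
  have hinv : Tendsto (fun i : ℕ => 1 / ((i : ℝ) + 1)) (hyperfilter ℕ) (𝓝 0) :=
    tendsto_one_div_add_atTop_nhds_zero_nat.mono_left hU
  have hexcess_lim := squeeze_zero (fun i => integral_nonneg (μ := μ i) fun z =>
    sub_nonneg.mpr (log_le_log_max_norm z hR₀)) hexcess hinv
  obtain ⟨ω₀, hω₀, hω_lim⟩ := (isCompact_sphere (0 : ℂ) ρ).ultrafilter_le_nhds'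
    ((hyperfilter ℕ).map ω) (Ultrafilter.mem_map.mpr (univ_mem' fun i => by simpa using hω i))
  obtain ⟨β, hβ, hβR, hβ_lim⟩ := exists_tendsto_integral_truncate (hyperfilter ℕ) hR₀.le μ
  refine ⟨β, ω₀, hβ, hβR, by simpa using hω₀,
    ⟨-(τ + 3) - (2 + Real.log (2 * R)), fun x hx r hr => ?_⟩, fun ε hε => ?_⟩
  · refine ge_of_tendsto (hβ_lim _ (continuous_log_max (by fun_prop) hr.1)) ?_
    filter_upwards [hinv.eventually (gt_mem_nhds hr.1)] with i hi
    obtain ⟨y, hy, hxy⟩ := hA i x hx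
    obtain ⟨hne, hlow⟩ := hpot i y hy
    exact le_integral_log_max_truncate (hint i) hR hr.1 (by simpa using hYR (hAY i hy))
      (by simpa only [← dist_eq_norm, dist_comm] using hxy.le.trans hi.le) hne hlow
      ((hexcess i).trans (hi.le.trans hr.2))
  · obtain ⟨k, hk⟩ := exists_nat_one_div_lt hε
    refine ⟨Θ k, .of_tendsto hint hR₀ hω_lim hβ_lim hexcess_lim ?_⟩
    filter_upwards [hU (eventually_ge_atTop k)] with i hi
    exact (hbound i k hi).mono hk.le

end LimitMeasure

section SupportOfTheLimit

theorem integrable_of_isCompact {α : Type*} [TopologicalSpace α] [T2Space α] [MeasurableSpace α]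
    [OpensMeasurableSpace α] {β : Measure α} [IsFiniteMeasureOnCompacts β] {K : Set α}
    (hK : IsCompact K) (hβ : β Kᶜ = 0) {g : α → ℝ} (hg : Continuous g) : Integrable g β := by
  rw [← Measure.restrict_eq_self_of_ae_mem (mem_ae_iff.mpr hβ)]
  exact hg.continuousOn.integrableOn_compact hK

variable {E : Set (ℂ × ℂ)} {K Y : Set ℂ} {ω : ℂ} {β : Measure ℂ} [IsProbabilityMeasure β]

theorem measure_setOf_lt_norm_eval_eq_zero (hK : IsCompact K) (hβ : β Kᶜ = 0)
    (hbound : ∀ ε > 0, ∃ Θ, LogIntegralBound E Θ ε ω β) {p : ℂ[X]} {c : ℝ} (hc : 0 < c)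
    (hp : ∀ ζ ∈ E, ‖p.eval ζ.1‖ ≤ c) : β {z | c < ‖p.eval z‖} = 0 := by
  have hcont := continuous_log_max p.continuous.norm hc
  have hint := integrable_of_isCompact hK hβ hcont
  have hnonneg (z : ℂ) : 0 ≤ Real.log (max ‖p.eval z‖ c) - Real.log c :=
    sub_nonneg.mpr (log_le_log_max_norm _ hc)
  have hle : ∫ z, (Real.log (max ‖p.eval z‖ c) - Real.log c) ∂β ≤ 0 := by
    refine le_of_forall_pos_le_add fun ε hε => ?_
    obtain ⟨Θ, hΘ⟩ := hbound (ε / (p.natDegree + 1 : ℕ)) (by positivity)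
    refine (hΘ.integral_log_max_sub_log_le (Nat.succ_pos _) (Nat.le_succ _) hc hp hint).trans ?_
    rw [mul_div_cancel₀ _ (by positivity), zero_add]
  have hae := (integral_eq_zero_iff_of_nonneg hnonneg (hint.sub (integrable_const _))).mp
    (hle.antisymm (integral_nonneg hnonneg))
  refine measure_mono_null (fun z (hz : c < _) => ?_) (ae_iff.mp hae)
  exact (sub_pos.mpr (Real.log_lt_log hc (lt_max_of_lt_left hz))).ne'

theorem exists_norm_eval_le_and_lt_of_notMem (hY : IsCompact Y)
    (hreal : Y ⊆ Set.range Complex.ofReal) {z : ℂ} (hz : z ∉ Y) :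
    ∃ (p : ℂ[X]) (c : ℝ), 0 < c ∧ (∀ x ∈ Y, ‖p.eval x‖ ≤ c) ∧ c < ‖p.eval z‖ := by
  rcases Y.eq_empty_or_nonempty with rfl | hne
  · exact ⟨1, 1 / 2, by norm_num, by simp, by norm_num⟩
  obtain ⟨M, hM⟩ := hY.exists_bound_of_continuousOn
    (f := fun x => (x - (z.re : ℂ)) ^ 2) (by fun_prop)
  set p : ℂ[X] := C ((M + 1 : ℝ) : ℂ) - (X - C (z.re : ℂ)) ^ 2
  have heval (t : ℝ) (ht : (t : ℂ) ∈ Y) : ‖p.eval (t : ℂ)‖ = M + 1 - (t - z.re) ^ 2 := by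
    have hle := hM t ht
    rw [← Complex.ofReal_sub, ← Complex.ofReal_pow, Complex.norm_real,
      Real.norm_of_nonneg (sq_nonneg _)] at hle
    have hcast : p.eval (t : ℂ) = (M + 1 - (t - z.re) ^ 2 : ℝ) := by simp [p]
    rw [hcast, Complex.norm_real, Real.norm_of_nonneg (by linarith)]
  have hevalz : p.eval z = (M + 1 + z.im ^ 2 : ℝ) := by
    have him : z - z.re = z.im * Complex.I := by apply Complex.ext <;> simp
    simp [p, him, mul_pow]
  obtain ⟨x, hx, hmax⟩ := hY.exists_isMaxOn hne p.continuous.norm.continuousOn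
  obtain ⟨t, rfl⟩ := hreal hx
  have hle := hM t hx
  rw [← Complex.ofReal_sub, ← Complex.ofReal_pow, Complex.norm_real,
    Real.norm_of_nonneg (sq_nonneg _)] at hle
  refine ⟨p, ‖p.eval (t : ℂ)‖, ?_, fun y hy => hmax hy, ?_⟩
  · rw [heval t hx]
    linarith
  · rw [heval t hx, hevalz, Complex.norm_real, Real.norm_of_nonneg (by nlinarith [sq_nonneg z.im])]
    have hpos : 0 < (t - z.re) ^ 2 + z.im ^ 2 := by
      refine (by positivity : 0 ≤ (t - z.re) ^ 2 + z.im ^ 2).lt_of_ne' fun h0 => hz ?_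
      convert hx
      apply Complex.ext <;> simp <;> nlinarith
    linarith

theorem measure_compl_eq_zero_of_logIntegralBound (hK : IsCompact K) (hβ : β Kᶜ = 0)
    (hbound : ∀ ε > 0, ∃ Θ, LogIntegralBound E Θ ε ω β) (hY : IsCompact Y)
    (hreal : Y ⊆ Set.range Complex.ofReal) (hE : ∀ ζ ∈ E, ζ.1 ∈ Y) : β Yᶜ = 0 := by
  refine measure_null_of_locally_null _ fun z hz => ?_
  obtain ⟨p, c, hc, hpY, hpz⟩ := exists_norm_eval_le_and_lt_of_notMem hY hreal hz
  exact ⟨_, mem_nhdsWithin_of_mem_nhds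
      ((isOpen_lt continuous_const p.continuous.norm).mem_nhds hpz),
    measure_setOf_lt_norm_eval_eq_zero hK hβ hbound hc fun ζ hζ => hpY _ (hE ζ hζ)⟩

end SupportOfTheLimit

section TruncatedPotential

theorem log_max_sub_log_max_anti {r s t t' : ℝ} (hs : 0 < s) (hsr : s ≤ r) (ht : t' ≤ t) :
    Real.log (max t r) - Real.log (max t s) ≤ Real.log (max t' r) - Real.log (max t' s) := by
  have hpos (u : ℝ) : 0 < max u s := lt_max_of_lt_right hs
  have hpos' (u : ℝ) : 0 < max u r := (hpos u).trans_le (max_le_max_left u hsr)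
  rw [← Real.log_div (hpos' t).ne' (hpos t).ne', ← Real.log_div (hpos' t').ne' (hpos t').ne']
  refine Real.log_le_log (div_pos (hpos' t) (hpos t)) ?_
  rw [div_le_div_iff₀ (hpos t) (hpos t')]
  rcases le_total r t with hrt | htr
  · rw [max_eq_left hrt, max_eq_left (hsr.trans hrt), mul_comm]
    exact mul_le_mul_of_nonneg_right (max_le_max_left t' hsr) ((hs.trans_le hsr).le.trans hrt)
  · rw [max_eq_right htr, max_eq_right (ht.trans htr)]
    exact mul_le_mul_of_nonneg_left (max_le_max_right s ht) (hs.le.trans hsr)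

variable {β : Measure ℂ} {K Y : Set ℂ} {r s : ℝ}

/-- The points of `Y` where truncating the kernel at `log r` changes the potential of `β` by at
most `η`. -/
def smallTruncationSet (β : Measure ℂ) (Y : Set ℂ) (η r : ℝ) : Set ℂ :=
  {z ∈ Y | ∀ s ∈ Set.Ioc 0 r, truncatedPotential β r z ≤ truncatedPotential β s z + η}

theorem smallTruncationSet_subset (β : Measure ℂ) (Y : Set ℂ) (η r : ℝ) :
    smallTruncationSet β Y η r ⊆ Y := fun _ hz => hz.1

theorem exists_mem_smallTruncationSet {η b : ℝ} (hη : 0 < η) {z : ℂ} (hz : z ∈ Y)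
    (hb : ∀ r ∈ Set.Ioc (0 : ℝ) 1, b ≤ truncatedPotential β r z) :
    ∃ r > 0, z ∈ smallTruncationSet β Y η r := by
  set S := (fun r => truncatedPotential β r z) '' Set.Ioc (0 : ℝ) 1
  have hS : BddBelow S := ⟨b, Set.forall_mem_image.mpr hb⟩
  obtain ⟨_, ⟨r, hr, rfl⟩, hlt⟩ :=
    exists_lt_of_csInf_lt (⟨_, 1, by simp, rfl⟩ : S.Nonempty) (lt_add_of_pos_right (sInf S) hη)
  refine ⟨r, hr.1, hz, fun s hs => hlt.le.trans ?_⟩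
  gcongr
  exact csInf_le hS ⟨s, ⟨hs.1, hs.2.trans hr.2⟩, rfl⟩

variable [IsProbabilityMeasure β]

theorem integrable_log_max_norm_sub (hY : IsCompact Y) (hβ : β Yᶜ = 0) (hr : 0 < r) (x : ℂ) :
    Integrable (fun z => Real.log (max ‖x - z‖ r)) β :=
  integrable_of_isCompact hY hβ (continuous_log_max (by fun_prop) hr)

theorem truncatedPotential_mono (hY : IsCompact Y) (hβ : β Yᶜ = 0) (hs : 0 < s) (hsr : s ≤ r)
    (x : ℂ) : truncatedPotential β s x ≤ truncatedPotential β r x :=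
  integral_mono (integrable_log_max_norm_sub hY hβ hs x)
    (integrable_log_max_norm_sub hY hβ (hs.trans_le hsr) x) fun _ =>
      Real.log_le_log (lt_max_of_lt_right hs) (max_le_max_left _ hsr)

theorem truncatedPotential_le_add (hY : IsCompact Y) (hβ : β Yᶜ = 0) (hr : 0 < r) (x y : ℂ) :
    truncatedPotential β r x ≤ truncatedPotential β r y + ‖x - y‖ / r := by
  have hint := integrable_log_max_norm_sub hY hβ hr
  have hle := integral_mono (hint x) ((hint y).add (integrable_const (‖x - y‖ / r)))
    fun z => log_max_norm_sub_le x y z hr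
  simpa [truncatedPotential, integral_add (hint y) (integrable_const _)] using hle

theorem continuous_truncatedPotential (hY : IsCompact Y) (hβ : β Yᶜ = 0) (hr : 0 < r) :
    Continuous (truncatedPotential β r) := by
  refine (LipschitzWith.of_le_add_mul (1 / r).toNNReal fun x y => ?_).continuous
  rw [Real.coe_toNNReal _ (by positivity), one_div_mul_eq_div, dist_eq_norm]
  exact truncatedPotential_le_add hY hβ hr x y

theorem isCompact_smallTruncationSet (hY : IsCompact Y) (hβ : β Yᶜ = 0) (η : ℝ) :
    IsCompact (smallTruncationSet β Y η r) := by
  rw [smallTruncationSet, Set.ofPred_and, Set.ofPred_forall]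
  simp only [Set.ofPred_forall]
  exact hY.inter_right <| isClosed_iInter fun s => isClosed_iInter fun hs => isClosed_le
    (continuous_truncatedPotential hY hβ (hs.1.trans_le hs.2))
    ((continuous_truncatedPotential hY hβ hs.1).add continuous_const)

theorem smallTruncationSet_anti (hY : IsCompact Y) (hβ : β Yᶜ = 0) (η : ℝ) (hs : 0 < s)
    (hsr : s ≤ r) : smallTruncationSet β Y η r ⊆ smallTruncationSet β Y η s := fun z hz =>
  ⟨hz.1, fun t ht => (truncatedPotential_mono hY hβ hs hsr z).trans
    (hz.2 t ⟨ht.1, ht.2.trans hsr⟩)⟩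

theorem exists_half_le_measureReal_smallTruncationSet (hY : IsCompact Y) (hβ : β Yᶜ = 0)
    {η b : ℝ} (hη : 0 < η) (hb : ∀ x ∈ Y, ∀ r ∈ Set.Ioc (0 : ℝ) 1, b ≤ truncatedPotential β r x) :
    ∃ r > 0, 1 / 2 ≤ β.real (smallTruncationSet β Y η r) := by
  set B := fun n : ℕ => smallTruncationSet β Y η (1 / (n + 1))
  have hmono : Monotone B := fun _ _ hnm =>
    smallTruncationSet_anti hY hβ η (by positivity) (by gcongr)
  have hcover : Y ⊆ ⋃ n, B n := fun z hz => by
    obtain ⟨r, hr, hzr⟩ := exists_mem_smallTruncationSet hη hz (hb z hz)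
    obtain ⟨n, hn⟩ := exists_nat_one_div_lt hr
    exact Set.mem_iUnion.mpr ⟨n, smallTruncationSet_anti hY hβ η (by positivity) hn.le hzr⟩
  have hfull : β (⋃ n, B n) = 1 := prob_le_one.antisymm <|
    ((prob_compl_eq_zero_iff hY.measurableSet).mp hβ).ge.trans (measure_mono hcover)
  have hlim := tendsto_measure_iUnion_atTop (μ := β) hmono
  rw [hfull] at hlim
  obtain ⟨n, hn⟩ := (hlim.eventually (lt_mem_nhds (by simp : (2⁻¹ : ENNReal) < 1))).exists
  refine ⟨1 / (n + 1), by positivity, ?_⟩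
  simpa [measureReal_def, B] using ENNReal.toReal_mono (measure_ne_top _ _) hn.le

theorem setIntegral_log_max_norm_sub_le (hY : IsCompact Y) (hβ : β Yᶜ = 0) (hK : MeasurableSet K)
    {ρ z : ℂ} (hz : ∀ ζ ∈ K, ‖z - ρ‖ ≤ ‖ζ - ρ‖) (hs : 0 < s) (hsr : s ≤ r) :
    ∫ ζ in K, (Real.log (max ‖ζ - ρ‖ r) - Real.log (max ‖ζ - ρ‖ s)) ∂β ≤
      truncatedPotential β (2 * r) z - truncatedPotential β (2 * s) z := by
  have hr : 0 < r := hs.trans_le hsr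
  have hint {t : ℝ} (ht : 0 < t) := integrable_log_max_norm_sub hY hβ (by positivity : 0 < 2 * t) z
  have hint' {t : ℝ} (ht : 0 < t) : Integrable (fun ζ => Real.log (max ‖ζ - ρ‖ t)) β := by
    simpa only [norm_sub_rev] using integrable_log_max_norm_sub hY hβ ht ρ
  have hscale {t : ℝ} (ht : 0 < t) (ζ : ℂ) :
      Real.log (max (‖z - ζ‖ / 2) t) = Real.log (max ‖z - ζ‖ (2 * t)) - Real.log 2 := by
    rw [← Real.log_div (lt_max_of_lt_right (by positivity)).ne' two_ne_zero,
      ← max_div_div_right zero_le_two, mul_div_cancel_left₀ _ two_ne_zero]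
  rw [truncatedPotential, truncatedPotential, ← integral_sub (hint hr) (hint hs)]
  refine (setIntegral_mono_on ((hint' hr).sub (hint' hs)).integrableOn
    ((hint hr).sub (hint hs)).integrableOn hK fun ζ hζ => ?_).trans
    (setIntegral_le_integral ((hint hr).sub (hint hs)) (.of_forall fun ζ => sub_nonneg.mpr ?_))
  · have hhalf : ‖z - ζ‖ / 2 ≤ ‖ζ - ρ‖ := by
      linarith [norm_sub_le_norm_sub_add_norm_sub z ρ ζ, hz ζ hζ, norm_sub_rev ζ ρ]
    refine (log_max_sub_log_max_anti hs hsr hhalf).trans_eq ?_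
    rw [Pi.sub_apply, hscale hr, hscale hs, sub_sub_sub_cancel_right]
  · exact Real.log_le_log (lt_max_of_lt_right (by positivity)) (max_le_max_left _ (by linarith))

theorem exists_isCompact_setIntegral_log_max_sub_le (hY : IsCompact Y) (hβ : β Yᶜ = 0) {η b : ℝ}
    (hη : 0 < η) (hb : ∀ x ∈ Y, ∀ r ∈ Set.Ioc (0 : ℝ) 1, b ≤ truncatedPotential β r x) :
    ∃ K ⊆ Y, IsCompact K ∧ 1 / 2 ≤ β.real K ∧ ∃ r > 0, ∀ ρ, ∀ s ∈ Set.Ioc 0 r,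
      ∫ ζ in K, (Real.log (max ‖ζ - ρ‖ r) - Real.log (max ‖ζ - ρ‖ s)) ∂β ≤ η := by
  obtain ⟨r, hr, hhalf⟩ := exists_half_le_measureReal_smallTruncationSet hY hβ hη hb
  have hcompact := isCompact_smallTruncationSet (r := r) hY hβ η
  refine ⟨_, smallTruncationSet_subset β Y η r, hcompact, hhalf, r / 2, by positivity,
    fun ρ s hs => ?_⟩
  have hne : (smallTruncationSet β Y η r).Nonempty := by
    by_contra! hempty
    norm_num [hempty] at hhalf
  obtain ⟨z, hz, hmin⟩ := hcompact.exists_isMinOn hne (f := fun z => ‖z - ρ‖) (by fun_prop)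
  refine (setIntegral_log_max_norm_sub_le hY hβ hcompact.measurableSet (fun _ h => hmin h)
    hs.1 hs.2).trans ?_
  rw [mul_div_cancel₀ r two_ne_zero, sub_le_iff_le_add']
  exact hz.2 (2 * s) ⟨by linarith [hs.1], by linarith [hs.2]⟩

end TruncatedPotential

section RationalApproximation

/-- The numerator `q(x) w - p(x)` of `w - p(x) / q(x)`, with `w` as the inner variable. -/
def linearForm {A : Type*} [CommRing A] (p q : A[X]) : A[X][X] :=
  q.map C * C X - p.map C

theorem evalEval_linearForm {A : Type*} [CommRing A] (p q : A[X]) (w x : A) :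
    (linearForm p q).evalEval w x = q.eval x * w - p.eval x := by
  simp only [linearForm, evalEval_sub, evalEval_mul, evalEval_map_C, evalEval_C, eval_X]

theorem natDegree_linearForm_le {A : Type*} [CommRing A] {p q : A[X]} {m : ℕ}
    (hp : p.natDegree ≤ m) (hq : q.natDegree ≤ m) : (linearForm p q).natDegree ≤ m :=
  (natDegree_sub_le _ _).trans (max_le
    ((natDegree_mul_C_le _ _).trans (natDegree_map_le.trans hq)) (natDegree_map_le.trans hp))

theorem innerDegreeLE_linearForm {A : Type*} [CommRing A] (p q : A[X]) :
    InnerDegreeLE (linearForm p q) 1 := fun i => by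
  rw [linearForm, coeff_sub, coeff_mul_C, coeff_map, coeff_map]
  exact (natDegree_sub_le _ _).trans
    (max_le ((natDegree_C_mul_le _ _).trans natDegree_X_le) (by simp))

/-- The rational function `p / q` of degree at most `m` approximates `w` on the points `(x, w)` of
`E` with error at most `exp (-a m)`. -/
structure IsRationalApprox (E : Set (ℂ × ℂ)) (m : ℕ) (a : ℝ) (p q : ℂ[X]) : Prop where
  natDegree_num_le : p.natDegree ≤ m
  natDegree_den_le : q.natDegree ≤ m
  den_ne_zero : ∀ ζ ∈ E, q.eval ζ.1 ≠ 0
  norm_sub_le : ∀ ζ ∈ E, ‖q.eval ζ.1 * ζ.2 - p.eval ζ.1‖ ≤ Real.exp (-a * m) * ‖q.eval ζ.1‖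

namespace IsRationalApprox

variable {E E' : Set (ℂ × ℂ)} {m : ℕ} {a : ℝ} {p q : ℂ[X]}

theorem mono_set (h : IsRationalApprox E m a p q) (hE : E' ⊆ E) : IsRationalApprox E' m a p q where
  natDegree_num_le := h.natDegree_num_le
  natDegree_den_le := h.natDegree_den_le
  den_ne_zero ζ hζ := h.den_ne_zero ζ (hE hζ)
  norm_sub_le ζ hζ := h.norm_sub_le ζ (hE hζ)

theorem C_mul (h : IsRationalApprox E m a p q) {c : ℂ} (hc : c ≠ 0) :
    IsRationalApprox E m a (C c * p) (C c * q) where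
  natDegree_num_le := (natDegree_C_mul_le _ _).trans h.natDegree_num_le
  natDegree_den_le := (natDegree_C_mul_le _ _).trans h.natDegree_den_le
  den_ne_zero ζ hζ := by simpa [hc] using h.den_ne_zero ζ hζ
  norm_sub_le ζ hζ := by
    simp only [eval_mul, eval_C, mul_assoc, ← mul_sub, norm_mul]
    rw [mul_left_comm]
    gcongr
    exact h.norm_sub_le ζ hζ

theorem isDirectionallySmall (h : IsRationalApprox E m a p q) {Θ : ℕ} (hΘ : Θ ≤ m) {L : ℝ}
    (hL : ∀ ζ ∈ E, Real.log ‖q.eval ζ.1‖ ≤ m * L) :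
    IsDirectionallySmall E Θ m (a - L) (linearForm p q) where
  le_degree := hΘ
  natDegree_le := natDegree_linearForm_le h.natDegree_num_le h.natDegree_den_le
  exists_innerDegreeLE := ⟨1, innerDegreeLE_linearForm p q, by simpa using hΘ⟩
  norm_le ζ hζ := by
    have hq := norm_pos_iff.mpr (h.den_ne_zero ζ hζ)
    rw [evalEval_linearForm]
    calc ‖q.eval ζ.1 * ζ.2 - p.eval ζ.1‖ ≤ Real.exp (-a * m) * ‖q.eval ζ.1‖ := h.norm_sub_le ζ hζ
      _ ≤ Real.exp (-a * m) * Real.exp (m * L) := by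
        gcongr
        exact (Real.log_le_iff_le_exp hq).mp (hL ζ hζ)
      _ = Real.exp (-(a - L) * m) := by rw [← Real.exp_add]; ring_nf

theorem norm_den_le_norm_evalEval (h : IsRationalApprox E m a p q) (ha : 0 ≤ a) {ζ : ℂ × ℂ}
    (hζ : ζ ∈ E) {ω : ℂ} (hω : ‖ζ.2‖ + 2 ≤ ‖ω‖) :
    ‖q.eval ζ.1‖ ≤ ‖(linearForm p q).evalEval ω ζ.1‖ := by
  have hexp : Real.exp (-a * m) ≤ 1 := Real.exp_le_one_iff.mpr (by
    simp only [neg_mul, Left.neg_nonpos_iff]; positivity)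
  have hω' : 2 ≤ ‖ω - ζ.2‖ := by linarith [norm_sub_norm_le ω ζ.2]
  have hsplit : (linearForm p q).evalEval ω ζ.1 =
      q.eval ζ.1 * (ω - ζ.2) + (q.eval ζ.1 * ζ.2 - p.eval ζ.1) := by
    rw [evalEval_linearForm]; ring
  have htri := norm_sub_le_norm_add (q.eval ζ.1 * (ω - ζ.2)) (q.eval ζ.1 * ζ.2 - p.eval ζ.1)
  rw [← hsplit, norm_mul] at htri
  nlinarith [h.norm_sub_le ζ hζ, norm_nonneg (q.eval ζ.1)]

end IsRationalApprox

theorem setIntegral_truncatedPotential_le {β ν : Measure ℂ} [IsProbabilityMeasure β]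
    [IsProbabilityMeasure ν] {B K Y : Set ℂ} (hY : IsCompact Y) (hβ : β Yᶜ = 0) (hB : IsCompact B)
    (hν : ν Bᶜ = 0) {η r s : ℝ} (hr : 0 < r) (hs : 0 < s)
    (h : ∀ ρ, ∫ ζ in K, (Real.log (max ‖ζ - ρ‖ r) - Real.log (max ‖ζ - ρ‖ s)) ∂β ≤ η) :
    ∫ ζ in K, truncatedPotential ν r ζ ∂β ≤ ∫ ζ in K, truncatedPotential ν s ζ ∂β + η := by
  have hcont {t : ℝ} (ht : 0 < t) : Continuous fun z : ℂ × ℂ => Real.log (max ‖z.1 - z.2‖ t) :=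
    continuous_log_max (by fun_prop) ht
  have hnull : (β.prod ν) (Y ×ˢ B)ᶜ = 0 := by
    rw [Set.compl_prod_eq_union, measure_union_null_iff]
    simp [Measure.prod_prod, hβ, hν]
  have hint : Integrable (fun z : ℂ × ℂ => Real.log (max ‖z.1 - z.2‖ r) -
      Real.log (max ‖z.1 - z.2‖ s)) ((β.restrict K).prod ν) :=
    (integrable_of_isCompact (hY.prod hB) hnull ((hcont hr).sub (hcont hs))).mono_measure
      (Measure.prod_mono Measure.restrict_le_self le_rfl)
  have hpot {t : ℝ} (ht : 0 < t) : IntegrableOn (truncatedPotential ν t) K β :=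
    (integrable_of_isCompact hY hβ (continuous_truncatedPotential hB hν ht)).integrableOn
  rw [← sub_le_iff_le_add', ← integral_sub (hpot hr) (hpot hs)]
  calc ∫ ζ in K, (truncatedPotential ν r ζ - truncatedPotential ν s ζ) ∂β
      = ∫ ζ in K, ∫ ρ, (Real.log (max ‖ζ - ρ‖ r) - Real.log (max ‖ζ - ρ‖ s)) ∂ν ∂β := by
        refine integral_congr_ae (.of_forall fun ζ => (integral_sub ?_ ?_).symm)
        exacts [integrable_log_max_norm_sub hB hν hr ζ, integrable_log_max_norm_sub hB hν hs ζ]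
    _ = ∫ ρ, ∫ ζ in K, (Real.log (max ‖ζ - ρ‖ r) - Real.log (max ‖ζ - ρ‖ s)) ∂β ∂ν :=
        integral_integral_swap hint
    _ ≤ ∫ _, η ∂ν := integral_mono hint.integral_prod_right (integrable_const η) h
    _ = η := by simp

/-- On `Y`, the function `log |q| / m` and the potential of `ν` truncated at `log r` stay in a
narrow band around `s`. -/
structure IsPotentialBand (Y : Set ℂ) (m : ℕ) (s η r : ℝ) (ν : Measure ℂ) (q : ℂ[X]) : Prop where
  log_norm_eval_le : ∀ x ∈ Y, Real.log ‖q.eval x‖ ≤ m * (s + 2 * η)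
  exists_le_log_norm_eval : ∃ t ∈ Set.Ioc 0 r, ∀ x ∈ Y,
    m * (truncatedPotential ν t x - η) ≤ Real.log ‖q.eval x‖
  le_truncatedPotential : ∀ x ∈ Y, s - η ≤ truncatedPotential ν r x

theorem LogIntegralBound.setIntegral_le {E : Set (ℂ × ℂ)} {Θ : ℕ} {ε : ℝ} {ω : ℂ} {β : Measure ℂ}
    [IsProbabilityMeasure β] (h : LogIntegralBound E Θ ε ω β) {Y : Set ℂ} (hY : IsCompact Y)
    (hβ : β Yᶜ = 0) {P : ℂ[X][X]} {m : ℕ} {γ : ℝ} (hP : IsDirectionallySmall E Θ m γ P)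
    (K : Set ℂ) :
    ∫ z in K, (Real.log (max ‖P.evalEval ω z‖ (Real.exp (-γ * m))) + γ * m) ∂β ≤
      m * ε + Real.log 2 := by
  have hint : Integrable (fun z => Real.log (max ‖P.evalEval ω z‖ (Real.exp (-γ * m)))) β :=
    integrable_of_isCompact hY hβ (continuous_log_max
      ((continuous_evalEval P).comp (by fun_prop : Continuous fun z => (ω, z))).norm
      (Real.exp_pos _))
  refine (setIntegral_le_integral (hint.add (integrable_const (γ * m)))
    (.of_forall fun z => ?_)).trans ?_
  · have hlow :=
      Real.log_le_log (Real.exp_pos _) (le_max_right ‖P.evalEval ω z‖ (Real.exp (-γ * m)))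
    rw [Real.log_exp] at hlow
    simp only [Pi.zero_apply, Pi.add_apply]
    linarith
  · simp only [Pi.add_apply]
    rw [integral_add hint (integrable_const _), integral_const, probReal_univ, one_smul]
    linarith [h P m γ hP]

section BandContradiction

variable {E : Set (ℂ × ℂ)} {m : ℕ} {a s η r : ℝ} {p q : ℂ[X]} {β ν : Measure ℂ}
  [IsProbabilityMeasure β] [IsProbabilityMeasure ν] {K : Set ℂ}

theorem LogIntegralBound.measureReal_mul_le {Θ : ℕ} {ω : ℂ} (h : LogIntegralBound E Θ η ω β)
    (hY : IsCompact (Prod.fst '' E)) (hβ : β (Prod.fst '' E)ᶜ = 0)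
    (hω : ∀ ζ ∈ E, ‖ζ.2‖ + 2 ≤ ‖ω‖) (hK : IsCompact K) (hKE : K ⊆ Prod.fst '' E) (hr : 0 < r)
    (hconc : ∀ ρ, ∀ t ∈ Set.Ioc 0 r,
      ∫ ζ in K, (Real.log (max ‖ζ - ρ‖ r) - Real.log (max ‖ζ - ρ‖ t)) ∂β ≤ η)
    {B : Set ℂ} (hB : IsCompact B) (hν : ν Bᶜ = 0) (ha : 0 ≤ a)
    (happrox : IsRationalApprox E m a p q)
    (hband : IsPotentialBand (Prod.fst '' E) m s η r ν q) (hΘ : Θ ≤ m) :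
    m * (β.real K * (a - 4 * η)) ≤ 2 * (m * η) + Real.log 2 := by
  obtain ⟨t, ht, hlow⟩ := hband.exists_le_log_norm_eval
  set P := linearForm p q
  set γ := a - (s + 2 * η) with hγ
  have hpot {u : ℝ} (hu : 0 < u) : IntegrableOn (truncatedPotential ν u) K β :=
    (integrable_of_isCompact hY hβ (continuous_truncatedPotential hB hν hu)).integrableOn
  have hband_int : β.real K * (s - η) ≤ ∫ x in K, truncatedPotential ν r x ∂β := by
    simpa using setIntegral_mono_on (integrable_const (s - η)) (hpot hr) hK.measurableSet
      fun x hx => hband.le_truncatedPotential x (hKE hx)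
  have hconc_int := setIntegral_truncatedPotential_le hY hβ hB hν hr ht.1 (hconc · t ht)
  have hP_int : Integrable (fun x => Real.log (max ‖P.evalEval ω x‖ (Real.exp (-γ * m)))) β :=
    integrable_of_isCompact hY hβ (continuous_log_max
      ((continuous_evalEval P).comp (by fun_prop : Continuous fun x => (ω, x))).norm
      (Real.exp_pos _))
  have hlow_int : ∫ x in K, (m * truncatedPotential ν t x + m * (γ - η)) ∂β ≤
      ∫ x in K, (Real.log (max ‖P.evalEval ω x‖ (Real.exp (-γ * m))) + γ * m) ∂β := by
    refine setIntegral_mono_on (((hpot ht.1).const_mul _).add (integrable_const _))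
      (hP_int.add (integrable_const _)).integrableOn hK.measurableSet fun x hx => ?_
    obtain ⟨ζ, hζ, rfl⟩ := hKE hx
    have hlog := Real.log_le_log (norm_pos_iff.mpr (happrox.den_ne_zero ζ hζ))
      ((happrox.norm_den_le_norm_evalEval ha hζ (hω ζ hζ)).trans
        (le_max_left _ (Real.exp (-γ * m))))
    linarith [hlow ζ.1 ⟨ζ, hζ, rfl⟩]
  have hupper := h.setIntegral_le hY hβ (happrox.isDirectionallySmall hΘ fun ζ hζ =>
    hband.log_norm_eval_le ζ.1 ⟨ζ, hζ, rfl⟩) K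
  rw [integral_add ((hpot ht.1).const_mul _) (integrable_const _), integral_const_mul] at hlow_int
  simp only [integral_const, measureReal_restrict_apply_univ, smul_eq_mul] at hlow_int
  have hcast : (0 : ℝ) ≤ m := m.cast_nonneg
  have hgap : β.real K * (a - 4 * η) - η ≤
      ∫ x in K, truncatedPotential ν t x ∂β + β.real K * (γ - η) := by
    rw [hγ]; linarith
  linarith [mul_le_mul_of_nonneg_left hgap hcast]

end BandContradiction

theorem ChebyshevBound.mono {𝕜 : Type*} [NormedField 𝕜] {E : Set (𝕜 × 𝕜)} {τ τ' : ℝ}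
    (h : ChebyshevBound E τ) (hτ : τ ≤ τ') : ChebyshevBound E τ' := fun D F hD hmonic hdeg hinner =>
  (h D F hD hmonic hdeg hinner).imp fun _ hζ => ⟨hζ.1, hζ.2.trans_le' (by gcongr)⟩

theorem not_chebyshevBound_of_isPotentialBand {E : Set (ℂ × ℂ)} {R S a s η τ : ℝ}
    (hE : E ⊆ closedBall 0 R ×ˢ closedBall 0 S) (hY : IsCompact (Prod.fst '' E))
    (hreal : Prod.fst '' E ⊆ Set.range Complex.ofReal) (hη : 0 < η) (ha : 10 * η < a)
    (h : ∀ r > 0, ∀ N : ℕ, ∃ m ≥ N, ∃ ν : Measure ℂ, IsProbabilityMeasure ν ∧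
      (∃ B, IsCompact B ∧ ν Bᶜ = 0) ∧ ∃ p q : ℂ[X],
        IsRationalApprox E m a p q ∧ IsPotentialBand (Prod.fst '' E) m s η r ν q) :
    ¬ ChebyshevBound E τ := by
  intro hτ
  set R' := max R 1
  set S' := max S 1
  have hE' : E ⊆ closedBall 0 R' ×ˢ closedBall 0 S' := hE.trans (Set.prod_mono
    (closedBall_subset_closedBall (le_max_left _ _))
    (closedBall_subset_closedBall (le_max_left _ _)))
  have hYR : Prod.fst '' E ⊆ closedBall 0 R' := Set.image_subset_iff.mpr fun ζ hζ => (hE' hζ).1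
  have hS' : 1 ≤ S' := le_max_right _ _
  obtain ⟨β, ω, hβprob, hβball, hω, ⟨b, hb⟩, hbound⟩ := exists_measure_logIntegralBound
    (le_max_right R 1) hS' hE' (le_max_right τ 0) (by linarith : 1 ≤ S' + 2)
    (hτ.mono (le_max_left τ 0)) hY hYR
  have hβ : β (Prod.fst '' E)ᶜ = 0 := measure_compl_eq_zero_of_logIntegralBound
    (isCompact_closedBall _ _) hβball hbound hY hreal fun ζ hζ => ⟨ζ, hζ, rfl⟩
  obtain ⟨K, hKE, hK, hhalf, r, hr, hconc⟩ :=
    exists_isCompact_setIntegral_log_max_sub_le hY hβ hη hb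
  obtain ⟨Θ, hΘ⟩ := hbound η hη
  obtain ⟨N, hN⟩ := exists_nat_ge (Real.log 2 / η)
  obtain ⟨m, hm, ν, hν, ⟨B, hB, hνB⟩, p, q, happrox, hband⟩ := h r hr (max (max N Θ) 1)
  have hωE : ∀ ζ ∈ E, ‖ζ.2‖ + 2 ≤ ‖ω‖ := fun ζ hζ => by
    rw [hω]; linarith [mem_closedBall_zero_iff.mp (hE' hζ).2]
  have hkey := hΘ.measureReal_mul_le hY hβ hωE hK hKE hr hconc hB hνB (by linarith) happrox hband
    ((le_max_right N Θ).trans ((le_max_left _ _).trans hm))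
  have hlog : Real.log 2 ≤ m * η := by
    rw [← div_le_iff₀ hη]
    exact hN.trans (by exact_mod_cast (le_max_left N Θ).trans ((le_max_left _ _).trans hm))
  have hmpos : (0 : ℝ) < m := by exact_mod_cast (le_max_right _ 1).trans hm
  have hcancel : β.real K * (a - 4 * η) ≤ 3 * η := by
    refine le_of_mul_le_mul_left ?_ hmpos
    linarith
  nlinarith

end RationalApproximation

section ZeroDistribution

theorem abs_log_norm_sub_sub_log_norm_le {F : Type*} [SeminormedAddCommGroup F] {x ρ : F}
    (h : ‖x‖ < ‖ρ‖) : |Real.log ‖x - ρ‖ - Real.log ‖ρ‖| ≤ ‖x‖ / (‖ρ‖ - ‖x‖) := by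
  have hr : 0 < ‖ρ‖ - ‖x‖ := sub_pos.mpr h
  have hle : ‖ρ‖ - ‖x‖ ≤ ‖x - ρ‖ := norm_sub_rev x ρ ▸ norm_sub_norm_le ρ x
  have hxρ := log_max_norm_sub_le x 0 ρ hr
  have hρx := log_max_norm_sub_le 0 x ρ hr
  have hle' : ‖ρ‖ - ‖x‖ ≤ ‖ρ‖ := sub_le_self _ (norm_nonneg x)
  simp only [zero_sub, norm_neg, sub_zero, max_eq_left hle, max_eq_left hle'] at hxρ hρx
  exact abs_sub_le_iff.mpr ⟨by linarith, by linarith⟩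

theorem abs_log_norm_sub_sub_log_norm_le_of_add_div_le {F : Type*} [SeminormedAddCommGroup F]
    {R η : ℝ} (hR : 0 < R) (hη : 0 < η) {x ρ : F} (hx : ‖x‖ ≤ R) (hρ : R + R / η ≤ ‖ρ‖) :
    |Real.log ‖x - ρ‖ - Real.log ‖ρ‖| ≤ η := by
  have hpos : 0 < R / η := by positivity
  have hgap : R / η ≤ ‖ρ‖ - ‖x‖ := by linarith
  refine (abs_log_norm_sub_sub_log_norm_le (by linarith)).trans ?_
  calc ‖x‖ / (‖ρ‖ - ‖x‖) ≤ R / (R / η) := by gcongr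
    _ = η := by field_simp

theorem log_norm_eval_eq_add_sum_roots {𝕜 : Type*} [NormedField 𝕜] {q : 𝕜[X]} (hq : q.Splits)
    {x : 𝕜} (hx : q.eval x ≠ 0) : Real.log ‖q.eval x‖ =
      Real.log ‖q.leadingCoeff‖ + (q.roots.map fun ρ => Real.log ‖x - ρ‖).sum := by
  have hroot (ρ) (hρ : ρ ∈ q.roots) : ‖x - ρ‖ ≠ 0 := fun h =>
    hx (sub_eq_zero.mp (norm_eq_zero.mp h) ▸ isRoot_of_mem_roots hρ)
  have hlead : q.leadingCoeff ≠ 0 := fun h => hx (by simp [leadingCoeff_eq_zero.mp h])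
  have hprod : (q.roots.map fun ρ => ‖x - ρ‖).prod ≠ 0 := Multiset.prod_ne_zero (by
    rw [Multiset.mem_map]
    exact fun ⟨ρ, hρ, h⟩ => hroot ρ hρ h)
  rw [hq.eval_eq_prod_roots, norm_mul, norm_multiset_prod_map,
    Real.log_mul (norm_ne_zero_iff.mpr hlead) hprod,
    Real.log_multiset_prod fun _ h h0 => hprod (Multiset.prod_eq_zero (h0 ▸ h)), Multiset.map_map]
  rfl

/-- A point of large modulus is moved to the circle of radius `R + R / η`; up to the constant `c`
this hardly changes `log |x - z|` on the disc of radius `R`. -/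
theorem exists_abs_log_norm_sub_add_sub_le {R η : ℝ} (hR : 0 < R) (hη : 0 < η) (z : ℂ) :
    ∃ (c : ℝ) (ρ : ℂ), ‖ρ‖ ≤ R + R / η ∧ (ρ = z ∨ R < ‖ρ‖) ∧ ∀ x : ℂ, ‖x‖ ≤ R →
      |Real.log ‖x - z‖ + c - Real.log ‖x - ρ‖| ≤ 2 * η := by
  by_cases hz : ‖z‖ ≤ R + R / η
  · refine ⟨0, z, hz, .inl rfl, fun x _ => ?_⟩
    rw [add_zero, sub_self, abs_zero]
    positivity
  set ρ : ℂ := ((R + R / η : ℝ) : ℂ)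
  have hρ : ‖ρ‖ = R + R / η := Complex.norm_of_nonneg (by positivity)
  have hpos : 0 < R / η := by positivity
  refine ⟨Real.log ‖ρ‖ - Real.log ‖z‖, ρ, hρ.le, .inr (by linarith), fun x hx => ?_⟩
  have hmoved := abs_le.mp
    (abs_log_norm_sub_sub_log_norm_le_of_add_div_le hR hη hx (not_le.mp hz).le)
  have hpad := abs_le.mp (abs_log_norm_sub_sub_log_norm_le_of_add_div_le hR hη hx hρ.ge)
  exact abs_le.mpr ⟨by linarith, by linarith⟩

/-- The points missing when `s` has fewer than `m` elements are added on the circle of radius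
`R + R / η`, where they act almost like constants. -/
theorem exists_multiset_abs_sum_log_norm_sub_le {R η : ℝ} (hR : 0 < R) (hη : 0 < η)
    {s : Multiset ℂ} {m : ℕ} (hm : s.card ≤ m) :
    ∃ (L : ℝ) (σ : Multiset ℂ), σ.card = m ∧ (∀ ρ ∈ σ, ‖ρ‖ ≤ R + R / η) ∧
      (∀ ρ ∈ σ, ρ ∈ s ∨ R < ‖ρ‖) ∧ ∀ x : ℂ, ‖x‖ ≤ R →
        |(s.map fun ρ => Real.log ‖x - ρ‖).sum + L - (σ.map fun ρ => Real.log ‖x - ρ‖).sum| ≤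
          m * (2 * η) := by
  induction s using Multiset.induction generalizing m with
  | empty =>
    set ρ : ℂ := ((R + R / η : ℝ) : ℂ)
    have hρ : ‖ρ‖ = R + R / η := Complex.norm_of_nonneg (by positivity)
    have hmem (ρ') (hρ' : ρ' ∈ Multiset.replicate m ρ) : ‖ρ'‖ = R + R / η := by
      rw [Multiset.eq_of_mem_replicate hρ', hρ]
    refine ⟨m * Real.log ‖ρ‖, Multiset.replicate m ρ, Multiset.card_replicate _ _,
      fun ρ' hρ' => (hmem ρ' hρ').le, fun ρ' hρ' => .inr ?_, fun x hx => ?_⟩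
    · rw [hmem ρ' hρ']
      exact lt_add_of_pos_right R (by positivity)
    · rw [Multiset.map_zero, Multiset.sum_zero, zero_add, Multiset.map_replicate,
        Multiset.sum_replicate, nsmul_eq_mul, ← mul_sub, abs_mul, Nat.abs_cast, abs_sub_comm]
      gcongr
      linarith [abs_log_norm_sub_sub_log_norm_le_of_add_div_le hR hη hx hρ.ge]
  | cons z s ih =>
    obtain ⟨m, rfl⟩ := Nat.exists_eq_add_one.mpr ((Nat.succ_pos _).trans_le
      (Multiset.card_cons z s ▸ hm))
    obtain ⟨L, σ, rfl, hσR, hσ, hsum⟩ := ih (by simpa using hm)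
    obtain ⟨c, ρ, hρR, hρ, hz⟩ := exists_abs_log_norm_sub_add_sub_le hR hη z
    refine ⟨L + c, ρ ::ₘ σ, Multiset.card_cons _ _, Multiset.forall_mem_cons.mpr ⟨hρR, hσR⟩,
      Multiset.forall_mem_cons.mpr ⟨hρ.imp_left fun h => Multiset.mem_cons.mpr (.inl h),
        fun ρ' hρ' => (hσ ρ' hρ').imp_left Multiset.mem_cons_of_mem⟩, fun x hx => ?_⟩
    have hz' := abs_le.mp (hz x hx)
    have hrest := abs_le.mp (hsum x hx)
    rw [Multiset.map_cons, Multiset.map_cons, Multiset.sum_cons, Multiset.sum_cons, abs_le,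
      Nat.cast_add_one]
    constructor <;> linarith

theorem exists_multiset_abs_log_norm_sub_sum_le {R η : ℝ} (hR : 0 < R) (hη : 0 < η) {q : ℂ[X]}
    {m : ℕ} (hm : q.natDegree ≤ m) :
    ∃ c : ℂ, c ≠ 0 ∧ ∃ σ : Multiset ℂ, σ.card = m ∧ (∀ ρ ∈ σ, ‖ρ‖ ≤ R + R / η) ∧
      (∀ ρ ∈ σ, q.IsRoot ρ ∨ R < ‖ρ‖) ∧ ∀ x : ℂ, ‖x‖ ≤ R → q.eval x ≠ 0 →
        |Real.log ‖(C c * q).eval x‖ - (σ.map fun ρ => Real.log ‖x - ρ‖).sum| ≤ m * (2 * η) := by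
  obtain ⟨L, σ, hcard, hσR, hσ, hsum⟩ :=
    exists_multiset_abs_sum_log_norm_sub_le hR hη ((card_roots' q).trans hm)
  refine ⟨Complex.exp (L - Real.log ‖q.leadingCoeff‖ : ℝ), Complex.exp_ne_zero _, σ, hcard, hσR,
    fun ρ hρ => (hσ ρ hρ).imp_left isRoot_of_mem_roots, fun x hx hqx => ?_⟩
  rw [eval_mul, eval_C, norm_mul, Complex.norm_exp, Complex.ofReal_re, Real.log_mul
    (Real.exp_pos _).ne' (norm_ne_zero_iff.mpr hqx), Real.log_exp,
    log_norm_eval_eq_add_sum_roots (IsAlgClosed.splits q) hqx, ← add_assoc, sub_add_cancel,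
    add_comm L]
  exact hsum x hx

variable {R η : ℝ} {K : Set ℂ} {q : ℂ[X]}

theorem exists_measure_potential_near_log_norm_eval (hR : 0 < R) (hη : 0 < η) (hK : IsCompact K)
    (hKR : K ⊆ closedBall 0 R) (hqK : ∀ x ∈ K, q.eval x ≠ 0) {m : ℕ} (hm : 0 < m)
    (hdeg : q.natDegree ≤ m) :
    ∃ c : ℂ, c ≠ 0 ∧ ∃ ν : Measure ℂ, IsProbabilityMeasure ν ∧
      ν (closedBall 0 (R + R / η))ᶜ = 0 ∧
      (∀ x ∈ K, ∀ r, Real.log ‖(C c * q).eval x‖ ≤ m * (truncatedPotential ν r x + 2 * η)) ∧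
      ∃ t₀ > 0, ∀ t ∈ Set.Ioc 0 t₀, ∀ x ∈ K,
        m * (truncatedPotential ν t x - 2 * η) ≤ Real.log ‖(C c * q).eval x‖ := by
  obtain ⟨c, hc, σ, rfl, hσR, hσ, hsum⟩ :=
    exists_multiset_abs_log_norm_sub_sum_le hR hη hdeg
  have hσ₀ : σ ≠ 0 := Multiset.card_pos.mp hm
  have hσK : K ⊆ (↑σ.toFinset)ᶜ := fun x hx hmem => by
    rcases hσ x (by simpa using hmem) with hroot | hlt
    · exact hqK x hx hroot
    · exact hlt.not_ge (mem_closedBall_zero_iff.mp (hKR hx))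
  obtain ⟨t₀, ht₀, hthick⟩ :=
    hK.exists_thickening_subset_open σ.toFinset.finite_toSet.isClosed.isOpen_compl hσK
  have hdist {x ρ : ℂ} (hx : x ∈ K) (hρ : ρ ∈ σ) : t₀ ≤ ‖x - ρ‖ := by
    by_contra! hlt
    rw [norm_sub_rev, ← dist_eq_norm] at hlt
    exact hthick (mem_thickening_iff.mpr ⟨x, hx, hlt⟩) (by simpa using hρ)
  have hpot (r x) : σ.card * truncatedPotential (empiricalMeasure σ) r x =
      (σ.map fun ρ => Real.log (max ‖x - ρ‖ r)).sum := by
    rw [truncatedPotential, integral_empiricalMeasure, mul_div_cancel₀ _ (by positivity)]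
  refine ⟨c, hc, empiricalMeasure σ, isProbabilityMeasure_empiricalMeasure hσ₀,
    ae_empiricalMeasure_of_forall_mem (by simpa using hσR), fun x hx r => ?_,
    t₀, ht₀, fun t ht x hx => ?_⟩
  · have hmono := Multiset.sum_map_le_sum_map (s := σ) (fun ρ => Real.log ‖x - ρ‖)
      (fun ρ => Real.log (max ‖x - ρ‖ r)) fun ρ hρ =>
        Real.log_le_log (ht₀.trans_le (hdist hx hρ)) (le_max_left _ _)
    have hle := (abs_le.mp (hsum x (mem_closedBall_zero_iff.mp (hKR hx)) (hqK x hx))).2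
    rw [mul_add, hpot]
    linarith
  · have hle := (abs_le.mp (hsum x (mem_closedBall_zero_iff.mp (hKR hx)) (hqK x hx))).1
    rw [mul_sub, hpot, Multiset.map_congr rfl fun ρ hρ => by
      rw [max_eq_left (ht.2.trans (hdist hx hρ))]]
    linarith

theorem tendstoUniformlyOn_truncatedPotential {ι : Type*} {l : Filter ι} {ν : ι → Measure ℂ}
    [∀ i, IsProbabilityMeasure (ν i)] {μ : Measure ℂ} [IsProbabilityMeasure μ] {B : Set ℂ}
    (hB : IsCompact B) (hν : ∀ i, ν i Bᶜ = 0) (hμ : μ Bᶜ = 0)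
    (hlim : ∀ g : ℂ → ℝ, Continuous g → Tendsto (fun i => ∫ z, g z ∂ν i) l (𝓝 (∫ z, g z ∂μ)))
    (hK : IsCompact K) {r : ℝ} (hr : 0 < r) :
    TendstoUniformlyOn (fun i => truncatedPotential (ν i) r) (truncatedPotential μ r) l K := by
  rw [← tendstoLocallyUniformlyOn_iff_tendstoUniformlyOn_of_compact hK,
    Metric.tendstoLocallyUniformlyOn_iff]
  intro ε hε x _
  refine ⟨ball x (ε / 3 * r), mem_nhdsWithin_of_mem_nhds (ball_mem_nhds x (by positivity)), ?_⟩
  have hx := hlim _ (continuous_log_max (g := fun z => ‖x - z‖) (by fun_prop) hr)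
  filter_upwards [hx.eventually (ball_mem_nhds _ (by positivity : 0 < ε / 3))] with i hi y hy
  have hyx : ‖y - x‖ / r < ε / 3 := by
    rw [div_lt_iff₀ hr, ← dist_eq_norm]
    exact hy
  have hlip {ρ : Measure ℂ} [IsProbabilityMeasure ρ] (hρ : ρ Bᶜ = 0) :
      |truncatedPotential ρ r y - truncatedPotential ρ r x| < ε / 3 := by
    refine (abs_sub_le_iff.mpr ⟨?_, ?_⟩).trans_lt hyx
    · linarith [truncatedPotential_le_add hB hρ hr y x]
    · exact norm_sub_rev y x ▸ sub_le_iff_le_add'.mpr (truncatedPotential_le_add hB hρ hr x y)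
  have hyν := abs_lt.mp (hlip (hν i))
  have hyμ := abs_lt.mp (hlip hμ)
  have hxi : |truncatedPotential (ν i) r x - truncatedPotential μ r x| < ε / 3 := hi
  rw [Real.dist_eq, abs_lt]
  constructor <;> linarith [abs_lt.mp hxi]

end ZeroDistribution

section Pieces

variable {μ : Measure ℂ} {K : Set ℂ} {η : ℝ}

/-- The points of `K` where the potential of `μ` is at least `s` and its truncation at `log r` is at
most `s'`. -/
def potentialBand (μ : Measure ℂ) (K : Set ℂ) (s s' r : ℝ) : Set ℂ :=
  {x ∈ K | (∀ t > 0, s ≤ truncatedPotential μ t x) ∧ truncatedPotential μ r x ≤ s'}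

theorem isCompact_potentialBand [IsProbabilityMeasure μ] {B : Set ℂ} (hB : IsCompact B)
    (hμ : μ Bᶜ = 0) (hK : IsCompact K) (s s' : ℝ) {r : ℝ} (hr : 0 < r) :
    IsCompact (potentialBand μ K s s' r) := by
  have hcont {t : ℝ} (ht : 0 < t) := continuous_truncatedPotential hB hμ ht
  have hlower : IsClosed {x | ∀ t > 0, s ≤ truncatedPotential μ t x} := by
    simp only [Set.ofPred_forall]
    exact isClosed_iInter fun t => isClosed_iInter fun ht =>
      isClosed_le continuous_const (hcont ht)
  exact hK.inter_right (hlower.inter (isClosed_le (hcont hr) continuous_const))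

theorem exists_mem_potentialBand [IsProbabilityMeasure μ] {B : Set ℂ} (hB : IsCompact B)
    (hμ : μ Bᶜ = 0) (hη : 0 < η) {x : ℂ} (hx : x ∈ K)
    (hbdd : BddBelow ((truncatedPotential μ · x) '' Set.Ioi 0)) :
    ∃ (k : ℤ) (j : ℕ), x ∈ potentialBand μ K (k * η) ((k + 1) * η) (1 / (j + 1)) := by
  set v := sInf ((truncatedPotential μ · x) '' Set.Ioi 0)
  have hlt : v < (⌊v / η⌋ + 1) * η := (div_lt_iff₀ hη).mp (Int.lt_floor_add_one _)
  obtain ⟨_, ⟨r, hr, rfl⟩, hvr⟩ := exists_lt_of_csInf_lt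
    (Set.nonempty_Ioi.image _) hlt
  obtain ⟨j, hj⟩ := exists_nat_one_div_lt (Set.mem_Ioi.mp hr)
  refine ⟨⌊v / η⌋, j, hx, fun t ht => ?_, ?_⟩
  · exact ((le_div_iff₀ hη).mp (Int.floor_le _)).trans (csInf_le hbdd ⟨t, ht, rfl⟩)
  · exact (truncatedPotential_mono hB hμ (by positivity) hj.le x).trans hvr.le

theorem exists_isRationalApprox_potential {E : Set (ℂ × ℂ)} {R a : ℝ} {m : ℕ} {p q : ℂ[X]}
    (h : IsRationalApprox E m a p q) (hm : 0 < m) (hR : 0 < R) (hη : 0 < η)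
    (hK : IsCompact (Prod.fst '' E)) (hKR : Prod.fst '' E ⊆ closedBall 0 R) :
    ∃ (p q : ℂ[X]) (ν : ProbabilityMeasure ℂ), IsRationalApprox E m a p q ∧
      (ν : Measure ℂ) (closedBall 0 (R + R / η))ᶜ = 0 ∧
      (∀ x ∈ Prod.fst '' E, ∀ r,
        Real.log ‖q.eval x‖ ≤ m * (truncatedPotential ν r x + 2 * η)) ∧
      ∃ t₀ > 0, ∀ t ∈ Set.Ioc 0 t₀, ∀ x ∈ Prod.fst '' E,
        m * (truncatedPotential ν t x - 2 * η) ≤ Real.log ‖q.eval x‖ := by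
  obtain ⟨c, hc, ν, hν, hνR, hupper, hlower⟩ := exists_measure_potential_near_log_norm_eval hR hη
    hK hKR (Set.forall_mem_image.mpr h.den_ne_zero) hm h.natDegree_den_le
  exact ⟨C c * p, C c * q, ⟨ν, hν⟩, h.C_mul hc, hνR, hupper, hlower⟩

theorem isPotentialBand_of_approx {ν : Measure ℂ} {m : ℕ} {s r ρ : ℝ} {q : ℂ[X]} (hr : 0 < r)
    (hupper : ∀ x ∈ K, ∀ t, Real.log ‖q.eval x‖ ≤ m * (truncatedPotential ν t x + η / 2))
    {t₀ : ℝ} (ht₀ : 0 < t₀) (hlower : ∀ t ∈ Set.Ioc 0 t₀, ∀ x ∈ K,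
      m * (truncatedPotential ν t x - η / 2) ≤ Real.log ‖q.eval x‖)
    (hr_near : ∀ x ∈ K, dist (truncatedPotential μ r x) (truncatedPotential ν r x) < η / 2)
    (hρ_near : ∀ x ∈ K, dist (truncatedPotential μ ρ x) (truncatedPotential ν ρ x) < η / 2) :
    IsPotentialBand (potentialBand μ K s (s + η) ρ) m s η r ν q where
  log_norm_eval_le x hx := by
    have hnear := abs_lt.mp (hρ_near x hx.1)
    exact (hupper x hx.1 ρ).trans
      (mul_le_mul_of_nonneg_left (by linarith [hx.2.2]) m.cast_nonneg)
  exists_le_log_norm_eval := by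
    refine ⟨min t₀ r, ⟨lt_min ht₀ hr, min_le_right _ _⟩, fun x hx =>
      le_trans ?_ (hlower _ ⟨lt_min ht₀ hr, min_le_left _ _⟩ x hx.1)⟩
    have hη : 0 < η / 2 := dist_nonneg.trans_lt (hr_near x hx.1)
    gcongr
    linarith
  le_truncatedPotential x hx := by
    have hnear := abs_lt.mp (hr_near x hx.1)
    linarith [hx.2.1 r hr]

theorem exists_measure_pieces {E : Set (ℂ × ℂ)} {R S a : ℝ} (hR : 0 < R)
    (hE : E ⊆ closedBall 0 R ×ˢ closedBall 0 S) (hK : IsCompact (Prod.fst '' E))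
    (hreal : Prod.fst '' E ⊆ Set.range Complex.ofReal) (ha : 0 < a)
    (happrox : ∀ N : ℕ, ∃ m ≥ N, ∃ p q, IsRationalApprox E m a p q) :
    ∃ (B : Set ℂ) (μ : Measure ℂ) (A : ℤ × ℕ → Set (ℂ × ℂ)), IsCompact B ∧
      IsProbabilityMeasure μ ∧ μ Bᶜ = 0 ∧ (∀ i τ, ¬ ChebyshevBound (A i) τ) ∧
      ∀ ζ ∈ E, (∃ i, ζ ∈ A i) ∨ ¬ BddBelow ((truncatedPotential μ · ζ.1) '' Set.Ioi 0) := by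
  obtain ⟨η, hη, hηa⟩ : ∃ η > 0, 10 * η < a := ⟨a / 20, by positivity, by linarith⟩
  set K := Prod.fst '' E
  set B : Set ℂ := closedBall 0 (R + R / (η / 4))
  have hB : IsCompact B := isCompact_closedBall _ _
  have hKR : K ⊆ closedBall 0 R := Set.image_subset_iff.mpr fun ζ hζ => (hE hζ).1
  choose m hm p₀ q₀ happrox₀ using fun i : ℕ => happrox (i + 1)
  choose p q ν hpq hν hupper t₀ ht₀ hlower using fun i => exists_isRationalApprox_potential
    (happrox₀ i) ((Nat.succ_pos i).trans_le (hm i)) hR (by positivity : 0 < η / 4) hK hKR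
  obtain ⟨μ, hμ, hlim⟩ := exists_tendsto_integral_of_isCompact (hyperfilter ℕ) hB ν hν
  have hunif {r : ℝ} (hr : 0 < r) := Metric.tendstoUniformlyOn_iff.mp
    (tendstoUniformlyOn_truncatedPotential hB hν hμ hlim hK hr) (η / 2) (half_pos hη)
  have hquarter : 2 * (η / 4) = η / 2 := by ring
  rw [hquarter] at hupper hlower
  set X : ℤ × ℕ → Set ℂ := fun i => potentialBand μ K (i.1 * η) ((i.1 + 1) * η) (1 / (i.2 + 1))
  have himage (i) : Prod.fst '' (E ∩ Prod.fst ⁻¹' X i) = X i := by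
    rw [Set.image_inter_preimage]
    exact Set.inter_eq_right.mpr fun x hx => hx.1
  refine ⟨B, μ, fun i => E ∩ Prod.fst ⁻¹' X i, hB, inferInstance, hμ, fun i τ => ?_,
    fun ζ hζ => or_iff_not_imp_right.mpr fun hbdd => ?_⟩
  · have hj : (0 : ℝ) < 1 / (i.2 + 1) := by positivity
    have hunif_j := hunif hj
    refine not_chebyshevBound_of_isPotentialBand (s := i.1 * η) (Set.inter_subset_left.trans hE)
      ?_ ?_ hη hηa fun r hr N => ?_
    · rw [himage]
      exact isCompact_potentialBand hB hμ hK _ _ hj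
    · exact (Set.image_mono Set.inter_subset_left).trans hreal
    · obtain ⟨n, hnN, hnr, hnj⟩ :=
        (((eventually_ge_atTop N).filter_mono Nat.hyperfilter_le_atTop).and
          ((hunif hr).and hunif_j)).exists
      refine ⟨m n, hnN.trans (n.le_succ.trans (hm n)), ν n, inferInstance, ⟨B, hB, hν n⟩, p n, q n,
        (hpq n).mono_set Set.inter_subset_left, ?_⟩
      have hband := isPotentialBand_of_approx (s := i.1 * η) hr (hupper n) (ht₀ n)
        (hlower n) hnr hnj
      rw [← add_one_mul] at hband
      rwa [himage]
  · obtain ⟨k, j, hkj⟩ := exists_mem_potentialBand hB hμ hη (Set.mem_image_of_mem Prod.fst hζ)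
      (not_not.mp hbdd)
    exact ⟨(k, j), hζ, hkj⟩

end Pieces

section GoncharClass

theorem exists_frequently_lt_pow_of_liminf_lt_one {u : ℕ → ℝ} {M : ℝ} (hu : ∀ n, 0 ≤ u n)
    (huM : ∀ n, u n ≤ M) (hlim : liminf (fun n : ℕ => u n ^ (1 / (n : ℝ))) atTop < 1) :
    ∃ c ∈ Set.Ioo (0 : ℝ) 1, ∃ᶠ n in atTop, u n < c ^ n := by
  have hbound : ∀ᶠ n : ℕ in atTop, u n ^ (1 / (n : ℝ)) ≤ max M 1 := by
    filter_upwards [eventually_ge_atTop 1] with n hn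
    have hn' : 1 / (n : ℝ) ≤ 1 := div_le_one_of_le₀ (by exact_mod_cast hn) n.cast_nonneg
    calc u n ^ (1 / (n : ℝ)) ≤ max M 1 ^ (1 / (n : ℝ)) :=
          Real.rpow_le_rpow (hu n) ((huM n).trans (le_max_left _ _)) (by positivity)
      _ ≤ max M 1 ^ (1 : ℝ) := Real.rpow_le_rpow_of_exponent_le (le_max_right _ _) hn'
      _ = max M 1 := Real.rpow_one _
  obtain ⟨c, hc, hc1⟩ := exists_between (max_lt hlim one_half_lt_one)
  have hc0 : 0 < c := one_half_pos.trans ((le_max_right _ _).trans_lt hc)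
  have hfreq := frequently_lt_of_liminf_lt
    (IsBoundedUnder.isCoboundedUnder_ge ⟨max M 1, eventually_map.mpr hbound⟩)
    ((le_max_left _ _).trans_lt hc)
  refine ⟨c, ⟨hc0, hc1⟩, (hfreq.and_eventually (eventually_gt_atTop 0)).mono fun n hn => ?_⟩
  have hn0 : (0 : ℝ) < n := by exact_mod_cast hn.2
  simpa only [← Real.rpow_mul (hu n), one_div_mul_cancel hn0.ne', Real.rpow_one,
    Real.rpow_natCast] using Real.rpow_lt_rpow (Real.rpow_nonneg (hu n) _) hn.1 hn0

variable {a b M : ℝ} {f : ℝ → ℝ}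

theorem rhoReal_nonneg (hab : a ≤ b) (n : ℕ) : 0 ≤ rhoReal f a b n :=
  Real.sInf_nonneg fun _ ⟨_, _, _, _, _, h⟩ => (abs_nonneg _).trans (h a ⟨le_rfl, hab⟩)

theorem rhoReal_le (hab : a ≤ b) (hM : ∀ x ∈ Set.Icc a b, |f x| ≤ M) (n : ℕ) :
    rhoReal f a b n ≤ M :=
  csInf_le ⟨0, fun _ ⟨_, _, _, _, _, h⟩ => (abs_nonneg _).trans (h a ⟨le_rfl, hab⟩)⟩
    ⟨0, 1, by simp, by simp, by simp, by simpa using hM⟩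

theorem exists_of_rhoReal_lt (hM : ∀ x ∈ Set.Icc a b, |f x| ≤ M) {n : ℕ} {t : ℝ}
    (ht : rhoReal f a b n < t) :
    ∃ p q : ℝ[X], p.natDegree ≤ n ∧ q.natDegree ≤ n ∧ (∀ x ∈ Set.Icc a b, q.eval x ≠ 0) ∧
      ∀ x ∈ Set.Icc a b, |f x - p.eval x / q.eval x| ≤ t := by
  obtain ⟨s, ⟨p, q, hp, hq, hq0, hs⟩, hst⟩ := exists_lt_of_csInf_lt
    (by exact ⟨M, 0, 1, by simp, by simp, by simp, by simpa using hM⟩) ht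
  exact ⟨p, q, hp, hq, hq0, fun x hx => (hs x hx).trans hst.le⟩

theorem isRationalApprox_map_ofReal {s : Set ℝ} {m : ℕ} {α : ℝ} {p q : ℝ[X]}
    (hp : p.natDegree ≤ m) (hq : q.natDegree ≤ m) (hq0 : ∀ x ∈ s, q.eval x ≠ 0)
    (h : ∀ x ∈ s, |f x - p.eval x / q.eval x| ≤ Real.exp (-α * m)) :
    IsRationalApprox {ζ | ∃ x ∈ s, ζ = ((x : ℂ), (f x : ℂ))} m α
      (p.map Complex.ofRealHom) (q.map Complex.ofRealHom) := by
  have heval (u : ℝ[X]) (x : ℝ) : (u.map Complex.ofRealHom).eval (x : ℂ) = (u.eval x : ℝ) :=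
    eval_map_apply Complex.ofRealHom x
  refine ⟨natDegree_map_le.trans hp, natDegree_map_le.trans hq, ?_, ?_⟩
  · rintro _ ⟨x, hx, rfl⟩
    simpa only [heval, ne_eq, Complex.ofReal_eq_zero] using hq0 x hx
  · rintro _ ⟨x, hx, rfl⟩
    have hfactor : q.eval x * f x - p.eval x = (f x - p.eval x / q.eval x) * q.eval x := by
      have := hq0 x hx
      field_simp
    rw [heval, heval, ← Complex.ofReal_mul, ← Complex.ofReal_sub, Complex.norm_real,
      Complex.norm_real, hfactor, norm_mul]
    exact mul_le_mul_of_nonneg_right (h x hx) (norm_nonneg _)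

theorem exists_isRationalApprox_of_liminf_lt_one (hab : a ≤ b)
    (hM : ∀ x ∈ Set.Icc a b, |f x| ≤ M)
    (hlim : liminf (fun n : ℕ => rhoReal f a b n ^ (1 / (n : ℝ))) atTop < 1) :
    ∃ α > 0, ∀ N : ℕ, ∃ m ≥ N, ∃ p q,
      IsRationalApprox {ζ | ∃ x ∈ Set.Icc a b, ζ = ((x : ℂ), (f x : ℂ))} m α p q := by
  obtain ⟨c, ⟨hc0, hc1⟩, hfreq⟩ :=
    exists_frequently_lt_pow_of_liminf_lt_one (rhoReal_nonneg hab) (rhoReal_le hab hM) hlim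
  refine ⟨-Real.log c, neg_pos.mpr (Real.log_neg hc0 hc1), fun N => ?_⟩
  obtain ⟨m, hmN, hm⟩ := frequently_atTop.mp hfreq N
  have hexp : c ^ m = Real.exp (- -Real.log c * m) := by
    rw [neg_neg, mul_comm, Real.exp_nat_mul, Real.exp_log hc0]
  obtain ⟨p, q, hp, hq, hq0, h⟩ := exists_of_rhoReal_lt hM (hexp ▸ hm)
  exact ⟨m, hmN, _, _, isRationalApprox_map_ofReal hp hq hq0 h⟩

end GoncharClass

section SubMeanValue

theorem circleAverage_norm_sub_sq (c z : ℂ) (r : ℝ) :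
    Real.circleAverage (fun w => ‖w - c‖ ^ 2) z r = ‖z - c‖ ^ 2 + r ^ 2 := by
  set L : ℂ → ℂ := fun w => 2 * (starRingEnd ℂ (z - c) * (w - z))
  have hL : InnerProductSpace.HarmonicOnNhd (fun w => (L w).re) (closedBall z |r|) := fun w _ =>
    AnalyticAt.harmonicAt_re (by fun_prop)
  have hLint : CircleIntegrable (fun w => (L w).re) z r :=
    ContinuousOn.circleIntegrable' (by fun_prop)
  have hpolar : Set.EqOn (fun w => ‖w - c‖ ^ 2) (fun w => (‖z - c‖ ^ 2 + r ^ 2) + (L w).re)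
      (sphere z |r|) := fun w hw => by
    have hr : ‖w - z‖ ^ 2 = r ^ 2 := by rw [mem_sphere_iff_norm.mp hw, sq_abs]
    simp only [← hr, ← Complex.normSq_eq_norm_sq, Complex.normSq_apply, L]
    simp
    ring
  rw [Real.circleAverage_congr_sphere hpolar,
    Real.circleAverage_fun_add (circleIntegrable_const _ _ _) hLint, Real.circleAverage_const,
    hL.circleAverage_eq]
  simp [L]

theorem le_of_le_on_sphere_of_le_circleAverage {k : ℂ → ℝ} {c : ℂ} {r M : ℝ} (hr : 0 < r)
    (hk : ContinuousOn k (closedBall c r))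
    (hmean : ∀ z δ, 0 < δ → closedBall z δ ⊆ ball c r → k z ≤ Real.circleAverage k z δ)
    (hM : ∀ z ∈ sphere c r, k z ≤ M) {z : ℂ} (hz : z ∈ closedBall c r) : k z ≤ M := by
  by_contra! hMz
  obtain ⟨e, he, her⟩ : ∃ e > 0, e * r ^ 2 < k z - M :=
    ⟨(k z - M) / 2 / r ^ 2, by have := sub_pos.mpr hMz; positivity, by
      rw [div_mul_cancel₀ _ (by positivity)]; linarith⟩
  obtain ⟨z₀, hz₀, hmax⟩ := (isCompact_closedBall c r).exists_isMaxOn ⟨z, hz⟩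
    (hk.add (by fun_prop : ContinuousOn (fun w => e * ‖w - c‖ ^ 2) _))
  have hle (w) (hw : w ∈ closedBall c r) :
    k w + e * ‖w - c‖ ^ 2 ≤ k z₀ + e * ‖z₀ - c‖ ^ 2 := hmax hw
  rcases (mem_closedBall.mp hz₀).lt_or_eq with hball | hsphere
  · obtain ⟨δ, hδ, hsub⟩ := nhds_basis_closedBall.mem_iff.mp (isOpen_ball.mem_nhds hball)
    have hcircle : sphere z₀ |δ| ⊆ closedBall c r := by
      rw [abs_of_pos hδ]
      exact sphere_subset_closedBall.trans (hsub.trans ball_subset_closedBall)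
    have hk_int : CircleIntegrable k z₀ δ := (hk.mono hcircle).circleIntegrable'
    have hsq_int : CircleIntegrable (fun w => e • ‖w - c‖ ^ 2) z₀ δ :=
      ContinuousOn.circleIntegrable' (by fun_prop)
    have havg : Real.circleAverage (fun w => k w + e • ‖w - c‖ ^ 2) z₀ δ ≤
        k z₀ + e * ‖z₀ - c‖ ^ 2 :=
      Real.circleAverage_mono_on_of_le_circle (hk_int.add hsq_int) fun w hw => hle w (hcircle hw)
    rw [Real.circleAverage_fun_add hk_int hsq_int, Real.circleAverage_fun_smul,
      circleAverage_norm_sub_sq, smul_eq_mul, mul_add] at havg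
    linarith [hmean z₀ δ hδ hsub, (by positivity : 0 < e * δ ^ 2)]
  · have hz_le := hle z hz
    rw [← dist_eq_norm z₀, hsphere] at hz_le
    linarith [hM z₀ hsphere, (by positivity : 0 ≤ e * ‖z - c‖ ^ 2)]

theorem log_norm_le_circleAverage {Φ : ℂ → ℂ} (hΦ : Differentiable ℂ Φ) {c : ℂ} {r : ℝ} (hr : r ≠ 0)
    (hc : Φ c ≠ 0) : Real.log ‖Φ c‖ ≤ Real.circleAverage (fun z => Real.log ‖Φ z‖) c r := by
  have hanalytic : AnalyticOnNhd ℂ Φ (closedBall c |r|) := fun z _ => hΦ.analyticAt z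
  rw [hanalytic.circleAverage_log_norm hr hc]
  refine le_add_of_nonneg_left (finsum_nonneg fun u => ?_)
  by_cases hu : u ∈ closedBall c |r|
  · refine mul_nonneg
      (by exact_mod_cast MeromorphicOn.AnalyticOnNhd.divisor_nonneg hanalytic u) ?_
    rw [← Real.log_abs, abs_mul, abs_inv, abs_norm, ← div_eq_mul_inv]
    rcases (norm_nonneg (c - u)).eq_or_lt with hcu | hcu
    · simp [← hcu]
    · rw [mem_closedBall', dist_eq_norm] at hu
      exact Real.log_nonneg ((one_le_div hcu).mpr hu)
  · simp [Function.locallyFinsuppWithin.apply_eq_zero_of_notMem _ hu]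

theorem continuous_circleAverage {Y : Type*} [TopologicalSpace Y] [FirstCountableTopology Y]
    {f : ℂ → Y → ℝ} (hf : Continuous (Function.uncurry f)) (c : ℂ) (r : ℝ) :
    Continuous fun y => Real.circleAverage (f · y) c r := by
  have hcont : Continuous (Function.uncurry fun y θ => f (circleMap c r θ) y) :=
    hf.comp (((continuous_circleMap c r).comp continuous_snd).prodMk continuous_fst)
  simp only [Real.circleAverage, smul_eq_mul]
  exact continuous_const.mul
    (intervalIntegral.continuous_parametric_intervalIntegral_of_continuous' hcont _ _)

theorem circleAverage_integral_comm {Y : Type*} [TopologicalSpace Y] [T2Space Y]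
    [SecondCountableTopology Y] [MeasurableSpace Y] [BorelSpace Y] {μ : Measure Y}
    [IsFiniteMeasure μ] {B : Set Y} (hB : IsCompact B) (hμ : μ Bᶜ = 0) {f : ℂ → Y → ℝ}
    (hf : Continuous (Function.uncurry f)) (c : ℂ) (r : ℝ) :
    Real.circleAverage (fun w => ∫ y, f w y ∂μ) c r =
      ∫ y, Real.circleAverage (f · y) c r ∂μ := by
  have hcont : Continuous fun x : ℝ × Y => f (circleMap c r x.1) x.2 :=
    hf.comp ((continuous_circleMap c r).prodMap continuous_id)
  have hint : Integrable (fun x : ℝ × Y => f (circleMap c r x.1) x.2)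
      ((volume.restrict (Set.uIoc 0 (2 * Real.pi))).prod μ) := by
    rw [← Measure.restrict_eq_self_of_ae_mem (mem_ae_iff.mpr hμ), Measure.prod_restrict]
    exact (hcont.continuousOn.integrableOn_compact (isCompact_uIcc.prod hB)).mono_set
      (Set.prod_mono Set.uIoc_subset_uIcc subset_rfl)
  simp only [Real.circleAverage, integral_smul]
  rw [intervalIntegral_integral_swap hint]

end SubMeanValue

section ContPsh

variable {E : Type*} [NormedAddCommGroup E] [NormedSpace ℂ E]

/-- Continuous plurisubharmonic functions. The mean over the unit circle covers all circles, since
the direction `v` is arbitrary. -/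
structure ContPsh (g : E → ℝ) : Prop where
  continuous : Continuous g
  le_circleAverage : ∀ a v : E, g a ≤ Real.circleAverage (fun w : ℂ => g (a + w • v)) 0 1

namespace ContPsh

variable {g h : E → ℝ}

theorem circleIntegrable_line (hg : ContPsh g) (a v : E) (c : ℂ) (r : ℝ) :
    CircleIntegrable (fun w : ℂ => g (a + w • v)) c r :=
  (hg.continuous.comp (by fun_prop)).continuousOn.circleIntegrable'

theorem le_circleAverage_line (hg : ContPsh g) (a v : E) (c : ℂ) (r : ℝ) :
    g (a + c • v) ≤ Real.circleAverage (fun w : ℂ => g (a + w • v)) c r := by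
  rw [Real.circleAverage_eq_circleAverage_zero_one]
  convert hg.le_circleAverage (a + c • v) ((r : ℂ) • v) using 4
  rw [add_smul, mul_smul, smul_comm]
  abel

theorem const (t : ℝ) : ContPsh fun _ : E => t :=
  ⟨continuous_const, fun _ _ => (Real.circleAverage_const t 0 1).ge⟩

theorem add (hg : ContPsh g) (hh : ContPsh h) : ContPsh fun p => g p + h p where
  continuous := hg.continuous.add hh.continuous
  le_circleAverage a v := by
    rw [Real.circleAverage_fun_add (hg.circleIntegrable_line a v 0 1)
      (hh.circleIntegrable_line a v 0 1)]
    exact add_le_add (hg.le_circleAverage a v) (hh.le_circleAverage a v)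

theorem const_mul (hg : ContPsh g) {t : ℝ} (ht : 0 ≤ t) : ContPsh fun p => t * g p where
  continuous := hg.continuous.const_mul t
  le_circleAverage a v := by
    simp_rw [← smul_eq_mul t]
    rw [Real.circleAverage_fun_smul]
    exact mul_le_mul_of_nonneg_left (hg.le_circleAverage a v) ht

theorem sum {ι : Type*} {g : ι → E → ℝ} {s : Finset ι} (hg : ∀ i ∈ s, ContPsh (g i)) :
    ContPsh fun p => ∑ i ∈ s, g i p := by
  induction s using Finset.cons_induction with
  | empty => simpa using const 0
  | cons i s hi ih =>
    simp only [Finset.sum_cons]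
    exact (hg i (Finset.mem_cons_self i s)).add
      (ih fun j hj => hg j (Finset.mem_cons_of_mem hj))

theorem posLog_norm {Φ : E → ℂ} (hΦ : Differentiable ℂ Φ) : ContPsh fun p => Real.posLog ‖Φ p‖ where
  continuous := Real.continuous_posLog.comp hΦ.continuous.norm
  le_circleAverage a v := by
    have hline : Differentiable ℂ fun w : ℂ => Φ (a + w • v) := hΦ.comp (by fun_prop)
    rcases le_or_gt ‖Φ a‖ 1 with ha | ha
    · rw [Real.posLog_eq_zero_iff _ |>.mpr (by simpa using ha)]
      exact Real.circleAverage_nonneg_of_nonneg fun _ _ => Real.posLog_nonneg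
    · have hΦa : Φ (a + (0 : ℂ) • v) ≠ 0 := by
        rw [zero_smul, add_zero]
        exact norm_pos_iff.mp (one_pos.trans ha)
      calc Real.posLog ‖Φ a‖ = Real.log ‖Φ (a + (0 : ℂ) • v)‖ := by
            rw [zero_smul, add_zero, Real.posLog_eq_log (by simpa using ha.le)]
        _ ≤ Real.circleAverage (fun w => Real.log ‖Φ (a + w • v)‖) 0 1 :=
          log_norm_le_circleAverage hline one_ne_zero hΦa
        _ ≤ Real.circleAverage (fun w => Real.posLog ‖Φ (a + w • v)‖) 0 1 :=
          Real.circleAverage_mono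
            (MeromorphicOn.circleIntegrable_log_norm fun z _ => (hline.analyticAt z).meromorphicAt)
            (Real.continuous_posLog.comp hline.continuous.norm).continuousOn.circleIntegrable'
            fun _ _ => le_max_right _ _

theorem log_max_norm {Φ : E → ℂ} (hΦ : Differentiable ℂ Φ) {s : ℝ} (hs : 0 < s) :
    ContPsh fun p => Real.log (max ‖Φ p‖ s) := by
  convert (posLog_norm (hΦ.const_mul ((s : ℂ)⁻¹))).add (const (Real.log s)) using 2 with p
  rw [Real.posLog_eq_log_max_one (norm_nonneg _), ← Real.log_mul (by positivity) hs.ne',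
    max_mul_of_nonneg _ _ hs.le, norm_mul, norm_inv, Complex.norm_real, Real.norm_of_nonneg hs.le,
    one_mul, inv_mul_eq_div, div_mul_cancel₀ _ hs.ne', max_comm]

theorem truncatedPotential {μ : Measure ℂ} [IsProbabilityMeasure μ] {B : Set ℂ} (hB : IsCompact B)
    (hμ : μ Bᶜ = 0) {s : ℝ} (hs : 0 < s) {Φ : E → ℂ} (hΦ : Differentiable ℂ Φ) :
    ContPsh fun p => truncatedPotential μ s (Φ p) where
  continuous := (continuous_truncatedPotential hB hμ hs).comp hΦ.continuous
  le_circleAverage a v := by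
    have := hΦ.continuous
    have hcont : Continuous (Function.uncurry fun w z : ℂ =>
        Real.log (max ‖Φ (a + w • v) - z‖ s)) :=
      continuous_log_max (g := fun x : ℂ × ℂ => ‖Φ (a + x.1 • v) - x.2‖) (by fun_prop) hs
    unfold _root_.truncatedPotential
    rw [circleAverage_integral_comm hB hμ hcont]
    exact integral_mono (integrable_log_max_norm_sub hB hμ hs (Φ a))
      (integrable_of_isCompact hB hμ (continuous_circleAverage hcont 0 1)) fun z =>
        (log_max_norm (hΦ.sub_const z) hs).le_circleAverage a v

end ContPsh

end ContPsh

section DecreasingLimits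

theorem exists_forall_lt_of_antitone {X : Type*} [TopologicalSpace X] {K : Set X}
    (hK : IsCompact K) {u : ℕ → X → ℝ} {t : X → ℝ} (hu : ∀ n, ContinuousOn (u n) K)
    (hanti : ∀ x, Antitone (u · x)) (ht : ContinuousOn t K)
    (hlt : ∀ x ∈ K, ∃ n, u n x < t x) : ∃ n, ∀ x ∈ K, u n x < t x := by
  have := isCompact_iff_compactSpace.mp hK
  obtain ⟨n, hn⟩ := isCompact_univ.elim_directed_cover (fun n => {x : K | u n x < t x})
    (fun n => isOpen_lt (hu n).domRestrict ht.domRestrict)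
    (fun x _ => Set.mem_iUnion.mpr (hlt x x.2))
    (directed_of_isDirected_le fun m n hmn x hx => (hanti x hmn).trans_lt hx)
  exact ⟨n, fun x hx => hn (Set.mem_univ ⟨x, hx⟩)⟩

theorem iInf_coe_eq_bot_iff {ι : Type*} {v : ι → ℝ} :
    ⨅ i, (v i : EReal) = ⊥ ↔ ¬ BddBelow (Set.range v) := by
  simp only [iInf_eq_bot, not_bddBelow_iff, Set.exists_range_iff]
  refine ⟨fun h t => ?_, fun h t ht => ?_⟩
  · obtain ⟨i, hi⟩ := h t (EReal.bot_lt_coe t)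
    exact ⟨i, EReal.coe_lt_coe_iff.mp hi⟩
  · obtain ⟨y, -, hyt⟩ := EReal.lt_iff_exists_real_btwn.mp ht
    obtain ⟨i, hi⟩ := h y
    exact ⟨i, (EReal.coe_lt_coe_iff.mpr hi).trans hyt⟩

variable {E : Type*} [NormedAddCommGroup E] [NormedSpace ℂ E]

theorem ContPsh.le_of_le_on_sphere {g : E → ℝ} (hg : ContPsh g) (a v : E) {c : ℂ} {r : ℝ}
    (hr : 0 < r) {h : ℂ → ℝ} (hh : ContinuousOn h (closedBall c r)) {F : ℂ → ℂ}
    (hF : DifferentiableOn ℂ F (ball c r)) (hFh : ∀ z ∈ ball c r, h z = (F z).re)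
    (hle : ∀ z ∈ sphere c r, g (a + z • v) ≤ h z) {z : ℂ} (hz : z ∈ closedBall c r) :
    g (a + z • v) ≤ h z := by
  have hline : Continuous fun z : ℂ => g (a + z • v) := hg.continuous.comp (by fun_prop)
  refine sub_nonpos.mp (le_of_le_on_sphere_of_le_circleAverage (k := fun z => g (a + z • v) - h z)
    hr (hline.continuousOn.sub hh) (fun w δ hδ hsub => ?_) (fun w hw => sub_nonpos.mpr (hle w hw))
    hz)
  rw [← abs_of_pos hδ] at hsub
  have hharm : InnerProductSpace.HarmonicOnNhd (fun z => (F z).re) (closedBall w |δ|) := fun x hx =>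
    (hF.analyticAt (isOpen_ball.mem_nhds (hsub hx))).harmonicAt_re
  have havg : Real.circleAverage h w δ = h w := by
    rw [Real.circleAverage_congr_sphere fun x hx => hFh x (hsub (sphere_subset_closedBall hx)),
      hharm.circleAverage_eq, hFh w (hsub (mem_closedBall_self (abs_nonneg δ)))]
  have hh_int : CircleIntegrable h w δ :=
    (hh.mono (sphere_subset_closedBall.trans (hsub.trans ball_subset_closedBall))).circleIntegrable'
  rw [Real.circleAverage_fun_sub (hg.circleIntegrable_line a v w δ) hh_int, havg]
  exact sub_le_sub_right (hg.le_circleAverage_line a v w δ) _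

theorem pshFn_iInf {v : ℕ → E → ℝ} (hv : ∀ n, ContPsh (v n)) (hanti : ∀ p, Antitone (v · p)) :
    PshFn fun p => ⨅ n, (v n p : EReal) := by
  have hcont (n) : Continuous fun p => (v n p : EReal) :=
    continuous_coe_real_ereal.comp (hv n).continuous
  have hne_top (p : E) : ⨅ n, (v n p : EReal) ≠ ⊤ :=
    ne_top_of_le_ne_top (EReal.coe_ne_top _) (iInf_le _ 0)
  refine ⟨upperSemicontinuous_iInf fun n => (hcont n).upperSemicontinuous, hne_top, fun a d =>
    ⟨upperSemicontinuous_iInf fun n => ((hcont n).comp (by fun_prop)).upperSemicontinuous,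
      fun w => hne_top _, ?_⟩⟩
  rintro c r hr h hh ⟨F, hF, hFh⟩ hsphere z hz
  refine EReal.le_of_forall_lt_iff_le.mp fun t ht => ?_
  have hε : 0 < t - h z := sub_pos.mpr (EReal.coe_lt_coe_iff.mp ht)
  obtain ⟨n, hn⟩ := exists_forall_lt_of_antitone (isCompact_sphere c r)
    (u := fun n w => v n (a + w • d)) (t := fun w => h w + (t - h z))
    (fun n => ((hv n).continuous.comp (by fun_prop)).continuousOn) (fun w => hanti _)
    ((hh.mono sphere_subset_closedBall).add continuousOn_const) fun w hw => by
      obtain ⟨n, hn⟩ := iInf_lt_iff.mp ((hsphere w hw).trans_lt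
        (EReal.coe_lt_coe_iff.mpr (lt_add_of_pos_right (h w) hε)))
      exact ⟨n, EReal.coe_lt_coe_iff.mp hn⟩
  have hle : v n (a + z • d) ≤ h z + (t - h z) :=
    (hv n).le_of_le_on_sphere a d hr (hh.add continuousOn_const)
      (hF.add_const ((t - h z : ℝ) : ℂ)) (fun w hw => by simp [hFh w hw])
      (fun w hw => (hn w hw).le) hz
  exact (iInf_le _ n).trans (EReal.coe_le_coe_iff.mpr (hle.trans_eq (add_sub_cancel _ _)))

theorem pluripolar_of_antitone {v : ℕ → E → ℝ} {S : Set E} (hv : ∀ n, ContPsh (v n))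
    (hanti : ∀ p, Antitone (v · p)) (hbdd : ∃ p, BddBelow (Set.range (v · p)))
    (hS : ∀ p ∈ S, ¬ BddBelow (Set.range (v · p))) : Pluripolar S :=
  ⟨_, pshFn_iInf hv hanti, hbdd.imp fun _ hp h => iInf_coe_eq_bot_iff.mp h hp,
    fun p hp => iInf_coe_eq_bot_iff.mpr (hS p hp)⟩

end DecreasingLimits

section CommonNonzeroPoint

variable {ι : Type*} [Countable ι]

theorem ae_summable_of_summable_integral {α : Type*} [MeasurableSpace α] {μ : Measure α}
    {F : ι → α → ℝ} (hF : ∀ i, Integrable (F i) μ) (hF₀ : ∀ i a, 0 ≤ F i a)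
    (hs : Summable fun i => ∫ a, F i a ∂μ) : ∀ᵐ a ∂μ, Summable (F · a) := by
  have hmeas (i) : AEMeasurable (fun a => ENNReal.ofReal (F i a)) μ :=
    (hF i).aemeasurable.ennreal_ofReal
  have htsum : ∫⁻ a, ∑' i, ENNReal.ofReal (F i a) ∂μ ≠ ⊤ := by
    rw [lintegral_tsum hmeas]
    simp_rw [← ofReal_integral_eq_lintegral_ofReal (hF _) (Eventually.of_forall (hF₀ _))]
    exact hs.tsum_ofReal_ne_top
  filter_upwards [ae_lt_top' (AEMeasurable.tsum hmeas) htsum] with a ha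
  simpa only [ENNReal.toReal_ofReal (hF₀ _ a)] using ENNReal.summable_toReal ha.ne

theorem ae_summable_circleMap {u : ι → ℂ → ℝ} {z : ℂ} {R : ℝ}
    (hu : ∀ k, CircleIntegrable (u k) z R) (hu₀ : ∀ k, ∀ w ∈ sphere z |R|, 0 ≤ u k w)
    (hs : Summable fun k => Real.circleAverage (u k) z R) :
    ∀ᵐ θ ∂volume.restrict (Set.Ioc 0 (2 * Real.pi)), Summable (u · (circleMap z R θ)) := by
  refine ae_summable_of_summable_integral (fun k => (hu k).1)
    (fun k θ => hu₀ k _ (circleMap_mem_sphere' z R θ))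
    ((hs.mul_left (2 * Real.pi)).congr fun k => ?_)
  rw [Real.circleAverage_def, intervalIntegral.integral_of_le Real.two_pi_pos.le, smul_eq_mul,
    mul_inv_cancel_left₀ Real.two_pi_pos.ne']

theorem ae_eval_circleMap_ne_zero {g : ℂ[X]} (hg : g ≠ 0) (z : ℂ) {R : ℝ} (hR : R ≠ 0) :
    ∀ᵐ θ : ℝ, g.eval (circleMap z R θ) ≠ 0 := by
  filter_upwards [(g.roots.toFinset.countable_toSet.preimage_circleMap z hR).ae_notMem volume]
    with θ hθ
  simpa [hg] using hθ

theorem exists_mem_sphere_summable_log_norm_eval {g : ι → ℂ[X]} {R : ℝ} (hR : 0 < R)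
    (hg : ∀ k, g k ≠ 0) {c m M : ι → ℝ} (hc : ∀ k, 0 ≤ c k)
    (hM : ∀ k, ∀ z ∈ sphere 0 R, Real.log ‖(g k).eval z‖ ≤ M k)
    (hm : ∀ k, m k ≤ Real.circleAverage (fun z => Real.log ‖(g k).eval z‖) 0 R)
    (hcM : Summable fun k => c k * M k) (hcm : Summable fun k => c k * m k) :
    ∃ z ∈ sphere (0 : ℂ) R, (∀ k, (g k).eval z ≠ 0) ∧
      Summable fun k => c k * Real.log ‖(g k).eval z‖ := by
  have habs : |R| = R := abs_of_pos hR
  have hlog (k) : CircleIntegrable (fun z => Real.log ‖(g k).eval z‖) 0 R :=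
    MeromorphicOn.circleIntegrable_log_norm fun z _ =>
      ((g k).differentiable.analyticAt z).meromorphicAt
  have hdiff (k) : CircleIntegrable (fun z => M k - Real.log ‖(g k).eval z‖) 0 R :=
    (circleIntegrable_const (M k) 0 R).sub (hlog k)
  have hdiff₀ (k) : ∀ z ∈ sphere 0 |R|, 0 ≤ c k * (M k - Real.log ‖(g k).eval z‖) := fun z hz =>
    mul_nonneg (hc k) (sub_nonneg.mpr (hM k z (habs ▸ hz)))
  have hsum : Summable fun k =>
      Real.circleAverage (fun z => c k * (M k - Real.log ‖(g k).eval z‖)) 0 R := by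
    refine Summable.of_nonneg_of_le
      (fun k => Real.circleAverage_nonneg_of_nonneg (hdiff₀ k)) (fun k => ?_) (hcM.sub hcm)
    simp_rw [← mul_sub, ← smul_eq_mul (c k)]
    rw [Real.circleAverage_fun_smul, Real.circleAverage_fun_sub (circleIntegrable_const _ _ _)
      (hlog k), Real.circleAverage_const]
    exact mul_le_mul_of_nonneg_left (sub_le_sub_left (hm k) _) (hc k)
  have hsummable := ae_summable_circleMap (fun k => (hdiff k).const_fun_smul (a := c k)) hdiff₀ hsum
  have hne := ae_restrict_of_ae (s := Set.Ioc 0 (2 * Real.pi))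
    (ae_all_iff.mpr fun k => ae_eval_circleMap_ne_zero (hg k) 0 hR.ne')
  have : (ae (volume.restrict (Set.Ioc 0 (2 * Real.pi)))).NeBot :=
    ae_restrict_neBot.mpr (by simp [Real.pi_pos])
  obtain ⟨θ, hθ, hθ_ne⟩ := (hsummable.and hne).exists
  exact ⟨_, circleMap_mem_sphere 0 hR.le θ, hθ_ne, (hcM.sub hθ).congr fun k => by ring⟩

theorem log_norm_coeff_sub_le_circleAverage {g : ℂ[X]} {i : ℕ} (hi : g.coeff i ≠ 0) {R : ℝ}
    (hR : 1 ≤ R) : Real.log ‖g.coeff i‖ - g.natDegree * Real.log 2 ≤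
      Real.circleAverage (fun z => Real.log ‖g.eval z‖) 0 R := by
  have hR₀ : 0 < R := one_pos.trans_le hR
  set h := g.comp (C (R : ℂ) * X)
  have hcoeff : ‖h.coeff i‖ = ‖g.coeff i‖ * R ^ i := by
    rw [comp_C_mul_X_coeff, norm_mul, norm_pow, Complex.norm_real, Real.norm_of_nonneg hR₀.le]
  have hdegree : h.natDegree = g.natDegree := by
    rw [natDegree_comp, natDegree_C_mul_X _ (by exact_mod_cast hR₀.ne'), mul_one]
  have havg : h.logMahlerMeasure = Real.circleAverage (fun z => Real.log ‖g.eval z‖) 0 R := by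
    rw [logMahlerMeasure_def, Real.circleAverage_eq_circleAverage_zero_one (R := R)]
    simp [h]
  have hpos : 0 < ‖g.coeff i‖ := norm_pos_iff.mpr hi
  have hM : 0 < h.mahlerMeasure := mahlerMeasure_pos_of_ne_zero fun h₀ => by
    rw [h₀, coeff_zero, norm_zero] at hcoeff
    exact (by positivity : (0 : ℝ) < ‖g.coeff i‖ * R ^ i).ne hcoeff
  have hle : ‖g.coeff i‖ ≤ 2 ^ g.natDegree * h.mahlerMeasure :=
    calc ‖g.coeff i‖ ≤ ‖h.coeff i‖ := by
          rw [hcoeff]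
          exact le_mul_of_one_le_right hpos.le (one_le_pow₀ hR)
      _ ≤ h.natDegree.choose i * h.mahlerMeasure := norm_coeff_le_choose_mul_mahlerMeasure i h
      _ ≤ 2 ^ g.natDegree * h.mahlerMeasure := by
        rw [hdegree]
        gcongr
        exact_mod_cast Nat.choose_le_two_pow _ _
  rw [← havg, logMahlerMeasure_eq_log_MahlerMeasure, sub_le_iff_le_add', ← Real.log_pow,
    ← Real.log_mul (by positivity) hM.ne']
  exact Real.log_le_log hpos hle

end CommonNonzeroPoint

section NormalizedPolynomials

theorem norm_eval_le_of_norm_coeff_le {𝕜 : Type*} [NormedDivisionRing 𝕜] {p : 𝕜[X]} {D : ℕ}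
    (hp : p.natDegree ≤ D) {B : ℝ} (hB : ∀ i, ‖p.coeff i‖ ≤ B) (z : 𝕜) :
    ‖p.eval z‖ ≤ B * Real.exp (D * (Real.log 2 + Real.posLog ‖z‖)) := by
  have hB₀ : 0 ≤ B := (norm_nonneg _).trans (hB 0)
  have hexp : Real.exp (Real.posLog ‖z‖) = max 1 ‖z‖ := by
    rw [Real.posLog_eq_log_max_one (norm_nonneg z), Real.exp_log (by positivity)]
  have hterm : ∀ i ∈ Finset.range (D + 1), ‖p.coeff i * z ^ i‖ ≤ B * max 1 ‖z‖ ^ D := by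
    intro i hi
    rw [norm_mul, norm_pow]
    have hiD : i ≤ D := Nat.lt_succ_iff.mp (Finset.mem_range.mp hi)
    exact mul_le_mul (hB i) ((pow_le_pow_left₀ (norm_nonneg z) (le_max_right 1 _) i).trans
      (pow_le_pow_right₀ (le_max_left 1 _) hiD)) (by positivity) hB₀
  calc ‖p.eval z‖ = ‖∑ i ∈ Finset.range (D + 1), p.coeff i * z ^ i‖ := by
        rw [eval_eq_sum_range' (Nat.lt_succ_of_le hp)]
    _ ≤ ∑ _i ∈ Finset.range (D + 1), B * max 1 ‖z‖ ^ D := norm_sum_le_of_le _ hterm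
    _ = B * (((D + 1 : ℕ) : ℝ) * max 1 ‖z‖ ^ D) := by
      rw [Finset.sum_const, Finset.card_range, nsmul_eq_mul]
      ring
    _ ≤ B * ((2 : ℝ) ^ D * max 1 ‖z‖ ^ D) := by
      gcongr
      exact_mod_cast Nat.succ_le_of_lt Nat.lt_two_pow_self
    _ = B * Real.exp (D * (Real.log 2 + Real.posLog ‖z‖)) := by
      rw [Real.exp_nat_mul, Real.exp_add, Real.exp_log two_pos, hexp, mul_pow]

theorem log_le_of_le_exp {x t : ℝ} (hx : 0 ≤ x) (ht : 0 ≤ t) (h : x ≤ Real.exp t) :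
    Real.log x ≤ t :=
  (le_max_right 0 _).trans
    ((Real.posLog_le_posLog hx h).trans_eq (by
      rw [Real.posLog_apply, Real.log_exp, max_eq_right ht]))

/-- The majorant of `(1 / D) log ‖G‖` for polynomials `G` of bidegree at most `(D, D)` all of whose
coefficients have norm at most `1`. -/
def bidegreeMajorant (p : ℂ × ℂ) : ℝ :=
  2 * Real.log 2 + Real.posLog ‖p.1‖ + Real.posLog ‖p.2‖

theorem bidegreeMajorant_nonneg (p : ℂ × ℂ) : 0 ≤ bidegreeMajorant p :=
  add_nonneg (add_nonneg (by positivity) Real.posLog_nonneg) Real.posLog_nonneg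

theorem contPsh_bidegreeMajorant : ContPsh bidegreeMajorant :=
  ((ContPsh.const _).add (ContPsh.posLog_norm differentiable_fst)).add
    (ContPsh.posLog_norm differentiable_snd)

/-- A polynomial in two variables of bidegree at most `(D, D)` whose largest coefficient has
norm `1`. -/
structure IsNormalized (G : ℂ[X][X]) (D : ℕ) : Prop where
  natDegree_le : G.natDegree ≤ D
  innerDegreeLE : InnerDegreeLE G D
  norm_coeff_le : ∀ i j, ‖(G.coeff i).coeff j‖ ≤ 1
  exists_norm_coeff_eq : ∃ i j, ‖(G.coeff i).coeff j‖ = 1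

theorem exists_isNormalized_of_one_le_norm_coeff {F : ℂ[X][X]} {D : ℕ} (hD : F.natDegree ≤ D)
    (hF : InnerDegreeLE F D) (h : ∃ i j, 1 ≤ ‖(F.coeff i).coeff j‖) :
    ∃ G, IsNormalized G D ∧ ∀ z w, ‖G.evalEval w z‖ ≤ ‖F.evalEval w z‖ := by
  obtain ⟨⟨i, j⟩, -, hmax⟩ := Finset.exists_max_image
    (Finset.range (D + 1) ×ˢ Finset.range (D + 1)) (fun k => ‖(F.coeff k.1).coeff k.2‖) ⟨0, by simp⟩
  set M := ‖(F.coeff i).coeff j‖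
  have hle (k l) : ‖(F.coeff k).coeff l‖ ≤ M := by
    by_cases hk : k ≤ D
    · by_cases hl : l ≤ D
      · exact hmax (k, l) (by simp only [Finset.mem_product, Finset.mem_range]; omega)
      · rw [coeff_eq_zero_of_natDegree_lt ((hF k).trans_lt (not_le.mp hl)), norm_zero]
        exact norm_nonneg _
    · rw [coeff_eq_zero_of_natDegree_lt (hD.trans_lt (not_le.mp hk)), coeff_zero, norm_zero]
      exact norm_nonneg _
  obtain ⟨k, l, hkl⟩ := h
  have hM : 1 ≤ M := hkl.trans (hle k l)
  have hM₀ : 0 < M := one_pos.trans_le hM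
  have hnorm : ‖((M⁻¹ : ℝ) : ℂ)‖ = M⁻¹ := by
    rw [Complex.norm_real, Real.norm_of_nonneg (inv_nonneg.mpr hM₀.le)]
  have hcoeff (k l) : ‖((C (C ((M⁻¹ : ℝ) : ℂ)) * F).coeff k).coeff l‖ =
      M⁻¹ * ‖(F.coeff k).coeff l‖ := by
    rw [coeff_C_mul, coeff_C_mul, norm_mul, hnorm]
  refine ⟨C (C ((M⁻¹ : ℝ) : ℂ)) * F, ⟨(natDegree_C_mul_le _ _).trans hD, fun k => ?_, fun k l => ?_,
    ⟨i, j, ?_⟩⟩, fun z w => ?_⟩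
  · rw [coeff_C_mul]
    exact (natDegree_C_mul_le _ _).trans (hF k)
  · rw [hcoeff, inv_mul_le_iff₀ hM₀, mul_one]
    exact hle k l
  · rw [hcoeff, inv_mul_cancel₀ hM₀.ne']
  · rw [evalEval_mul, evalEval_C, eval_C, norm_mul, hnorm]
    exact mul_le_of_le_one_left (norm_nonneg _) (inv_le_one_of_one_le₀ hM)

namespace IsNormalized

variable {G : ℂ[X][X]} {D : ℕ}

theorem norm_eval_coeff_le (hG : IsNormalized G D) (i : ℕ) (w : ℂ) :
    ‖(G.coeff i).eval w‖ ≤ Real.exp (D * (Real.log 2 + Real.posLog ‖w‖)) :=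
  (norm_eval_le_of_norm_coeff_le (hG.innerDegreeLE i) (hG.norm_coeff_le i) w).trans_eq (one_mul _)

theorem norm_evalEval_le (hG : IsNormalized G D) (p : ℂ × ℂ) :
    ‖G.evalEval p.2 p.1‖ ≤ Real.exp (D * bidegreeMajorant p) := by
  rw [← map_evalRingHom_eval]
  refine (norm_eval_le_of_norm_coeff_le (natDegree_map_le.trans hG.natDegree_le)
    (B := Real.exp (D * (Real.log 2 + Real.posLog ‖p.2‖))) (fun i => ?_) p.1).trans_eq ?_
  · rw [coeff_map]
    exact hG.norm_eval_coeff_le i p.2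
  rw [← Real.exp_add, bidegreeMajorant]
  ring_nf

end IsNormalized

variable {ι : Type*} [Countable ι] {D : ι → ℕ} {c : ι → ℝ}

theorem exists_mem_sphere_summable_of_coeff {g : ι → ℂ[X]} (hg : ∀ k, (g k).natDegree ≤ D k)
    {R B : ℝ} (hR : 1 ≤ R) (hB : 0 ≤ B)
    (hbound : ∀ k, ∀ z ∈ sphere 0 R, ‖(g k).eval z‖ ≤ Real.exp (D k * B)) {i : ι → ℕ}
    (hi : ∀ k, (g k).coeff (i k) ≠ 0) (hc : ∀ k, 0 ≤ c k) (hcD : Summable fun k => c k * D k)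
    (hs : Summable fun k => c k * Real.log ‖(g k).coeff (i k)‖) :
    ∃ z ∈ sphere (0 : ℂ) R, (∀ k, (g k).eval z ≠ 0) ∧
      Summable fun k => c k * Real.log ‖(g k).eval z‖ := by
  refine exists_mem_sphere_summable_log_norm_eval (one_pos.trans_le hR)
    (fun k h => hi k (by rw [h, coeff_zero])) hc
    (m := fun k => Real.log ‖(g k).coeff (i k)‖ - D k * Real.log 2)
    (fun k z hz => log_le_of_le_exp (norm_nonneg _) (by positivity) (hbound k z hz))
    (fun k => le_trans ?_ (log_norm_coeff_sub_le_circleAverage (hi k) hR))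
    ((hcD.mul_right B).congr fun k => by ring)
    ((hs.sub (hcD.mul_right (Real.log 2))).congr fun k => by ring)
  exact sub_le_sub_left (mul_le_mul_of_nonneg_right (Nat.cast_le.mpr (hg k))
    (Real.log_nonneg one_le_two)) _

theorem exists_summable_log_norm_evalEval {G : ι → ℂ[X][X]} (hG : ∀ k, IsNormalized (G k) (D k))
    (hc : ∀ k, 0 ≤ c k) (hcD : Summable fun k => c k * D k) {R : ℝ} (hR : 1 ≤ R) :
    ∃ p : ℂ × ℂ, ‖p.1‖ = R ∧ (∀ k, (G k).evalEval p.2 p.1 ≠ 0) ∧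
      Summable fun k => c k * Real.log ‖(G k).evalEval p.2 p.1‖ := by
  choose i j hij using fun k => (hG k).exists_norm_coeff_eq
  obtain ⟨w, -, hw, hw_summable⟩ := exists_mem_sphere_summable_of_coeff
    (fun k => (hG k).innerDegreeLE (i k)) le_rfl (add_nonneg (by positivity) Real.posLog_nonneg)
    (fun k w hw => mem_sphere_zero_iff_norm.mp hw ▸ (hG k).norm_eval_coeff_le (i k) w)
    (fun k => norm_ne_zero_iff.mp ((hij k).symm ▸ one_ne_zero)) hc hcD (by simp [hij])
  have hbound (k) : ∀ z ∈ sphere 0 R,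
      ‖((G k).map (evalRingHom w)).eval z‖ ≤ Real.exp (D k * bidegreeMajorant ((R : ℂ), w)) := by
    intro z hz
    have hnorm : ‖z‖ = ‖(R : ℂ)‖ := by
      rw [mem_sphere_zero_iff_norm.mp hz, Complex.norm_real,
        Real.norm_of_nonneg (zero_le_one.trans hR)]
    simpa only [map_evalRingHom_eval, bidegreeMajorant, hnorm] using (hG k).norm_evalEval_le (z, w)
  obtain ⟨z, hz, hz_ne, hz_summable⟩ := exists_mem_sphere_summable_of_coeff
    (i := i) (fun k => natDegree_map_le.trans (hG k).natDegree_le) hR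
    (bidegreeMajorant_nonneg ((R : ℂ), w)) hbound (fun k => by rw [coeff_map]; exact hw k) hc hcD
    (by simpa only [coeff_map, coe_evalRingHom] using hw_summable)
  simp only [map_evalRingHom_eval] at hz_ne hz_summable
  exact ⟨(z, w), mem_sphere_zero_iff_norm.mp hz, hz_ne, hz_summable⟩

end NormalizedPolynomials

section GeometricSum

variable {B : ℝ} {U : ℕ → ℕ → ℝ}

/-- The `n`-th approximation of `∑ 2⁻ᵏ⁻¹ lim_m U k m`, whose terms are bounded above by `B`. The
missing terms are replaced by `B`, which makes the approximations decreasing. -/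
def geomSum (B : ℝ) (U : ℕ → ℕ → ℝ) (n : ℕ) : ℝ :=
  ∑ k ∈ Finset.range n, (1 / 2) ^ (k + 1) * U k n + (1 / 2) ^ n * B

theorem geomSum_eq_sub (B : ℝ) (U : ℕ → ℕ → ℝ) (n : ℕ) :
    geomSum B U n = B - ∑ k ∈ Finset.range n, (1 / 2) ^ (k + 1) * (B - U k n) := by
  have hgeom : ∑ k ∈ Finset.range n, (1 / 2 : ℝ) ^ (k + 1) = 1 - (1 / 2) ^ n := by
    simp_rw [pow_succ]
    rw [← Finset.sum_mul, geom_sum_eq (by norm_num)]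
    ring
  simp only [geomSum, mul_sub, Finset.sum_sub_distrib, ← Finset.sum_mul, hgeom]
  ring

theorem geomSum_le (hUB : ∀ k n, U k n ≤ B) (n : ℕ) : geomSum B U n ≤ B := by
  rw [geomSum_eq_sub]
  exact sub_le_self _ (Finset.sum_nonneg fun k _ =>
    mul_nonneg (by positivity) (sub_nonneg.mpr (hUB k n)))

theorem geomSum_antitone (hU : ∀ k, Antitone (U k)) (hUB : ∀ k n, U k n ≤ B) :
    Antitone (geomSum B U) := by
  intro m n hmn
  simp only [geomSum_eq_sub]
  refine sub_le_sub_left ?_ _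
  calc ∑ k ∈ Finset.range m, (1 / 2) ^ (k + 1) * (B - U k m)
      ≤ ∑ k ∈ Finset.range m, (1 / 2) ^ (k + 1) * (B - U k n) := by
        gcongr with k
        exact hU k hmn
    _ ≤ ∑ k ∈ Finset.range n, (1 / 2) ^ (k + 1) * (B - U k n) :=
        Finset.sum_le_sum_of_subset_of_nonneg (Finset.range_mono hmn) fun k _ _ =>
          mul_nonneg (by positivity) (sub_nonneg.mpr (hUB k n))

theorem bddBelow_range_geomSum (hB : 0 ≤ B) {L : ℕ → ℝ} (hL : ∀ k n, L k ≤ U k n)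
    (hs : Summable fun k => (1 / 2) ^ (k + 1) * L k) : BddBelow (Set.range (geomSum B U)) := by
  obtain ⟨b, hb⟩ := hs.hasSum.tendsto_sum_nat.bddBelow_range
  refine ⟨b, Set.forall_mem_range.mpr fun n => ?_⟩
  calc b ≤ ∑ k ∈ Finset.range n, (1 / 2) ^ (k + 1) * L k := hb ⟨n, rfl⟩
    _ ≤ ∑ k ∈ Finset.range n, (1 / 2) ^ (k + 1) * U k n := by
      gcongr with k
      exact hL k n
    _ ≤ geomSum B U n := le_add_of_nonneg_right (by positivity)

theorem not_bddBelow_range_geomSum (hB : 0 ≤ B) (hU : ∀ k, Antitone (U k))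
    (hUB : ∀ k n, U k n ≤ B) (hfreq : ∃ᶠ k in atTop, ∃ n, U k n ≤ -2 ^ (k + 1)) :
    ¬ BddBelow (Set.range (geomSum B U)) := by
  rintro ⟨b, hb⟩
  obtain ⟨N, hN⟩ := exists_nat_gt (B - b)
  obtain ⟨s, hs, hcard⟩ := (Nat.frequently_atTop_iff_infinite.mp hfreq).exists_subset_card_eq N
  obtain ⟨n, hsn, hn⟩ : ∃ n, s ⊆ Finset.range n ∧ ∀ k ∈ s, U k n ≤ -2 ^ (k + 1) := by
    choose! m hm using fun k (hk : k ∈ s) => hs hk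
    refine ⟨s.sup fun k => max (k + 1) (m k), fun k hk => ?_, fun k hk => ?_⟩
    · exact Finset.mem_range.mpr ((le_max_left _ _).trans
        (Finset.le_sup (f := fun k => max (k + 1) (m k)) hk))
    · exact (hU k ((le_max_right _ _).trans
        (Finset.le_sup (f := fun k => max (k + 1) (m k)) hk))).trans (hm k hk)
  have hterm : ∀ k ∈ s, 1 ≤ (1 / 2 : ℝ) ^ (k + 1) * (B - U k n) := fun k hk =>
    calc (1 : ℝ) = (1 / 2) ^ (k + 1) * 2 ^ (k + 1) := by rw [← mul_pow]; norm_num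
      _ ≤ (1 / 2) ^ (k + 1) * (B - U k n) := by
        gcongr
        linarith [hn k hk]
  have hsum : (N : ℝ) ≤ ∑ k ∈ Finset.range n, (1 / 2) ^ (k + 1) * (B - U k n) :=
    calc (N : ℝ) = ∑ _k ∈ s, 1 := by simp [hcard]
      _ ≤ ∑ k ∈ s, (1 / 2) ^ (k + 1) * (B - U k n) := Finset.sum_le_sum hterm
      _ ≤ ∑ k ∈ Finset.range n, (1 / 2) ^ (k + 1) * (B - U k n) :=
        Finset.sum_le_sum_of_subset_of_nonneg hsn fun k _ _ =>
          mul_nonneg (by positivity) (sub_nonneg.mpr (hUB k n))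
  have hbn : b ≤ geomSum B U n := hb ⟨n, rfl⟩
  rw [geomSum_eq_sub] at hbn
  linarith

theorem ContPsh.geomSum {E : Type*} [NormedAddCommGroup E] [NormedSpace ℂ E] {B : E → ℝ}
    {U : ℕ → ℕ → E → ℝ} (hB : ContPsh B) (hU : ∀ k n, ContPsh (U k n)) (n : ℕ) :
    ContPsh fun p => geomSum (B p) (fun k n => U k n p) n :=
  (ContPsh.sum fun k _ => (hU k n).const_mul (by positivity)).add (hB.const_mul (by positivity))

end GeometricSum

section NormalizedLog

variable {G : ℂ[X][X]} {D : ℕ}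

/-- The function `(1 / D) log ‖G‖`, truncated from below at `-n`. -/
def normalizedLog (G : ℂ[X][X]) (D n : ℕ) (p : ℂ × ℂ) : ℝ :=
  (1 / D) * Real.log (max ‖G.evalEval p.2 p.1‖ (Real.exp (-(n * D))))

theorem differentiable_evalEval (G : ℂ[X][X]) :
    Differentiable ℂ fun p : ℂ × ℂ => G.evalEval p.2 p.1 := by
  induction G using Polynomial.induction_on' with
  | add P Q hP hQ =>
    simp only [evalEval_add]
    exact hP.add hQ
  | monomial k p =>
    simp only [← C_mul_X_pow_eq_monomial, evalEval_mul, evalEval_pow, evalEval_X, evalEval_C]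
    exact (p.differentiable.comp differentiable_snd).mul (differentiable_fst.pow k)

theorem contPsh_normalizedLog (G : ℂ[X][X]) (D n : ℕ) : ContPsh (normalizedLog G D n) :=
  (ContPsh.log_max_norm (differentiable_evalEval G) (Real.exp_pos _)).const_mul (by positivity)

theorem normalizedLog_antitone (G : ℂ[X][X]) (D : ℕ) (p : ℂ × ℂ) :
    Antitone (normalizedLog G D · p) := by
  intro m n hmn
  simp only [normalizedLog]
  gcongr

theorem le_normalizedLog (n : ℕ) {p : ℂ × ℂ} (hp : G.evalEval p.2 p.1 ≠ 0) :
    (1 / D) * Real.log ‖G.evalEval p.2 p.1‖ ≤ normalizedLog G D n p := by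
  have := norm_pos_iff.mpr hp
  unfold normalizedLog
  gcongr
  exact le_max_left _ _

theorem normalizedLog_le (hD : 0 < D) {n : ℕ} {p : ℂ × ℂ} {t : ℝ}
    (hG : ‖G.evalEval p.2 p.1‖ ≤ Real.exp (D * t)) (ht : -(n : ℝ) ≤ t) :
    normalizedLog G D n p ≤ t := by
  have hD' : (0 : ℝ) < D := Nat.cast_pos.mpr hD
  rw [normalizedLog, one_div, inv_mul_le_iff₀ hD', ← Real.log_exp (D * t)]
  refine Real.log_le_log (by positivity) (max_le hG (Real.exp_le_exp.mpr ?_))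
  rw [mul_comm, ← mul_neg]
  exact mul_le_mul_of_nonneg_left ht hD'.le

theorem IsNormalized.normalizedLog_le (hG : IsNormalized G D) (hD : 0 < D) (n : ℕ) (p : ℂ × ℂ) :
    normalizedLog G D n p ≤ bidegreeMajorant p :=
  _root_.normalizedLog_le hD (hG.norm_evalEval_le p)
    ((neg_nonpos.mpr n.cast_nonneg).trans (bidegreeMajorant_nonneg p))

theorem exists_isNormalized_of_not_chebyshevBound {A : Set (ℂ × ℂ)} {τ : ℝ}
    (hA : ¬ ChebyshevBound A τ) : ∃ D G, 0 < D ∧ IsNormalized G D ∧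
      ∀ p ∈ A, ‖G.evalEval p.2 p.1‖ ≤ Real.exp (D * -τ) := by
  simp only [ChebyshevBound, not_forall, not_exists, not_and, not_lt] at hA
  obtain ⟨D, F, hD, hF, hdegree, hinner, hle⟩ := hA
  obtain ⟨G, hG, hGF⟩ := exists_isNormalized_of_one_le_norm_coeff hdegree hinner
    ⟨F.natDegree, F.leadingCoeff.natDegree, by
      rw [coeff_natDegree, coeff_natDegree, hF.leadingCoeff, norm_one]⟩
  exact ⟨D, G, hD, hG, fun p hp =>
    ((hGF p.1 p.2).trans (hle p hp)).trans_eq (by rw [mul_comm])⟩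

end NormalizedLog

section Potential

variable {μ : Measure ℂ} {B : Set ℂ} {x : ℂ}

theorem truncatedPotential_nonneg (hx : ∀ᵐ z ∂μ, 1 ≤ ‖x - z‖) (r : ℝ) :
    0 ≤ truncatedPotential μ r x :=
  integral_nonneg_of_ae <| hx.mono fun _ hz => Real.log_nonneg (le_max_of_le_left hz)

theorem truncatedPotential_exp_antitone [IsProbabilityMeasure μ] (hB : IsCompact B)
    (hμ : μ Bᶜ = 0) (x : ℂ) :
    Antitone fun n : ℕ => truncatedPotential μ (Real.exp (-n)) x := fun m n hmn =>
  truncatedPotential_mono hB hμ (Real.exp_pos _) (by gcongr) x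

theorem not_bddBelow_range_truncatedPotential_exp [IsProbabilityMeasure μ] (hB : IsCompact B)
    (hμ : μ Bᶜ = 0) (hx : ¬ BddBelow ((truncatedPotential μ · x) '' Set.Ioi 0)) :
    ¬ BddBelow (Set.range fun n : ℕ => truncatedPotential μ (Real.exp (-n)) x) := by
  rintro ⟨b, hb⟩
  refine hx ⟨b, Set.forall_mem_image.mpr fun r hr => ?_⟩
  obtain ⟨n, hn⟩ := exists_nat_ge (-Real.log r)
  calc b ≤ truncatedPotential μ (Real.exp (-n)) x := hb ⟨n, rfl⟩
    _ ≤ truncatedPotential μ r x :=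
      truncatedPotential_mono hB hμ (Real.exp_pos _)
        ((Real.le_log_iff_exp_le hr).mp (neg_le.mp hn)) x

end Potential

section Pluripolar

theorem not_bddBelow_range_add {ι : Type*} {g h : ι → ℝ} {M : ℝ} (hg : ¬ BddBelow (Set.range g))
    (hh : ∀ i, h i ≤ M) : ¬ BddBelow (Set.range fun i => g i + h i) := by
  rintro ⟨b, hb⟩
  refine hg ⟨b - M, Set.forall_mem_range.mpr fun i => ?_⟩
  linarith [hb ⟨i, rfl⟩, hh i]

theorem exists_seq_frequently_eq (ι : Type*) [Countable ι] [Nonempty ι] :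
    ∃ e : ℕ → ι, ∀ i, ∃ᶠ k in atTop, e k = i := by
  obtain ⟨g, hg⟩ := exists_surjective_nat ι
  refine ⟨fun k => g k.unpair.1, fun i => frequently_atTop.mpr fun N => ?_⟩
  obtain ⟨j, rfl⟩ := hg i
  exact ⟨Nat.pair j N, Nat.right_le_pair j N, by simp⟩

variable {μ : Measure ℂ} {B : Set ℂ} {G : ℕ → ℂ[X][X]} {D : ℕ → ℕ}

/-- The `n`-th member of a decreasing sequence with limit
`∑ 2⁻ᵏ⁻¹ (1 / D k) log ‖G k‖ + ∫ log ‖p.1 - z‖ dμ(z)`. -/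
def approxPsh (G : ℕ → ℂ[X][X]) (D : ℕ → ℕ) (μ : Measure ℂ) (n : ℕ) (p : ℂ × ℂ) : ℝ :=
  geomSum (bidegreeMajorant p) (fun k n => normalizedLog (G k) (D k) n p) n +
    truncatedPotential μ (Real.exp (-n)) p.1

theorem contPsh_approxPsh [IsProbabilityMeasure μ] (hB : IsCompact B) (hμ : μ Bᶜ = 0) (n : ℕ) :
    ContPsh (approxPsh G D μ n) :=
  (contPsh_bidegreeMajorant.geomSum (fun k n => contPsh_normalizedLog (G k) (D k) n) n).add
    (.truncatedPotential hB hμ (Real.exp_pos _) differentiable_fst)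

variable (hG : ∀ k, IsNormalized (G k) (D k)) (hD : ∀ k, 0 < D k)

include hG hD

theorem approxPsh_antitone [IsProbabilityMeasure μ] (hB : IsCompact B) (hμ : μ Bᶜ = 0)
    (p : ℂ × ℂ) : Antitone (approxPsh G D μ · p) :=
  (geomSum_antitone (fun k => normalizedLog_antitone (G k) (D k) p)
    fun k n => (hG k).normalizedLog_le (hD k) n p).add (truncatedPotential_exp_antitone hB hμ p.1)

theorem exists_bddBelow_range_approxPsh (hB : IsCompact B) (hμ : μ Bᶜ = 0) :
    ∃ p, BddBelow (Set.range (approxPsh G D μ · p)) := by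
  obtain ⟨r, hr, hBr⟩ := hB.isBounded.subset_closedBall_lt 0 0
  have hcD (k : ℕ) : (1 / 2 : ℝ) ^ (k + 1) / D k * D k = (1 / 2) ^ (k + 1) :=
    div_mul_cancel₀ _ (Nat.cast_ne_zero.mpr (hD k).ne')
  obtain ⟨p, hpr, hp, hsum⟩ := exists_summable_log_norm_evalEval (R := r + 1) hG
    (c := fun k => (1 / 2) ^ (k + 1) / D k) (fun k => by positivity)
    (by simpa only [hcD] using (summable_nat_add_iff 1).mpr summable_geometric_two)
    (by linarith)
  have hsum' : Summable fun k =>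
      (1 / 2 : ℝ) ^ (k + 1) * ((1 / D k) * Real.log ‖(G k).evalEval p.2 p.1‖) := by
    convert hsum using 2
    ring
  obtain ⟨b, hb⟩ := bddBelow_range_geomSum (bidegreeMajorant_nonneg p)
    (fun k n => le_normalizedLog n (hp k)) hsum'
  have hdist : ∀ᵐ z ∂μ, 1 ≤ ‖p.1 - z‖ := by
    filter_upwards [mem_ae_iff.mpr hμ] with z hz
    have hzr : ‖z‖ ≤ r := mem_closedBall_zero_iff.mp (hBr hz)
    linarith [norm_sub_norm_le p.1 z]
  exact ⟨p, b, Set.forall_mem_range.mpr fun n =>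
    le_add_of_le_of_nonneg (hb ⟨n, rfl⟩) (truncatedPotential_nonneg hdist _)⟩

theorem not_bddBelow_range_approxPsh_of_frequently [IsProbabilityMeasure μ] (hB : IsCompact B)
    (hμ : μ Bᶜ = 0) {p : ℂ × ℂ} (hp : ∃ᶠ k in atTop,
      ‖(G k).evalEval p.2 p.1‖ ≤ Real.exp (D k * -2 ^ (k + 1))) :
    ¬ BddBelow (Set.range (approxPsh G D μ · p)) := by
  refine not_bddBelow_range_add (not_bddBelow_range_geomSum (bidegreeMajorant_nonneg p)
    (fun k => normalizedLog_antitone (G k) (D k) p)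
    (fun k n => (hG k).normalizedLog_le (hD k) n p) (hp.mono fun k hk => ?_))
    (fun n => truncatedPotential_exp_antitone hB hμ p.1 n.zero_le)
  exact ⟨2 ^ (k + 1), normalizedLog_le (hD k) hk (by push_cast; rfl)⟩

theorem not_bddBelow_range_approxPsh_of_potential [IsProbabilityMeasure μ] (hB : IsCompact B)
    (hμ : μ Bᶜ = 0) {p : ℂ × ℂ}
    (hp : ¬ BddBelow ((truncatedPotential μ · p.1) '' Set.Ioi 0)) :
    ¬ BddBelow (Set.range (approxPsh G D μ · p)) := by
  simp only [approxPsh, add_comm (geomSum _ _ _)]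
  exact not_bddBelow_range_add (not_bddBelow_range_truncatedPotential_exp hB hμ hp)
    (geomSum_le fun k n => (hG k).normalizedLog_le (hD k) n p)

omit hG hD

theorem pluripolar_of_not_chebyshevBound {ι : Type*} [Countable ι] [Nonempty ι]
    [IsProbabilityMeasure μ] {A : ι → Set (ℂ × ℂ)} {S : Set (ℂ × ℂ)} (hB : IsCompact B)
    (hμ : μ Bᶜ = 0) (hA : ∀ i τ, ¬ ChebyshevBound (A i) τ)
    (hS : ∀ p ∈ S, (∃ i, p ∈ A i) ∨ ¬ BddBelow ((truncatedPotential μ · p.1) '' Set.Ioi 0)) :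
    Pluripolar S := by
  obtain ⟨e, he⟩ := exists_seq_frequently_eq ι
  choose D G hD hG hle using fun k =>
    exists_isNormalized_of_not_chebyshevBound (hA (e k) (2 ^ (k + 1)))
  refine pluripolar_of_antitone (v := approxPsh G D μ) (contPsh_approxPsh hB hμ)
    (approxPsh_antitone hG hD hB hμ) (exists_bddBelow_range_approxPsh hG hD hB hμ) fun p hp => ?_
  rcases hS p hp with ⟨i, hi⟩ | hpot
  · exact not_bddBelow_range_approxPsh_of_frequently hG hD hB hμ
      ((he i).mono fun k hk => hle k p (hk ▸ hi))
  · exact not_bddBelow_range_approxPsh_of_potential hG hD hB hμ hpot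

theorem pluripolar_of_isRationalApprox {E : Set (ℂ × ℂ)} {a : ℝ} (hE : Bornology.IsBounded E)
    (hK : IsCompact (Prod.fst '' E)) (hreal : Prod.fst '' E ⊆ Set.range Complex.ofReal)
    (ha : 0 < a) (happrox : ∀ N : ℕ, ∃ m ≥ N, ∃ p q, IsRationalApprox E m a p q) :
    Pluripolar E := by
  obtain ⟨R, hR, hER⟩ := hE.subset_closedBall_lt 0 0
  have hprod : E ⊆ closedBall 0 R ×ˢ closedBall 0 R := by
    rwa [closedBall_prod_same]
  obtain ⟨B, μ, A, hB, hprob, hμ, hA, hcover⟩ :=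
    exists_measure_pieces hR hprod hK hreal ha happrox
  exact pluripolar_of_not_chebyshevBound hB hμ hA hcover

end Pluripolar

/-- **Pluripolarity of graphs of quasianalytic functions in the sense of Gonchar.**
If `f` is continuous on the segment `Δ = [a,b] ⊂ ℝ` and belongs to the Gonchar class
`R(Δ)`, i.e. `liminf ρ_n(f)^{1/n} < 1`, then the graph
`Γ_f = {(x, f(x)) : x ∈ Δ} ⊂ ℂ²` is pluripolar in `ℂ²`. -/
theorem graph_pluripolar_of_gonchar (a b : ℝ) (hab : a < b) (f : ℝ → ℝ)
    (hf : ContinuousOn f (Set.Icc a b))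
    (hGonchar : Filter.liminf (fun n : ℕ => (rhoReal f a b n) ^ (1 / (n : ℝ)))
      Filter.atTop < 1) :
    Pluripolar {p : ℂ × ℂ | ∃ x ∈ Set.Icc a b, p = ((x : ℂ), (f x : ℂ))} := by
  set E := {p : ℂ × ℂ | ∃ x ∈ Set.Icc a b, p = ((x : ℂ), (f x : ℂ))}
  have hgraph : E = (fun x : ℝ => ((x : ℂ), (f x : ℂ))) '' Set.Icc a b := by
    ext p
    simp only [E, Set.mem_ofPred_eq, Set.mem_image, eq_comm]
  have hE : IsCompact E := hgraph ▸ isCompact_Icc.image_of_continuousOn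
    (Complex.continuous_ofReal.continuousOn.prodMk
      (Complex.continuous_ofReal.comp_continuousOn hf))
  have hreal : Prod.fst '' E ⊆ Set.range Complex.ofReal := by
    rintro _ ⟨_, ⟨x, -, rfl⟩, rfl⟩
    exact ⟨x, rfl⟩
  obtain ⟨M, hM⟩ := isCompact_Icc.exists_bound_of_continuousOn hf
  obtain ⟨α, hα, happrox⟩ := exists_isRationalApprox_of_liminf_lt_one hab.le hM hGonchar
  exact pluripolar_of_isRationalApprox hE.isBounded (hE.image continuous_fst) hreal hα happrox
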